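/- arXiv:1611.03532 — 2 statements merged into one kernel-verified Lean document; each statement's English description precedes it below -/
import Mathlib

section
/- Let N ≥ 2, p ∈ (1,∞), and let Ω ⊆ ℝ^N be either the ball B_{R₁}(0) (with R₁ > 0) or the annulus B_{R₁}(0) \ closure(B_{R₀}(0)) (with 0 < R₀ < R₁). Let α, β ∈ ℝ and suppose u : ℝ^N → ℝ is continuous on the closure of Ω, continuously differentiable in Ω, radial (u(x) depends only on ‖x‖), satisfies u = 0 on ∂Ω, the open sets {x ∈ Ω : u(x) > 0} and {x ∈ Ω : u(x) < 0} are both nonempty and connected, and u is a weak solution of the Fučik equation −Δ_p u = α (u⁺)^{p−1} − β (u⁻)^{p−1} in Ω, i.e. ∫_Ω |∇u|^{p−2} ⟨∇u, ∇φ⟩ dx = ∫_Ω (α (u⁺)^{p−1} − β (u⁻)^{p−1}) φ dx for every smooth φ with compact support in Ω, where u⁺ = max{u,0}, u⁻ = max{−u,0}. Then there exist nonempty disjoint open sets Ω₁, Ω₂ ⊆ Ω such that λ₁(p, Ω₁) < α and λ₁(p, Ω₂) < β. -/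
open MeasureTheory Metric Set Filter
open scoped RealInnerProductSpace ENNReal Topology

/-- The first Dirichlet eigenvalue of the p-Laplacian on `Ω`, defined variationally as the
infimum of Rayleigh quotients of smooth, not identically zero functions with compact
support contained in `Ω`. -/
noncomputable def lam1 {N : ℕ} (p : ℝ) (Ω : Set (EuclideanSpace ℝ (Fin N))) : ℝ :=
  sInf { r : ℝ | ∃ u : EuclideanSpace ℝ (Fin N) → ℝ,
    ContDiff ℝ (⊤ : ℕ∞) u ∧ u ≠ 0 ∧ HasCompactSupport u ∧ tsupport u ⊆ Ω ∧
    r = (∫ x in Ω, ‖gradient u x‖ ^ p) / (∫ x in Ω, |u x| ^ p) }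

/-- The first standard basis vector `e₁` of `ℝ^N`. -/
noncomputable def e1 (N : ℕ) : EuclideanSpace ℝ (Fin N) :=
  (WithLp.equiv 2 (Fin N → ℝ)).symm (fun i => if (i : ℕ) = 0 then 1 else 0)

/-- The eccentric annulus `Ω_s = B_{R₁}(0) \ closure (B_{R₀}(s e₁))`. -/
noncomputable def Om (N : ℕ) (R₀ R₁ s : ℝ) : Set (EuclideanSpace ℝ (Fin N)) :=
  ball 0 R₁ \ closure (ball (s • e1 N) R₀)

/-- `u` is a first eigenfunction of the p-Laplacian on `Ω` with eigenvalue `lam`: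
C¹ on an open set containing the closure of `Ω`, positive in `Ω`, zero on `∂Ω`, and a weak
solution of `−Δ_p u = lam · u^{p−1}`. -/
def IsFirstEigenfunction {N : ℕ} (p : ℝ) (Ω : Set (EuclideanSpace ℝ (Fin N)))
    (lam : ℝ) (u : EuclideanSpace ℝ (Fin N) → ℝ) : Prop :=
  (∃ V : Set (EuclideanSpace ℝ (Fin N)), IsOpen V ∧ closure Ω ⊆ V ∧ ContDiffOn ℝ 1 u V) ∧
  (∀ x ∈ Ω, 0 < u x) ∧
  (∀ x ∈ frontier Ω, u x = 0) ∧
  (∀ φ : EuclideanSpace ℝ (Fin N) → ℝ, ContDiff ℝ (⊤ : ℕ∞) φ → HasCompactSupport φ →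
    tsupport φ ⊆ Ω →
    ∫ x in Ω, ‖gradient u x‖ ^ (p - 2) * ⟪gradient u x, gradient φ x⟫ =
      lam * ∫ x in Ω, (u x) ^ (p - 1) * φ x)


section PartOne

variable {E : Type*} [NormedAddCommGroup E] [InnerProductSpace ℝ E]

/-- the vector field `|g|^{p-2} g` -/
noncomputable def Afld (p : ℝ) (g : E) : E := ‖g‖ ^ (p - 2) • g

theorem Afld_zero (p : ℝ) : Afld p (0 : E) = 0 := by simp [Afld]

theorem norm_Afld {p : ℝ} (hp : 1 < p) (g : E) : ‖Afld p g‖ = ‖g‖ ^ (p - 1) := by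
  by_cases hg : g = 0
  · subst hg
    rw [Afld_zero, norm_zero, Real.zero_rpow (by linarith)]
  · have : 0 < ‖g‖ := norm_pos_iff.2 hg
    rw [Afld, norm_smul, Real.norm_of_nonneg (by positivity)]
    nth_rewrite 2 [← Real.rpow_one ‖g‖]
    rw [← Real.rpow_add this]; congr 1; ring

theorem inner_Afld_self {p : ℝ} (hp : 1 < p) (g : E) : ⟪Afld p g, g⟫ = ‖g‖ ^ p := by
  by_cases hg : g = 0
  · subst hg
    rw [Afld_zero, norm_zero, Real.zero_rpow (by linarith)]; simp
  · have : 0 < ‖g‖ := norm_pos_iff.2 hg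
    rw [Afld, real_inner_smul_left, real_inner_self_eq_norm_sq, ← Real.rpow_natCast,
      ← Real.rpow_add this]; congr 1; push_cast; ring

theorem continuous_Afld {p : ℝ} (hp : 1 < p) : Continuous (Afld p : E → E) := by
  rw [continuous_iff_continuousAt]
  intro g
  by_cases hg : g = 0
  · subst hg
    rw [ContinuousAt, Afld_zero, tendsto_zero_iff_norm_tendsto_zero]
    simp only [norm_Afld hp]
    have h : Continuous fun g : E => ‖g‖ ^ (p - 1) :=
      continuous_norm.rpow_const (fun _ => Or.inr (by linarith))
    have := h.tendsto 0
    rwa [norm_zero, Real.zero_rpow (by linarith)] at this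
  · unfold Afld
    exact (continuousAt_id.norm.rpow_const (Or.inl (by simpa using hg))).smul continuousAt_id

theorem inner_Afld_le {p : ℝ} (hp : 1 < p) (g h : E) : ⟪Afld p g, h⟫ ≤ ‖g‖ ^ (p - 1) * ‖h‖ := by
  rw [← norm_Afld hp]; exact real_inner_le_norm _ _

theorem rpow_mul_self' {p : ℝ} (hp : 1 < p) {x : ℝ} (hx : 0 ≤ x) : x ^ (p - 1) * x = x ^ p := by
  rcases hx.eq_or_lt with h | h
  · subst h; rw [Real.zero_rpow (by linarith), mul_zero, Real.zero_rpow (by linarith)]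
  · nth_rewrite 2 [← Real.rpow_one x]
    rw [← Real.rpow_add h]; congr 1; ring

theorem Afld_mono {p : ℝ} (hp : 1 < p) {a b : E} (hab : a ≠ b) :
    0 < ⟪Afld p b - Afld p a, b - a⟫ := by
  have e : ⟪Afld p b - Afld p a, b - a⟫ =
      ‖b‖ ^ p - ⟪Afld p b, a⟫ - ⟪Afld p a, b⟫ + ‖a‖ ^ p := by
    rw [inner_sub_left, inner_sub_right, inner_sub_right, inner_Afld_self hp, inner_Afld_self hp]
    ring
  by_cases hn : ‖a‖ = ‖b‖
  · have hb : 0 < ‖b‖ := by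
      by_contra h
      have h0 : ‖b‖ = 0 := le_antisymm (not_lt.1 h) (norm_nonneg _)
      have h1 : ‖a‖ = 0 := hn.trans h0
      exact hab ((norm_eq_zero.1 h1).trans (norm_eq_zero.1 h0).symm)
    have : Afld p b - Afld p a = ‖b‖ ^ (p - 2) • (b - a) := by
      simp only [Afld, hn, smul_sub]
    rw [this, real_inner_smul_left, real_inner_self_eq_norm_sq]
    have : 0 < ‖b - a‖ := norm_pos_iff.2 (sub_ne_zero.2 hab.symm)
    positivity
  · have h1 := inner_Afld_le hp b a
    have h2 := inner_Afld_le hp a b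
    rw [e, ← rpow_mul_self' hp (norm_nonneg a), ← rpow_mul_self' hp (norm_nonneg b)]
    have key : 0 < (‖b‖ ^ (p - 1) - ‖a‖ ^ (p - 1)) * (‖b‖ - ‖a‖) := by
      rcases lt_or_gt_of_ne hn with h | h
      · have := Real.rpow_lt_rpow (norm_nonneg a) h (show 0 < p - 1 by linarith)
        exact mul_pos (by linarith) (by linarith)
      · have := Real.rpow_lt_rpow (norm_nonneg b) h (show 0 < p - 1 by linarith)
        exact mul_pos_of_neg_of_neg (by linarith) (by linarith)
    nlinarith

/-- Young: `p x^{p-1} y ≤ y^p + (p-1) x^p`. -/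
theorem young_p {p : ℝ} (hp : 1 < p) {x y : ℝ} (hx : 0 ≤ x) (hy : 0 ≤ y) :
    p * (x ^ (p - 1) * y) ≤ y ^ p + (p - 1) * x ^ p := by
  have hpq := Real.HolderConjugate.conjExponent hp
  have := Real.young_inequality_of_nonneg hy (Real.rpow_nonneg hx (p - 1)) hpq
  have hq : (p - 1) * Real.conjExponent p = p := by
    rw [Real.conjExponent]; field_simp [show p - 1 ≠ 0 by linarith]
  have hq2 : p / Real.conjExponent p = p - 1 := by
    have : p - 1 ≠ 0 := by linarith
    rw [Real.conjExponent]; field_simp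
  rw [← Real.rpow_mul hx, hq] at this
  have h2 := mul_le_mul_of_nonneg_left this (show 0 ≤ p by linarith)
  have hp0 : p ≠ 0 := by linarith
  calc p * (x ^ (p - 1) * y) = p * (y * x ^ (p - 1)) := by ring
    _ ≤ _ := h2
    _ = y ^ p + (p / Real.conjExponent p) * x ^ p := by field_simp
    _ = _ := by rw [hq2]

theorem norm_pow_convex {p : ℝ} (hp : 1 < p) (a b : E) :
    ‖b‖ ^ p - ‖a‖ ^ p ≤ p * ⟪Afld p b, b - a⟫ := by
  have h1 := inner_Afld_le hp b a
  have h2 := young_p hp (norm_nonneg b) (norm_nonneg a)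
  rw [inner_sub_right, inner_Afld_self hp]
  nlinarith

theorem pow_convex {p : ℝ} (hp : 1 < p) {x y : ℝ} (hx : 0 ≤ x) (hy : 0 ≤ y) :
    x ^ p + p * (x ^ (p - 1) * y) ≤ (x + y) ^ p := by
  have h2 := young_p hp hx (add_nonneg hx hy)
  have := rpow_mul_self' hp hx
  rw [mul_add, this] at h2
  linarith

end PartOne


section PartTwo
open scoped NNReal Convolution
set_option linter.unusedSectionVars false
set_option linter.unusedVariables false

variable {E : Type*} [NormedAddCommGroup E] [InnerProductSpace ℝ E] [FiniteDimensional ℝ E]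
  [MeasurableSpace E] [BorelSpace E]

theorem norm_gradient_eq (f : E → ℝ) (x : E) : ‖gradient f x‖ = ‖fderiv ℝ f x‖ := by
  rw [gradient, LinearIsometryEquiv.norm_map]

theorem norm_gradient_le_of_lip {C : ℝ≥0} {f : E → ℝ} (hL : LipschitzWith C f) (x : E) :
    ‖gradient f x‖ ≤ C := by
  rw [norm_gradient_eq]; exact norm_fderiv_le_of_lipschitz ℝ hL

theorem measurable_gradient (f : E → ℝ) : Measurable (gradient f) := by
  unfold gradient
  exact (LinearIsometryEquiv.continuous _).measurable.comp (measurable_fderiv ℝ f)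

theorem mollify_fderiv {C : ℝ≥0} {ψ : E → ℝ} (hL : LipschitzWith C ψ)
    (hc : HasCompactSupport ψ) (φ : ContDiffBump (0 : E)) (x : E) :
    HasFDerivAt (φ.normed volume ⋆[ContinuousLinearMap.lsmul ℝ ℝ, volume] ψ)
      ((φ.normed volume ⋆[ContinuousLinearMap.lsmul ℝ ℝ, volume] (fderiv ℝ ψ)) x) x := by
  have := hasFDerivAt_integral_of_dominated_loc_of_lip (𝕜 := ℝ) (μ := (volume : Measure E))
    (F := fun (y : E) (t : E) => φ.normed volume t * ψ (y - t))
    (F' := fun t => φ.normed volume t • fderiv ℝ ψ (x - t))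
    (bound := fun t => φ.normed volume t * C) (x₀ := x) (s := univ) univ_mem
    (Eventually.of_forall fun y => ?_) ?_ ?_ ?_ ?_ ?_
  · exact this.2
  · exact (φ.continuous_normed.mul (hL.continuous.comp (by fun_prop))).aestronglyMeasurable
  · exact (φ.continuous_normed.mul
      (hL.continuous.comp (by fun_prop))).integrable_of_hasCompactSupport
      φ.hasCompactSupport_normed.mul_right
  · exact (φ.continuous_normed.measurable.smul
      ((measurable_fderiv ℝ ψ).comp (by fun_prop))).aestronglyMeasurable
  · refine Eventually.of_forall fun t => LipschitzWith.lipschitzOnWith ?_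
    refine LipschitzWith.of_dist_le_mul fun y z => ?_
    have h0 := φ.nonneg_normed (μ := volume) t
    rw [Real.dist_eq, ← mul_sub, abs_mul, Real.coe_nnabs, abs_mul, mul_assoc]
    gcongr
    have := hL.dist_le_mul (y - t) (z - t)
    rw [dist_sub_right, Real.dist_eq] at this
    simpa using this
  · exact (φ.integrable_normed).mul_const _
  · have h1 : ∀ᵐ t : E, DifferentiableAt ℝ ψ (x - t) :=
      (quasiMeasurePreserving_sub_left_of_right_invariant volume x).ae hL.ae_differentiableAt
    filter_upwards [h1] with t ht
    have h2 : HasFDerivAt (fun y => ψ (y - t)) (fderiv ℝ ψ (x - t)) x := by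
      have h3 := HasFDerivAt.comp x ht.hasFDerivAt ((hasFDerivAt_id x).sub_const t)
      rw [ContinuousLinearMap.comp_id] at h3
      exact h3
    simpa using h2.const_mul (φ.normed volume t)

theorem mollify {C : ℝ≥0} {ψ : E → ℝ} (hL : LipschitzWith C ψ) (hc : HasCompactSupport ψ)
    {V : Set E} (hV : IsOpen V) (hs : tsupport ψ ⊆ V) :
    ∃ (K : Set E) (M : ℝ) (f : ℕ → E → ℝ), IsCompact K ∧ K ⊆ V ∧ tsupport ψ ⊆ K ∧
      (∀ n, ContDiff ℝ (⊤ : ℕ∞) (f n)) ∧ (∀ n, tsupport (f n) ⊆ K) ∧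
      (∀ n x, ‖gradient (f n) x‖ ≤ C) ∧ (∀ n x, |f n x| ≤ M) ∧
      (∀ x, Tendsto (fun n => f n x) atTop (𝓝 (ψ x))) ∧
      ∀ᵐ x, Tendsto (fun n => gradient (f n) x) atTop (𝓝 (gradient ψ x)) := by
  obtain ⟨δ, hδ, hK⟩ := IsCompact.exists_cthickening_subset_open hc hV hs
  have hpos : ∀ n : ℕ, (0 : ℝ) < δ / (n + 1) := fun n => by positivity
  let φ : ℕ → ContDiffBump (0 : E) := fun n =>
    ⟨δ / (n + 1) / 2, δ / (n + 1), half_pos (hpos n), half_lt_self (hpos n)⟩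
  have hφ : Tendsto (fun n => (φ n).rOut) atTop (𝓝 0) := by
    have := (tendsto_one_div_add_atTop_nhds_zero_nat (𝕜 := ℝ)).const_mul δ
    simpa [φ, div_eq_mul_inv] using this
  have hr : ∀ n, (φ n).rOut ≤ δ := fun n => by
    change δ / ((n : ℝ) + 1) ≤ δ
    exact div_le_self hδ.le (by linarith [(Nat.cast_nonneg n : (0 : ℝ) ≤ n)])
  obtain ⟨M, hM⟩ := hc.exists_bound_of_continuous hL.continuous
  refine ⟨cthickening δ (tsupport ψ), M + C * δ,
    fun n => (φ n).normed volume ⋆[ContinuousLinearMap.lsmul ℝ ℝ, volume] ψ,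
    IsCompact.cthickening hc, hK, self_subset_cthickening _, ?_, ?_, ?_, ?_, ?_, ?_⟩
  · intro n
    exact (φ n).hasCompactSupport_normed.contDiff_convolution_left _ (φ n).contDiff_normed
      hL.continuous.locallyIntegrable
  · intro n
    refine closure_minimal ?_ isClosed_cthickening
    refine (support_convolution_subset _).trans ?_
    rintro _ ⟨a, ha, b, hb, rfl⟩
    rw [(φ n).support_normed_eq, mem_ball_zero_iff] at ha
    refine mem_cthickening_of_dist_le _ b δ _ (subset_tsupport _ hb) ?_
    simp only [dist_eq_norm, add_sub_cancel_right]
    exact ha.le.trans (hr n)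
  · intro n x
    rw [norm_gradient_eq, (mollify_fderiv hL hc (φ n) x).fderiv]
    change ‖∫ t, (φ n).normed volume t • fderiv ℝ ψ (x - t)‖ ≤ C
    refine (norm_integral_le_of_norm_le ((φ n).integrable_normed.mul_const (C : ℝ))
      (Eventually.of_forall fun t => ?_)).trans ?_
    · rw [norm_smul, Real.norm_of_nonneg ((φ n).nonneg_normed t)]
      exact mul_le_mul_of_nonneg_left (norm_fderiv_le_of_lipschitz ℝ hL) ((φ n).nonneg_normed t)
    · rw [integral_mul_const, (φ n).integral_normed, one_mul]
  · intro n x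
    have h1 := (φ n).dist_normed_convolution_le (μ := (volume : Measure E)) (g := ψ) (x₀ := x)
      (ε := C * δ) hL.continuous.aestronglyMeasurable (fun y hy => ?_)
    · rw [Real.dist_eq] at h1
      have h2 := hM x
      rw [Real.norm_eq_abs] at h2
      have h3 := abs_sub_abs_le_abs_sub
        (((φ n).normed volume ⋆[ContinuousLinearMap.lsmul ℝ ℝ, volume] ψ) x) (ψ x)
      linarith
    · refine (hL.dist_le_mul y x).trans ?_
      have : dist y x ≤ δ := (mem_ball.1 hy).le.trans (hr n)
      gcongr
  · intro x
    exact ContDiffBump.convolution_tendsto_right_of_continuous hφ hL.continuous x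
  · have hg : LocallyIntegrable (fderiv ℝ ψ) (volume : Measure E) := by
      refine (locallyIntegrable_const (C : ℝ)).mono
        (measurable_fderiv ℝ ψ).aestronglyMeasurable (Eventually.of_forall fun x => ?_)
      rw [Real.norm_of_nonneg C.coe_nonneg]
      exact norm_fderiv_le_of_lipschitz ℝ hL
    have hrr : ∀ n, (φ n).rOut ≤ 2 * (φ n).rIn := fun n => by
      change δ / ((n : ℝ) + 1) ≤ 2 * (δ / (n + 1) / 2)
      linarith
    filter_upwards [ContDiffBump.ae_convolution_tendsto_right_of_locallyIntegrable
      (K := 2) hφ (Eventually.of_forall hrr) hg] with x hx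
    · simp only [gradient]
      refine ((LinearIsometryEquiv.continuous _).tendsto _).comp ?_
      simpa only [(mollify_fderiv hL hc (φ _) x).fderiv] using hx

end PartTwo


section PartThree
open scoped NNReal
set_option linter.unusedSectionVars false
set_option linter.unusedVariables false

variable {E : Type*} [NormedAddCommGroup E] [InnerProductSpace ℝ E] [FiniteDimensional ℝ E]
  [MeasurableSpace E] [BorelSpace E]

theorem integrable_of_bdd {K : Set E} (hK : IsCompact K) {F : E → ℝ} {M : ℝ}
    (hm : AEStronglyMeasurable F volume) (hb : ∀ x, |F x| ≤ M) (hz : ∀ x, x ∉ K → F x = 0) :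
    Integrable F := by
  have hi : Integrable (K.indicator fun _ => M) (volume : Measure E) :=
    (integrable_indicator_iff hK.measurableSet).2
      (integrableOn_const hK.measure_lt_top.ne)
  refine hi.mono' hm (Eventually.of_forall fun x => ?_)
  by_cases hx : x ∈ K
  · simpa [hx] using hb x
  · simp [hx, hz x hx]

theorem tendsto_integral_of_bdd {ι : Type*} {l : Filter ι} [l.IsCountablyGenerated]
    {K : Set E} (hK : IsCompact K) {F : ι → E → ℝ} {G : E → ℝ} {M : ℝ}
    (hm : ∀ n, AEStronglyMeasurable (F n) volume) (hb : ∀ n x, |F n x| ≤ M)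
    (hz : ∀ n x, x ∉ K → F n x = 0)
    (ht : ∀ᵐ x, Tendsto (fun n => F n x) l (𝓝 (G x))) :
    Tendsto (fun n => ∫ x, F n x) l (𝓝 (∫ x, G x)) := by
  have hi : Integrable (K.indicator fun _ => M) (volume : Measure E) :=
    (integrable_indicator_iff hK.measurableSet).2
      (integrableOn_const hK.measure_lt_top.ne)
  refine tendsto_integral_filter_of_dominated_convergence _ (Eventually.of_forall hm)
    (Eventually.of_forall fun n => Eventually.of_forall fun x => ?_) hi ht
  by_cases hx : x ∈ K
  · simpa [hx] using hb n x
  · simp [hx, hz n x hx]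

theorem gradient_eq_zero_of_notMem {f : E → ℝ} {x : E} (hx : x ∉ tsupport f) :
    gradient f x = 0 := by
  have : f =ᶠ[𝓝 x] fun _ => 0 := notMem_tsupport_iff_eventuallyEq.1 hx
  rw [this.gradient_eq, gradient_fun_const]

theorem smooth_of_lip {p : ℝ} (hp : 1 < p) {α : ℝ} {C : ℝ≥0} {ψ : E → ℝ}
    (hL : LipschitzWith C ψ) (hc : HasCompactSupport ψ)
    {V : Set E} (hV : IsOpen V) (hs : tsupport ψ ⊆ V)
    (hJ : ∫ x, ‖gradient ψ x‖ ^ p < α * ∫ x, |ψ x| ^ p) :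
    ∃ f : E → ℝ, ContDiff ℝ (⊤ : ℕ∞) f ∧ HasCompactSupport f ∧ tsupport f ⊆ V ∧
      ∫ x, ‖gradient f x‖ ^ p < α * ∫ x, |f x| ^ p := by
  obtain ⟨K, M, f, hK, hKV, hψK, hf, hfs, hg, hM, ht, htg⟩ := mollify hL hc hV hs
  have hp0 : 0 ≤ p := by linarith
  have h1 : Tendsto (fun n => ∫ x, ‖gradient (f n) x‖ ^ p) atTop
      (𝓝 (∫ x, ‖gradient ψ x‖ ^ p)) := by
    refine tendsto_integral_of_bdd hK (M := (C : ℝ) ^ p) (fun n => ?_) (fun n x => ?_)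
      (fun n x hx => ?_) ?_
    · exact ((measurable_gradient (f n)).norm.pow_const p).aestronglyMeasurable
    · rw [abs_of_nonneg (by positivity)]
      exact Real.rpow_le_rpow (norm_nonneg _) (hg n x) hp0
    · rw [gradient_eq_zero_of_notMem (fun h => hx (hfs n h)), norm_zero,
        Real.zero_rpow (by linarith)]
    · filter_upwards [htg] with x hx
      exact hx.norm.rpow_const (Or.inr hp0)
  have h2 : Tendsto (fun n => ∫ x, |f n x| ^ p) atTop (𝓝 (∫ x, |ψ x| ^ p)) := by
    refine tendsto_integral_of_bdd hK (M := M ^ p) (fun n => ?_) (fun n x => ?_)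
      (fun n x hx => ?_) ?_
    · exact ((hf n).continuous.abs.measurable.pow_const p).aestronglyMeasurable
    · rw [abs_of_nonneg (by positivity)]
      exact Real.rpow_le_rpow (abs_nonneg _) (hM n x) hp0
    · rw [image_eq_zero_of_notMem_tsupport (fun h => hx (hfs n h)), abs_zero,
        Real.zero_rpow (by linarith)]
    · filter_upwards with x
      exact (ht x).abs.rpow_const (Or.inr hp0)
  obtain ⟨n, hn⟩ := (h1.eventually_lt (h2.const_mul α) hJ).exists
  exact ⟨f n, hf n, HasCompactSupport.of_support_subset_isCompact hK
    ((subset_tsupport _).trans (hfs n)), (hfs n).trans hKV, hn⟩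

/-- A nonnegative radial compactly supported function which is a weak solution on its
positivity set. -/
structure Sol (p α : ℝ) (v : E → ℝ) : Prop where
  cont : Continuous v
  nonneg : ∀ x, 0 ≤ v x
  rad : ∀ x y, ‖x‖ = ‖y‖ → v x = v y
  cpt : HasCompactSupport v
  c1 : ContDiffOn ℝ 1 v {x | 0 < v x}
  weak : ∀ φ : E → ℝ, ContDiff ℝ (⊤ : ℕ∞) φ → HasCompactSupport φ → tsupport φ ⊆ {x | 0 < v x} →
    ∫ x, ⟪Afld p (gradient v x), gradient φ x⟫ = α * ∫ x, v x ^ (p - 1) * φ x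
  ne : ∃ x, 0 < v x

theorem Sol.isOpen {p α : ℝ} {v : E → ℝ} (h : Sol p α v) : IsOpen {x | 0 < v x} :=
  isOpen_lt continuous_const h.cont

theorem Sol.contGrad {p α : ℝ} {v : E → ℝ} (h : Sol p α v) :
    ContinuousOn (gradient v) {x | 0 < v x} := by
  unfold gradient
  exact (LinearIsometryEquiv.continuous _).comp_continuousOn
    (h.c1.continuousOn_fderiv_of_isOpen h.isOpen le_rfl)

theorem Sol.diffAt {p α : ℝ} {v : E → ℝ} (h : Sol p α v) {x : E} (hx : 0 < v x) :
    DifferentiableAt ℝ v x :=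
  (h.c1.differentiableOn one_ne_zero).differentiableAt (h.isOpen.mem_nhds hx)

theorem Sol.weakLip {p α : ℝ} (hp : 1 < p) {v : E → ℝ} (h : Sol p α v) {C : ℝ≥0} {φ : E → ℝ}
    (hL : LipschitzWith C φ) (hc : HasCompactSupport φ) (hs : tsupport φ ⊆ {x | 0 < v x}) :
    ∫ x, ⟪Afld p (gradient v x), gradient φ x⟫ = α * ∫ x, v x ^ (p - 1) * φ x := by
  obtain ⟨K, M, f, hK, hKV, hψK, hf, hfs, hg, hM, ht, htg⟩ := mollify hL hc h.isOpen hs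
  have hc' : ∀ n, HasCompactSupport (f n) := fun n =>
    HasCompactSupport.of_support_subset_isCompact hK ((subset_tsupport _).trans (hfs n))
  obtain ⟨B, hB⟩ := hK.exists_bound_of_continuousOn
    ((continuous_Afld hp).comp_continuousOn (h.contGrad.mono hKV))
  obtain ⟨B', hB'⟩ := h.cpt.exists_bound_of_continuous h.cont
  have hB0 : 0 ≤ |B| := abs_nonneg _
  have h1 : Tendsto (fun n => ∫ x, ⟪Afld p (gradient v x), gradient (f n) x⟫) atTop
      (𝓝 (∫ x, ⟪Afld p (gradient v x), gradient φ x⟫)) := by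
    refine tendsto_integral_of_bdd hK (M := |B| * C) (fun n => ?_) (fun n x => ?_)
      (fun n x hx => ?_) ?_
    · exact (((continuous_Afld hp).measurable.comp (measurable_gradient v)).inner
        (measurable_gradient (f n))).aestronglyMeasurable
    · by_cases hx : x ∈ K
      · refine (abs_real_inner_le_norm _ _).trans ?_
        exact mul_le_mul ((hB x hx).trans (le_abs_self B)) (hg n x) (norm_nonneg _) hB0
      · rw [gradient_eq_zero_of_notMem (fun h => hx (hfs n h)), inner_zero_right, abs_zero]
        positivity
    · rw [gradient_eq_zero_of_notMem (fun h => hx (hfs n h)), inner_zero_right]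
    · filter_upwards [htg] with x hx
      exact tendsto_const_nhds.inner hx
  have h2 : Tendsto (fun n => ∫ x, v x ^ (p - 1) * f n x) atTop
      (𝓝 (∫ x, v x ^ (p - 1) * φ x)) := by
    have hcp : Continuous fun x => v x ^ (p - 1) :=
      h.cont.rpow_const (fun _ => Or.inr (by linarith))
    refine tendsto_integral_of_bdd hK (M := |B'| ^ (p - 1) * M) (fun n => ?_) (fun n x => ?_)
      (fun n x hx => ?_) ?_
    · exact (hcp.mul (hf n).continuous).aestronglyMeasurable
    · rw [abs_mul, abs_of_nonneg (Real.rpow_nonneg (h.nonneg x) _)]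
      refine mul_le_mul (Real.rpow_le_rpow (h.nonneg x) ?_ (by linarith)) (hM n x) (abs_nonneg _)
        (by positivity)
      have := hB' x
      rw [Real.norm_of_nonneg (h.nonneg x)] at this
      exact this.trans (le_abs_self _)
    · rw [image_eq_zero_of_notMem_tsupport (fun h => hx (hfs n h)), mul_zero]
    · filter_upwards with x
      exact (ht x).const_mul _
  refine tendsto_nhds_unique h1 ?_
  simp only [h.weak (f _) (hf _) (hc' _) ((hfs _).trans hKV)]
  exact h2.const_mul α

end PartThree


section PartFour
open scoped NNReal
set_option linter.unusedSectionVars false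
set_option linter.unusedVariables false

/-- Smooth truncation. -/
noncomputable def tr (ε t : ℝ) : ℝ := (max (t - ε) 0 ^ 2 - max (t - 2 * ε) 0 ^ 2) / (2 * ε)

/-- Its derivative. -/
noncomputable def trd (ε t : ℝ) : ℝ := (max (t - ε) 0 - max (t - 2 * ε) 0) / ε

theorem hasDerivAt_max_sq (t : ℝ) : HasDerivAt (fun t : ℝ => max t 0 ^ 2) (2 * max t 0) t := by
  rcases lt_trichotomy t 0 with h | h | h
  · rw [max_eq_right h.le, mul_zero]
    refine (hasDerivAt_const t (0 : ℝ)).congr_of_eventuallyEq ?_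
    filter_upwards [Iio_mem_nhds h] with y hy
    rw [max_eq_right (le_of_lt hy)]; simp
  · subst h
    rw [max_self, mul_zero]
    rw [hasDerivAt_iff_isLittleO]
    have : (fun x : ℝ => x ^ 2) =o[𝓝 0] fun x => x := by
      simpa using Asymptotics.isLittleO_pow_id (one_lt_two)
    simp only [max_self, sub_zero, smul_zero, ne_eq, OfNat.ofNat_ne_zero, not_false_eq_true, zero_pow]
    refine Asymptotics.IsBigO.trans_isLittleO (g := fun x : ℝ => x ^ 2) ?_ this
    refine Asymptotics.IsBigO.of_bound 1 (Eventually.of_forall fun x => ?_)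
    rw [one_mul, norm_pow, norm_pow]
    gcongr
    rcases le_total x 0 with h | h
    · rw [max_eq_right h]; simp
    · rw [max_eq_left h]
  · rw [max_eq_left h.le]
    have := (hasDerivAt_pow 2 t)
    simp only [Nat.cast_ofNat, Nat.add_one_sub_one, pow_one] at this
    refine this.congr_of_eventuallyEq ?_
    filter_upwards [Ioi_mem_nhds h] with y hy
    rw [max_eq_left (le_of_lt hy)]

theorem tr_hasDerivAt {ε : ℝ} (hε : 0 < ε) (t : ℝ) : HasDerivAt (tr ε) (trd ε t) t := by
  have h1 := (hasDerivAt_max_sq (t - ε)).comp t ((hasDerivAt_id t).sub_const ε)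
  have h2 := (hasDerivAt_max_sq (t - 2 * ε)).comp t ((hasDerivAt_id t).sub_const (2 * ε))
  have := (h1.sub h2).div_const (2 * ε)
  refine this.congr_deriv ?_
  unfold trd
  field_simp

theorem trd_cont (ε : ℝ) : Continuous (trd ε) := by unfold trd; fun_prop

theorem tr_contDiff {ε : ℝ} (hε : 0 < ε) : ContDiff ℝ 1 (tr ε) := by
  rw [contDiff_one_iff_deriv]
  refine ⟨fun t => (tr_hasDerivAt hε t).differentiableAt, ?_⟩
  rw [show deriv (tr ε) = trd ε from funext fun t => (tr_hasDerivAt hε t).deriv]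
  exact trd_cont ε

theorem trd_nonneg {ε : ℝ} (hε : 0 < ε) (t : ℝ) : 0 ≤ trd ε t := by
  unfold trd
  refine div_nonneg (sub_nonneg.2 (max_le_max (by linarith) le_rfl)) hε.le

theorem trd_le_one {ε : ℝ} (hε : 0 < ε) (t : ℝ) : trd ε t ≤ 1 := by
  unfold trd
  rw [div_le_one hε]
  rcases max_cases (t - ε) 0 with h | h <;> rcases max_cases (t - 2 * ε) 0 with h' | h' <;> linarith

theorem tr_of_le {ε t : ℝ} (hε : 0 < ε) (h : t ≤ ε) : tr ε t = 0 := by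
  unfold tr
  rw [max_eq_right (by linarith), max_eq_right (by linarith)]; simp

theorem tr_of_ge {ε t : ℝ} (hε : 0 < ε) (h : 2 * ε ≤ t) : tr ε t = t - 3 / 2 * ε := by
  unfold tr
  rw [max_eq_left (by linarith), max_eq_left (by linarith)]; field_simp; ring

theorem trd_of_le {ε t : ℝ} (hε : 0 < ε) (h : t ≤ ε) : trd ε t = 0 := by
  unfold trd
  rw [max_eq_right (by linarith), max_eq_right (by linarith)]; simp

theorem trd_of_ge {ε t : ℝ} (hε : 0 < ε) (h : 2 * ε ≤ t) : trd ε t = 1 := by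
  unfold trd
  rw [max_eq_left (by linarith), max_eq_left (by linarith)]; field_simp; ring

theorem tr_mono {ε : ℝ} (hε : 0 < ε) : Monotone (tr ε) :=
  monotone_of_hasDerivAt_nonneg (tr_hasDerivAt hε) (trd_nonneg hε)

theorem tr_nonneg {ε : ℝ} (hε : 0 < ε) (t : ℝ) : 0 ≤ tr ε t := by
  rcases le_total t ε with h | h
  · rw [tr_of_le hε h]
  · rw [← tr_of_le hε le_rfl]; exact tr_mono hε h

theorem tr_le {ε t : ℝ} (hε : 0 < ε) (ht : 0 ≤ t) : tr ε t ≤ t := by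
  rcases le_total t ε with h | h
  · rw [tr_of_le hε h]; exact ht
  · rcases le_total t (2 * ε) with h' | h'
    · refine (tr_mono hε h').trans ?_
      rw [tr_of_ge hε le_rfl]; linarith
    · rw [tr_of_ge hε h']; linarith

theorem le_tr {ε t : ℝ} (hε : 0 < ε) : t - 2 * ε ≤ tr ε t := by
  rcases le_total t (2 * ε) with h' | h'
  · linarith [tr_nonneg hε t]
  · rw [tr_of_ge hε h']; linarith

theorem tr_tendsto {t : ℝ} (ht : 0 ≤ t) : Tendsto (fun ε => tr ε t) (𝓝[>] 0) (𝓝 t) := by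
  have h1 : Tendsto (fun ε : ℝ => t - 2 * ε) (𝓝[>] 0) (𝓝 t) := by
    have : Continuous fun ε : ℝ => t - 2 * ε := by fun_prop
    have := (this.tendsto 0).mono_left (nhdsWithin_le_nhds (s := Ioi (0:ℝ)))
    simpa using this
  refine tendsto_of_tendsto_of_tendsto_of_le_of_le' h1 tendsto_const_nhds ?_ ?_
  · filter_upwards [self_mem_nhdsWithin] with ε hε using le_tr hε
  · filter_upwards [self_mem_nhdsWithin] with ε hε using tr_le hε ht

variable {E : Type*} [NormedAddCommGroup E] [InnerProductSpace ℝ E] [FiniteDimensional ℝ E]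
  [MeasurableSpace E] [BorelSpace E]

/-- The truncated function. -/
noncomputable def vt (ε : ℝ) (v : E → ℝ) (x : E) : ℝ := tr ε (v x)

theorem Sol.vt_contDiff {p α : ℝ} {v : E → ℝ} (h : Sol p α v) {ε : ℝ} (hε : 0 < ε) :
    ContDiff ℝ 1 (vt ε v) := by
  rw [contDiff_iff_contDiffAt]
  intro x
  by_cases hx : 0 < v x
  · exact (tr_contDiff hε).contDiffAt.comp x (h.c1.contDiffAt (h.isOpen.mem_nhds hx))
  · refine (contDiffAt_const (c := (0 : ℝ))).congr_of_eventuallyEq ?_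
    have : {y | v y < ε} ∈ 𝓝 x := (isOpen_lt h.cont continuous_const).mem_nhds
      (show v x < ε by linarith)
    filter_upwards [this] with y hy
    exact tr_of_le hε (le_of_lt hy)

theorem Sol.gradient_vt {p α : ℝ} {v : E → ℝ} (h : Sol p α v) {ε : ℝ} (hε : 0 < ε) (x : E) :
    gradient (vt ε v) x = trd ε (v x) • gradient v x := by
  by_cases hx : 0 < v x
  · have h1 := (tr_hasDerivAt hε (v x)).comp_hasFDerivAt x (h.diffAt hx).hasFDerivAt
    have h2 : fderiv ℝ (vt ε v) x = trd ε (v x) • fderiv ℝ v x := h1.fderiv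
    unfold gradient
    rw [h2, map_smul]
  · have : {y | v y < ε} ∈ 𝓝 x := (isOpen_lt h.cont continuous_const).mem_nhds
      (show v x < ε by linarith)
    have h1 : vt ε v =ᶠ[𝓝 x] fun _ => 0 := by
      filter_upwards [this] with y hy
      exact tr_of_le hε (le_of_lt hy)
    rw [h1.gradient_eq, gradient_fun_const, trd_of_le hε (by linarith), zero_smul]

theorem Sol.tsupport_vt {p α : ℝ} {v : E → ℝ} (h : Sol p α v) {ε : ℝ} (hε : 0 < ε) :
    tsupport (vt ε v) ⊆ {x | ε ≤ v x} := by
  refine closure_minimal (fun x hx => ?_) (isClosed_le continuous_const h.cont)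
  by_contra hc
  exact hx (tr_of_le hε (le_of_lt (not_le.1 hc)))

theorem Sol.vt_cpt {p α : ℝ} {v : E → ℝ} (h : Sol p α v) {ε : ℝ} (hε : 0 < ε) :
    HasCompactSupport (vt ε v) := by
  refine h.cpt.mono fun x hx => ?_
  intro hc
  exact hx (tr_of_le hε (by rw [hc]; exact hε.le))

theorem Sol.vt_lip {p α : ℝ} {v : E → ℝ} (h : Sol p α v) {ε : ℝ} (hε : 0 < ε) :
    ∃ C : ℝ≥0, LipschitzWith C (vt ε v) :=
  (h.vt_contDiff hε).lipschitzWith_of_hasCompactSupport (h.vt_cpt hε) one_ne_zero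

theorem Sol.bdd {p α : ℝ} {v : E → ℝ} (h : Sol p α v) : ∃ M : ℝ, 0 < M ∧ ∀ x, v x ≤ M := by
  obtain ⟨B', hB'⟩ := h.cpt.exists_bound_of_continuous h.cont
  refine ⟨|B'| + 1, by positivity, fun x => ?_⟩
  have := (le_abs_self _).trans (hB' x)
  linarith [le_abs_self B']

theorem Sol.integrable_energy {p α : ℝ} (hp : 1 < p) {v : E → ℝ} (h : Sol p α v) {ε : ℝ}
    (hε : 0 < ε) : Integrable fun x => ‖gradient (vt ε v) x‖ ^ p := by
  obtain ⟨C, hC⟩ := h.vt_lip hε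
  refine integrable_of_bdd (M := (C : ℝ) ^ p) (h.vt_cpt hε) ?_ (fun x => ?_) (fun x hx => ?_)
  · exact ((measurable_gradient _).norm.pow_const p).aestronglyMeasurable
  · rw [abs_of_nonneg (by positivity)]
    exact Real.rpow_le_rpow (norm_nonneg _) (norm_gradient_le_of_lip hC x) (by linarith)
  · rw [gradient_eq_zero_of_notMem hx, norm_zero, Real.zero_rpow (by linarith)]

theorem Sol.energy_le {p α : ℝ} (hp : 1 < p) {v : E → ℝ} (h : Sol p α v) {ε : ℝ} (hε : 0 < ε) :
    ∫ x, ‖gradient (vt ε v) x‖ ^ p ≤ α * ∫ x, v x ^ (p - 1) * vt ε v x := by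
  obtain ⟨C, hC⟩ := h.vt_lip hε
  have hcc := h.vt_cpt hε
  have hs : tsupport (vt ε v) ⊆ {x | 0 < v x} :=
    (h.tsupport_vt hε).trans fun x hx => lt_of_lt_of_le hε hx
  have h1 := h.weakLip hp hC hcc hs
  rw [← h1]
  obtain ⟨B, hB⟩ := IsCompact.exists_bound_of_continuousOn hcc
    ((continuous_Afld hp).comp_continuousOn (h.contGrad.mono hs))
  refine integral_mono (h.integrable_energy hp hε) ?_ fun x => ?_
  · refine integrable_of_bdd (M := |B| * C) hcc ?_ (fun x => ?_) (fun x hx => ?_)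
    · exact (((continuous_Afld hp).measurable.comp (measurable_gradient v)).inner
        (measurable_gradient _)).aestronglyMeasurable
    · by_cases hx : x ∈ tsupport (vt ε v)
      · refine (abs_real_inner_le_norm _ _).trans ?_
        exact mul_le_mul ((hB x hx).trans (le_abs_self B)) (norm_gradient_le_of_lip hC x)
          (norm_nonneg _) (abs_nonneg _)
      · rw [gradient_eq_zero_of_notMem hx, inner_zero_right, abs_zero]
        positivity
    · rw [gradient_eq_zero_of_notMem hx, inner_zero_right]
  · show ‖gradient (vt ε v) x‖ ^ p ≤ ⟪Afld p (gradient v x), gradient (vt ε v) x⟫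
    rw [h.gradient_vt hε, inner_smul_right, inner_Afld_self hp, norm_smul,
      Real.norm_of_nonneg (trd_nonneg hε _), Real.mul_rpow (trd_nonneg hε _) (norm_nonneg _)]
    have := Real.rpow_le_rpow_of_exponent_ge' (trd_nonneg hε (v x)) (trd_le_one hε _) zero_le_one hp.le
    rw [Real.rpow_one] at this
    gcongr

theorem Sol.tendsto_vt_one {p α : ℝ} (hp : 1 < p) {v : E → ℝ} (h : Sol p α v) :
    Tendsto (fun ε => ∫ x, v x ^ (p - 1) * vt ε v x) (𝓝[>] 0) (𝓝 (∫ x, v x ^ p)) := by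
  obtain ⟨M, hM, hvM⟩ := h.bdd
  have hcp : Continuous fun x => v x ^ (p - 1) :=
    h.cont.rpow_const (fun _ => Or.inr (by linarith))
  have key := tendsto_integral_of_bdd (l := 𝓝[>] (0:ℝ)) h.cpt
    (F := fun ε x => if 0 < ε then v x ^ (p - 1) * vt ε v x else 0) (G := fun x => v x ^ p)
    (M := M ^ (p - 1) * M) ?_ ?_ ?_ ?_
  · refine key.congr' ?_
    filter_upwards [self_mem_nhdsWithin] with ε hε
    simp only [if_pos (show (0:ℝ) < ε from hε)]
  · intro ε
    by_cases hε : 0 < ε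
    · simp only [if_pos hε]
      exact (hcp.mul (h.vt_contDiff hε).continuous).aestronglyMeasurable
    · simp only [if_neg hε]
      exact aestronglyMeasurable_const
  · intro ε x
    have hx := h.nonneg x
    by_cases hε : 0 < ε
    · simp only [if_pos hε]
      have h0 : 0 ≤ vt ε v x := tr_nonneg hε _
      rw [abs_of_nonneg (mul_nonneg (by positivity) h0)]
      exact mul_le_mul (Real.rpow_le_rpow hx (hvM x) (by linarith))
        ((tr_le hε hx).trans (hvM x)) (tr_nonneg hε _) (by positivity)
    · simp only [if_neg hε, abs_zero]; positivity
  · intro ε x hx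
    rw [image_eq_zero_of_notMem_tsupport hx, Real.zero_rpow (by linarith)]; simp
  · refine Eventually.of_forall fun x => ?_
    have h3 := (tr_tendsto (h.nonneg x)).const_mul (v x ^ (p - 1))
    rw [rpow_mul_self' hp (h.nonneg x)] at h3
    refine h3.congr' ?_
    filter_upwards [self_mem_nhdsWithin] with ε hε
    rw [if_pos (show (0:ℝ) < ε from hε)]; rfl

theorem Sol.tendsto_vt_pow {p α : ℝ} (hp : 1 < p) {v : E → ℝ} (h : Sol p α v) :
    Tendsto (fun ε => ∫ x, vt ε v x ^ p) (𝓝[>] 0) (𝓝 (∫ x, v x ^ p)) := by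
  obtain ⟨M, hM, hvM⟩ := h.bdd
  have key := tendsto_integral_of_bdd (l := 𝓝[>] (0:ℝ)) h.cpt
    (F := fun ε x => if 0 < ε then vt ε v x ^ p else 0) (G := fun x => v x ^ p)
    (M := M ^ p) ?_ ?_ ?_ ?_
  · refine key.congr' ?_
    filter_upwards [self_mem_nhdsWithin] with ε hε
    simp only [if_pos (show (0:ℝ) < ε from hε)]
  · intro ε
    by_cases hε : 0 < ε
    · simp only [if_pos hε]
      exact ((h.vt_contDiff hε).continuous.rpow_const
        (fun _ => Or.inr (by linarith))).aestronglyMeasurable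
    · simp only [if_neg hε]
      exact aestronglyMeasurable_const
  · intro ε x
    have hx := h.nonneg x
    by_cases hε : 0 < ε
    · simp only [if_pos hε]
      have h0 : 0 ≤ vt ε v x := tr_nonneg hε _
      rw [abs_of_nonneg (by positivity)]
      exact Real.rpow_le_rpow h0 ((tr_le hε hx).trans (hvM x)) (by linarith)
    · simp only [if_neg hε, abs_zero]; positivity
  · intro ε x hx
    by_cases hε : 0 < ε
    · simp only [if_pos hε, vt]
      rw [image_eq_zero_of_notMem_tsupport hx, tr_of_le hε hε.le, Real.zero_rpow (by linarith)]
    · simp only [if_neg hε]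
  · refine Eventually.of_forall fun x => ?_
    have h3 := (tr_tendsto (h.nonneg x)).rpow_const (p := p) (Or.inr (by linarith))
    refine h3.congr' ?_
    filter_upwards [self_mem_nhdsWithin] with ε hε
    rw [if_pos (show (0:ℝ) < ε from hε)]; rfl

theorem Sol.J_small {p α : ℝ} (hp : 1 < p) {v : E → ℝ} (h : Sol p α v) {η : ℝ} (hη : 0 < η) :
    ∀ᶠ ε in 𝓝[>] (0:ℝ), ∫ x, ‖gradient (vt ε v) x‖ ^ p < α * (∫ x, vt ε v x ^ p) + η := by
  have h1 := (h.tendsto_vt_one hp).const_mul α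
  have h2 := ((h.tendsto_vt_pow hp).const_mul α).add_const η
  filter_upwards [h1.eventually_lt h2 (by linarith), self_mem_nhdsWithin] with ε h3 hε
  exact (h.energy_le hp hε).trans_lt h3

theorem Sol.int_pos {p α : ℝ} (hp : 1 < p) {v : E → ℝ} (h : Sol p α v) : 0 < ∫ x, v x ^ p := by
  obtain ⟨x, hx⟩ := h.ne
  have hc : Continuous fun x => v x ^ p := h.cont.rpow_const (fun _ => Or.inr (by linarith))
  refine Continuous.integral_pos_of_hasCompactSupport_nonneg_nonzero hc ?_
    (fun x => Real.rpow_nonneg (h.nonneg x) p) (x := x) (Real.rpow_pos_of_pos hx p).ne'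
  refine h.cpt.mono fun y hy hc => hy ?_
  simp only [hc]
  rw [Real.zero_rpow (by linarith)]

theorem Sol.alpha_pos [Nontrivial E] {p α : ℝ} (hp : 1 < p) {v : E → ℝ} (h : Sol p α v) :
    0 < α := by
  by_contra hα
  push Not at hα
  obtain ⟨x, hx⟩ := h.ne
  have hε : 0 < v x / 4 := by positivity
  set ε := v x / 4 with hεd
  have hpos : 0 ≤ ∫ x, v x ^ (p - 1) * vt ε v x :=
    integral_nonneg fun x => mul_nonneg (Real.rpow_nonneg (h.nonneg x) _) (tr_nonneg hε _)
  have h1 : ∫ x, ‖gradient (vt ε v) x‖ ^ p ≤ 0 :=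
    (h.energy_le hp hε).trans (mul_nonpos_of_nonpos_of_nonneg hα hpos)
  have hcg : Continuous (gradient (vt ε v)) := by
    unfold gradient
    exact (LinearIsometryEquiv.continuous _).comp ((h.vt_contDiff hε).continuous_fderiv one_ne_zero)
  have hc : Continuous fun x => ‖gradient (vt ε v) x‖ ^ p :=
    hcg.norm.rpow_const (fun _ => Or.inr (by linarith))
  have h2 : ∀ y, gradient (vt ε v) y = 0 := by
    by_contra hcon
    push Not at hcon
    obtain ⟨y, hy⟩ := hcon
    have := Continuous.integral_pos_of_hasCompactSupport_nonneg_nonzero (μ := (volume : Measure E)) hc ?_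
      (fun x => Real.rpow_nonneg (norm_nonneg _) p) (x := y)
      (Real.rpow_pos_of_pos (norm_pos_iff.2 hy) p).ne'
    · linarith
    · refine (h.vt_cpt hε).mono' fun z hz => ?_
      by_contra hz'
      refine hz ?_
      simp only
      rw [gradient_eq_zero_of_notMem hz', norm_zero, Real.zero_rpow (by linarith)]
  have h3 : ∀ y, fderiv ℝ (vt ε v) y = 0 := fun y => by
    rw [← norm_eq_zero, ← norm_gradient_eq, h2, norm_zero]
  have h4 := is_const_of_fderiv_eq_zero ((h.vt_contDiff hε).differentiable one_ne_zero) h3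
  have : NoncompactSpace E := NormedSpace.noncompactSpace ℝ E
  have h5 : tsupport (vt ε v) ≠ univ := IsCompact.ne_univ (h.vt_cpt hε)
  obtain ⟨y, hy⟩ := (ne_univ_iff_exists_notMem _).1 h5
  have h6 := h4 x y
  rw [image_eq_zero_of_notMem_tsupport hy] at h6
  have h7 : v x - 2 * ε ≤ vt ε v x := le_tr hε
  linarith

end PartFour


section PartFive
open scoped NNReal
set_option linter.unusedSectionVars false
set_option linter.unusedVariables false

variable {E : Type*} [NormedAddCommGroup E] [InnerProductSpace ℝ E] [FiniteDimensional ℝ E]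
  [MeasurableSpace E] [BorelSpace E]

/-- Reflection across the hyperplane `2⟪x,e⟫ = s`. -/
noncomputable def sg (e : E) (s : ℝ) (x : E) : E := (ℝ ∙ e)ᗮ.reflection x + s • e

theorem sg_eq (e : E) (s : ℝ) (x : E) : sg e s x = (ℝ ∙ e)ᗮ.reflection (x - s • e) := by
  rw [sg, map_sub, map_smul, Submodule.reflection_orthogonalComplement_singleton_eq_neg]
  simp

theorem norm_sg (e : E) (s : ℝ) (x : E) : ‖sg e s x‖ = ‖x - s • e‖ := by
  rw [sg_eq, LinearIsometryEquiv.norm_map]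

theorem norm_sg_sub (e : E) (s : ℝ) (x : E) : ‖sg e s x - s • e‖ = ‖x‖ := by
  rw [sg, add_sub_cancel_right, LinearIsometryEquiv.norm_map]

theorem sg_sg (e : E) (s : ℝ) (x : E) : sg e s (sg e s x) = x := by
  rw [sg_eq, sg, add_sub_cancel_right, Submodule.reflection_reflection]

theorem isometry_sg (e : E) (s : ℝ) : Isometry (sg e s) :=
  (isometry_add_right (s • e)).comp ((ℝ ∙ e)ᗮ.reflection.isometry)

theorem integral_sg (e : E) (s : ℝ) (f : E → ℝ) : ∫ x, f (sg e s x) = ∫ x, f x := by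
  have h1 := (LinearIsometryEquiv.measurePreserving ((ℝ ∙ e)ᗮ.reflection)).integral_comp
    (Homeomorph.measurableEmbedding ((ℝ ∙ e)ᗮ.reflection.toHomeomorph)) (fun y => f (y + s • e))
  rw [integral_add_right_eq_self f (s • e)] at h1
  exact h1

theorem norm_gradient_sg (e : E) (s : ℝ) (f : E → ℝ) (x : E) :
    ‖gradient (fun x => f (sg e s x)) x‖ = ‖gradient f (sg e s x)‖ := by
  rw [norm_gradient_eq, norm_gradient_eq]
  have h1 := ContinuousLinearEquiv.comp_right_fderiv
    ((ℝ ∙ e)ᗮ.reflection.toContinuousLinearEquiv) (f := fun y => f (y + s • e)) (x := x)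
  have h2 : (fun x => f (sg e s x)) =
      (fun y => f (y + s • e)) ∘ ((ℝ ∙ e)ᗮ.reflection.toContinuousLinearEquiv) := rfl
  rw [h2, h1, fderiv_comp_add_right]
  exact ContinuousLinearMap.opNorm_comp_linearIsometryEquiv _ _

theorem gradient_comp_sub (f : E → ℝ) (c x : E) :
    gradient (fun x => f (x - c)) x = gradient f (x - c) := by
  unfold gradient
  rw [fderiv_comp_sub]

theorem gradient_eq_of_touch {f g : E → ℝ} {x : E} (hf : DifferentiableAt ℝ f x)
    (hg : DifferentiableAt ℝ g x) (hle : g ≤ᶠ[𝓝 x] f) (hx : f x = g x) :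
    gradient f x = gradient g x := by
  have h1 : IsLocalMin (fun y => f y - g y) x := by
    filter_upwards [hle] with y hy
    rw [hx, sub_self]; exact sub_nonneg.2 hy
  have h2 := h1.fderiv_eq_zero
  rw [fderiv_fun_sub hf hg, sub_eq_zero] at h2
  unfold gradient
  rw [h2]

theorem gradient_max {a b w : E → ℝ} {x : E} (ha : DifferentiableAt ℝ a x)
    (hb : DifferentiableAt ℝ b x) (hw : DifferentiableAt ℝ w x)
    (hwe : w =ᶠ[𝓝 x] fun y => max (a y) (b y)) :
    gradient w x = if a x < b x then gradient b x else gradient a x := by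
  split_ifs with h
  · refine Filter.EventuallyEq.gradient_eq ?_
    filter_upwards [hwe, ha.continuousAt.eventually_lt hb.continuousAt h] with y h1 h2
    rw [h1, max_eq_right h2.le]
  · refine gradient_eq_of_touch hw ha ?_ ?_
    · filter_upwards [hwe] with y h1
      rw [h1]; exact le_max_left _ _
    · rw [hwe.eq_of_nhds, max_eq_left (not_lt.1 h)]

theorem gradient_min {a b w : E → ℝ} {x : E} (ha : DifferentiableAt ℝ a x)
    (hb : DifferentiableAt ℝ b x) (hw : DifferentiableAt ℝ w x)
    (hwe : w =ᶠ[𝓝 x] fun y => min (a y) (b y)) :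
    gradient w x = if a x < b x then gradient a x else gradient b x := by
  split_ifs with h
  · refine Filter.EventuallyEq.gradient_eq ?_
    filter_upwards [hwe, ha.continuousAt.eventually_lt hb.continuousAt h] with y h1 h2
    rw [h1, min_eq_left h2.le]
  · refine (gradient_eq_of_touch hb hw ?_ ?_).symm
    · filter_upwards [hwe] with y h1
      rw [h1]; exact min_le_right _ _
    · rw [hwe.eq_of_nhds, min_eq_right (not_lt.1 h)]

/-- Polarization. -/
noncomputable def Pol (e : E) (s : ℝ) (v : E → ℝ) (x : E) : ℝ :=
  if ‖x‖ ≤ ‖x - s • e‖ then max (v x) (v (x - s • e)) else min (v x) (v (x - s • e))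

theorem Pol_tr {ε : ℝ} (hε : 0 < ε) (e : E) (s : ℝ) (v : E → ℝ) (x : E) :
    Pol e s (vt ε v) x = tr ε (Pol e s v x) := by
  unfold Pol vt
  split_ifs
  · exact ((tr_mono hε).map_max).symm
  · exact ((tr_mono hε).map_min).symm

theorem Pol_eq_or (e : E) (s : ℝ) (v : E → ℝ) (x : E) :
    Pol e s v x = v x ∨ Pol e s v x = v (x - s • e) := by
  unfold Pol
  split_ifs
  · exact max_choice _ _
  · exact min_choice _ _

theorem Pol_cont {e : E} {s : ℝ} {v : E → ℝ} (hr : ∀ x y, ‖x‖ = ‖y‖ → v x = v y)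
    (hc : Continuous v) : Continuous (Pol e s v) := by
  unfold Pol
  refine Continuous.if_le (by fun_prop) (by fun_prop) (by fun_prop) (by fun_prop) ?_
  intro x hx
  rw [hr _ _ hx]; simp

theorem Pol_lip {e : E} {s : ℝ} {v : E → ℝ} (hr : ∀ x y, ‖x‖ = ‖y‖ → v x = v y) {C : ℝ≥0}
    (hL : LipschitzWith C v) : LipschitzWith C (Pol e s v) := by
  have hL2 : LipschitzWith C fun x => v (x - s • e) := by
    have := hL.comp (LipschitzWith.id.sub (LipschitzWith.const (s • e)))
    rw [add_zero, mul_one] at this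
    exact this
  have hM : LipschitzWith C fun x => max (v x) (v (x - s • e)) := by
    simpa using hL.max hL2
  have hm : LipschitzWith C fun x => min (v x) (v (x - s • e)) := by
    simpa using hL.min hL2
  have key : ∀ x y, ‖x‖ ≤ ‖x - s • e‖ → ¬ ‖y‖ ≤ ‖y - s • e‖ →
      dist (Pol e s v x) (Pol e s v y) ≤ C * dist x y := by
    intro x y hx hy
    have hpc : IsPreconnected (segment ℝ x y) := (convex_segment x y).isPreconnected
    obtain ⟨z, hz, hz0⟩ := hpc.intermediate_value (left_mem_segment ℝ x y)
      (right_mem_segment ℝ x y) (f := fun z => ‖z‖ - ‖z - s • e‖) (by fun_prop)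
      (show (0:ℝ) ∈ Icc _ _ from ⟨by simpa using hx, by simpa using (not_le.1 hy).le⟩)
    have hzz : v z = v (z - s • e) := hr _ _ (by simpa [sub_eq_zero] using hz0)
    rw [← dist_add_dist_of_mem_segment hz, mul_add]
    have h1 := hM.dist_le_mul x z
    have h2 := hm.dist_le_mul z y
    refine (dist_triangle _ (v z) _).trans (add_le_add ?_ ?_)
    · simpa [Pol, hx, ← hzz] using h1
    · simpa [Pol, hy, ← hzz] using h2
  refine LipschitzWith.of_dist_le_mul fun x y => ?_
  by_cases hx : ‖x‖ ≤ ‖x - s • e‖ <;> by_cases hy : ‖y‖ ≤ ‖y - s • e‖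
  · simpa [Pol, hx, hy] using hM.dist_le_mul x y
  · exact key x y hx hy
  · rw [dist_comm, dist_comm x]; exact key y x hy hx
  · simpa [Pol, hx, hy] using hm.dist_le_mul x y

theorem Pol_cpt {e : E} {s : ℝ} {v : E → ℝ} (hc : HasCompactSupport v) :
    HasCompactSupport (Pol e s v) := by
  have h2 : HasCompactSupport fun x => v (x - s • e) :=
    hc.comp_homeomorph (Homeomorph.subRight (s • e))
  refine HasCompactSupport.of_support_subset_isCompact (hc.isCompact.union h2.isCompact) ?_
  intro x hx
  rcases Pol_eq_or e s v x with h | h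
  · exact Or.inl (subset_tsupport _ (by rw [Function.mem_support, ← h]; exact hx))
  · exact Or.inr (subset_tsupport _ (show v (x - s • e) ≠ 0 by rw [← h]; exact hx))

theorem Pol_sg {e : E} {s : ℝ} {v : E → ℝ} (hr : ∀ x y, ‖x‖ = ‖y‖ → v x = v y) (x : E) :
    Pol e s v (sg e s x) =
      if ‖x - s • e‖ ≤ ‖x‖ then max (v x) (v (x - s • e)) else min (v x) (v (x - s • e)) := by
  unfold Pol
  rw [norm_sg, norm_sg_sub, hr (sg e s x) (x - s • e) (norm_sg _ _ _),
    hr (sg e s x - s • e) x (norm_sg_sub _ _ _), max_comm, min_comm]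

theorem Pol_add {e : E} {s : ℝ} {v : E → ℝ} (hr : ∀ x y, ‖x‖ = ‖y‖ → v x = v y) (x : E) :
    (Pol e s v x = v x ∧ Pol e s v (sg e s x) = v (x - s • e)) ∨
    (Pol e s v x = v (x - s • e) ∧ Pol e s v (sg e s x) = v x) := by
  rw [Pol_sg hr, Pol]
  rcases lt_trichotomy ‖x‖ ‖x - s • e‖ with h | h | h
  · rw [if_pos h.le, if_neg (not_le.2 h)]
    rcases le_total (v x) (v (x - s • e)) with h' | h'
    · rw [max_eq_right h', min_eq_left h']; simp
    · rw [max_eq_left h', min_eq_right h']; simp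
  · rw [if_pos h.le, if_pos h.ge, hr _ _ h]; simp
  · rw [if_neg (not_le.2 h), if_pos h.le]
    rcases le_total (v x) (v (x - s • e)) with h' | h'
    · rw [max_eq_right h', min_eq_left h']; simp
    · rw [max_eq_left h', min_eq_right h']; simp

theorem Pol_pow {e : E} {s : ℝ} {v : E → ℝ} (hr : ∀ x y, ‖x‖ = ‖y‖ → v x = v y)
    (hc : Continuous v) (hcs : HasCompactSupport v) {p : ℝ} (hp : 1 < p) :
    ∫ x, |Pol e s v x| ^ p = ∫ x, |v x| ^ p := by
  have hI : ∀ f : E → ℝ, Continuous f → HasCompactSupport f → Integrable fun x => |f x| ^ p := by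
    intro f hf hfc
    refine (hf.abs.rpow_const (fun _ => Or.inr (by linarith))).integrable_of_hasCompactSupport ?_
    refine hfc.mono fun x hx hx' => hx ?_
    simp only [hx', abs_zero]
    exact Real.zero_rpow (by linarith)
  have h1 : ∀ x, |Pol e s v x| ^ p + |Pol e s v (sg e s x)| ^ p = |v x| ^ p + |v (x - s • e)| ^ p := by
    intro x
    rcases Pol_add (e := e) (s := s) hr x with ⟨h, h'⟩ | ⟨h, h'⟩
    · rw [h, h']
    · rw [h, h', add_comm]
  have hw := hI _ (Pol_cont (e := e) (s := s) hr hc) (Pol_cpt hcs)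
  have hv := hI _ hc hcs
  have hw' : Integrable fun x => |Pol e s v (sg e s x)| ^ p := by
    refine hI (fun x => Pol e s v (sg e s x)) ((Pol_cont hr hc).comp (isometry_sg e s).continuous) ?_
    exact (Pol_cpt hcs).comp_isClosedEmbedding (isometry_sg e s).isClosedEmbedding
  have hv' : Integrable fun x => |v (x - s • e)| ^ p := hv.comp_sub_right (s • e)
  have h2 := integral_congr_ae (μ := (volume : Measure E)) (Eventually.of_forall h1)
  rw [integral_add hw hw', integral_add hv hv', integral_sg e s (fun x => |Pol e s v x| ^ p),
    integral_sub_right_eq_self (fun x => |v x| ^ p)] at h2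
  linarith

theorem Pol_energy {e : E} (he : e ≠ 0) {s : ℝ} (hs : s ≠ 0) {v : E → ℝ}
    (hr : ∀ x y, ‖x‖ = ‖y‖ → v x = v y)
    (hc : ContDiff ℝ 1 v) (hcs : HasCompactSupport v) {p : ℝ} (hp : 1 < p) :
    ∫ x, ‖gradient (Pol e s v) x‖ ^ p = ∫ x, ‖gradient v x‖ ^ p := by
  obtain ⟨C, hL⟩ := hc.lipschitzWith_of_hasCompactSupport hcs one_ne_zero
  have hI : ∀ f : E → ℝ, LipschitzWith C f → HasCompactSupport f →
      Integrable fun x => ‖gradient f x‖ ^ p := by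
    intro f hf hfc
    refine integrable_of_bdd (M := (C : ℝ) ^ p) hfc ?_ (fun x => ?_) (fun x hx => ?_)
    · exact ((measurable_gradient _).norm.pow_const p).aestronglyMeasurable
    · rw [abs_of_nonneg (by positivity)]
      exact Real.rpow_le_rpow (norm_nonneg _) (norm_gradient_le_of_lip hf x) (by linarith)
    · rw [gradient_eq_zero_of_notMem hx, norm_zero, Real.zero_rpow (by linarith)]
  have hd : Differentiable ℝ v := hc.differentiable one_ne_zero
  have hLw : LipschitzWith C (Pol e s v) := Pol_lip hr hL
  have hLw' : LipschitzWith C fun x => Pol e s v (sg e s x) := by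
    have := hLw.comp (isometry_sg e s).lipschitz
    rw [mul_one] at this
    exact this
  have hw := hI _ hLw (Pol_cpt hcs)
  have hw' := hI _ hLw' ((Pol_cpt hcs).comp_isClosedEmbedding (isometry_sg e s).isClosedEmbedding)
  have hv := hI _ hL hcs
  have hv' : Integrable fun x => ‖gradient v (x - s • e)‖ ^ p := hv.comp_sub_right (s • e)
  have hnull : ∀ᵐ x : E, ‖x‖ ≠ ‖x - s • e‖ := by
    have h0 : volume (AffineSubspace.perpBisector (0 : E) (s • e) : Set E) = 0 := by
      refine Measure.addHaar_affineSubspace _ _ ?_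
      rw [Ne, AffineSubspace.perpBisector_eq_top]
      exact (smul_ne_zero hs he).symm
    rw [ae_iff]
    refine measure_mono_null (fun x hx => ?_) h0
    rw [SetLike.mem_coe, AffineSubspace.mem_perpBisector_iff_dist_eq, dist_zero_right,
      dist_eq_norm]
    simpa using hx
  have h1 : ∀ᵐ x : E, ‖gradient (Pol e s v) x‖ ^ p
      + ‖gradient (fun x => Pol e s v (sg e s x)) x‖ ^ p =
      ‖gradient v x‖ ^ p + ‖gradient v (x - s • e)‖ ^ p := by
    filter_upwards [hLw.ae_differentiableAt, hLw'.ae_differentiableAt, hnull] with x h1 h2 h3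
    have hdv' : DifferentiableAt ℝ (fun x => v (x - s • e)) x :=
      (hd.comp (differentiable_id.sub_const (s • e))) x
    rcases lt_or_gt_of_ne h3 with h | h
    · have hev : ∀ᶠ y in 𝓝 x, ‖y‖ < ‖y - s • e‖ :=
        ContinuousAt.eventually_lt (by fun_prop) (by fun_prop) h
      rw [gradient_max (hd x) hdv' h1 (by
          filter_upwards [hev] with y hy; rw [Pol, if_pos hy.le]),
        gradient_min (hd x) hdv' h2 (by
          filter_upwards [hev] with y hy; rw [Pol_sg hr, if_neg (not_le.2 hy)]),
        gradient_comp_sub]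
      split_ifs
      · rw [add_comm]
      · rfl
    · have hev : ∀ᶠ y in 𝓝 x, ‖y - s • e‖ < ‖y‖ :=
        ContinuousAt.eventually_lt (by fun_prop) (by fun_prop) h
      rw [gradient_min (hd x) hdv' h1 (by
          filter_upwards [hev] with y hy; rw [Pol, if_neg (not_le.2 hy)]),
        gradient_max (hd x) hdv' h2 (by
          filter_upwards [hev] with y hy; rw [Pol_sg hr, if_pos hy.le]),
        gradient_comp_sub]
      split_ifs
      · rfl
      · rw [add_comm]
  have h2 := integral_congr_ae h1
  rw [integral_add hw hw', integral_add hv hv',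
    integral_sub_right_eq_self (fun x => ‖gradient v x‖ ^ p)] at h2
  simp only [norm_gradient_sg] at h2
  rw [integral_sg e s (fun x => ‖gradient (Pol e s v) x‖ ^ p)] at h2
  linarith

end PartFive


section PartSix
open scoped NNReal
set_option linter.unusedSectionVars false
set_option linter.unusedVariables false

variable {E : Type*} [NormedAddCommGroup E] [InnerProductSpace ℝ E] [FiniteDimensional ℝ E]
  [MeasurableSpace E] [BorelSpace E]

theorem Sol.not_const [Nontrivial E] {p α : ℝ} (hp : 1 < p) {v : E → ℝ} (h : Sol p α v)
    {U : Set E} (hU : IsOpen U) (hne : U.Nonempty) {c : ℝ} (hc : 0 < c) (hUc : ∀ x ∈ U, v x = c) :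
    False := by
  obtain ⟨x, hx⟩ := hne
  obtain ⟨f, hf1, hf2, hf3, hf4, hf5⟩ := exists_contDiff_tsupport_subset (n := (⊤ : ℕ∞)) (hU.mem_nhds hx)
  have hα := h.alpha_pos hp
  have hUv : U ⊆ {x | 0 < v x} := fun y hy => by rw [mem_setOf_eq, hUc y hy]; exact hc
  have h1 := h.weak f hf3 hf2 (hf1.trans hUv)
  have h2 : ∀ y, ⟪Afld p (gradient v y), gradient f y⟫ = 0 := by
    intro y
    by_cases hy : y ∈ tsupport f
    · have : v =ᶠ[𝓝 y] fun _ => c := by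
        filter_upwards [hU.mem_nhds (hf1 hy)] with z hz using hUc z hz
      rw [this.gradient_eq, gradient_fun_const, Afld_zero, inner_zero_left]
    · rw [gradient_eq_zero_of_notMem hy, inner_zero_right]
  simp only [h2, integral_zero] at h1
  have hcp : Continuous fun x => v x ^ (p - 1) * f x :=
    (h.cont.rpow_const (fun _ => Or.inr (by linarith))).mul hf3.continuous
  have h3 : 0 < ∫ x, v x ^ (p - 1) * f x := by
    refine Continuous.integral_pos_of_hasCompactSupport_nonneg_nonzero hcp hf2.mul_left
      (fun y => mul_nonneg (Real.rpow_nonneg (h.nonneg y) _) ?_) (x := x) ?_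
    · exact (hf4 (mem_range_self y)).1
    · rw [hf5, mul_one, hUc x hx]; positivity
  have := mul_pos hα h3
  linarith

theorem hasGradientAt_norm {x : E} (hx : x ≠ 0) : HasGradientAt (fun y : E => ‖y‖) (‖x‖⁻¹ • x) x := by
  have h1 : HasFDerivAt (fun y : E => ‖y‖ ^ 2) (2 • (innerSL ℝ x)) x :=
    (hasStrictFDerivAt_norm_sq x).hasFDerivAt
  have hx' : ‖x‖ ^ 2 ≠ 0 := by simpa using hx
  have h2 := h1.sqrt hx'
  have h3 : (fun y : E => √(‖y‖ ^ 2)) = fun y => ‖y‖ := by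
    ext y; rw [Real.sqrt_sq (norm_nonneg y)]
  rw [h3] at h2
  rw [hasGradientAt_iff_hasFDerivAt]
  refine h2.congr_fderiv ?_
  ext y
  rw [Real.sqrt_sq (norm_nonneg x)]
  simp [inner_smul_left]
  field_simp

theorem Sol.gradient_rad {p α : ℝ} {v : E → ℝ} (h : Sol p α v) {e' : E} (he : ‖e'‖ = 1)
    {x : E} (hx : 0 < v x) (hx0 : x ≠ 0) :
    gradient v x = (deriv (fun r : ℝ => v (r • e')) ‖x‖ * ‖x‖⁻¹) • x := by
  have hv : ∀ y, v y = v (‖y‖ • e') := fun y => h.rad _ _ (by simp [norm_smul, he])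
  have hd : DifferentiableAt ℝ (fun r : ℝ => v (r • e')) ‖x‖ := by
    have h1 : DifferentiableAt ℝ v (‖x‖ • e') := h.diffAt (by rw [← hv]; exact hx)
    exact h1.comp (f := fun r : ℝ => r • e') ‖x‖ (by fun_prop)
  have h1 := hd.hasDerivAt.comp_hasFDerivAt x
    (hasGradientAt_iff_hasFDerivAt.1 (hasGradientAt_norm hx0))
  have h2 : HasFDerivAt v _ x := h1.congr_of_eventuallyEq (Eventually.of_forall hv)
  rw [gradient, h2.fderiv, map_smul, LinearIsometryEquiv.symm_apply_apply, smul_smul]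

theorem Sol.profile [Nontrivial E] {p α : ℝ} (hp : 1 < p) {v : E → ℝ} (h : Sol p α v) {e' : E}
    (he : ‖e'‖ = 1) {s : ℝ} (hs : 0 < s) (hv0 : v 0 = 0) :
    ∃ c r : ℝ, 0 < c ∧ c < r ∧ r < c + s ∧ v (c • e') = v (r • e') ∧ 0 < v (c • e') ∧
      0 < deriv (fun r : ℝ => v (r • e')) c := by
  set g : ℝ → ℝ := fun r => v (r • e') with hg
  have hgc : Continuous g := h.cont.comp (by fun_prop)
  have hvg : ∀ y, v y = g ‖y‖ := fun y => h.rad _ _ (by simp [norm_smul, he])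
  obtain ⟨xm, hxm⟩ := h.cont.exists_forall_ge_of_hasCompactSupport h.cpt
  obtain ⟨z, hz⟩ := h.ne
  have hM : 0 < v xm := hz.trans_le (hxm z)
  set m := ‖xm‖ with hm
  have hm0 : 0 < m := by
    rw [hm, norm_pos_iff]; rintro rfl; linarith
  have hgm : g m = v xm := (hvg xm).symm
  have hgle : ∀ r, g r ≤ g m := fun r => by rw [hgm]; exact hxm _
  have hnc : ∀ a b : ℝ, 0 ≤ a → a < b → ∃ t ∈ Ioo a b, g t < g m := by
    intro a b ha hab
    by_contra hcon
    push Not at hcon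
    refine h.not_const hp (U := {x : E | a < ‖x‖ ∧ ‖x‖ < b}) ?_ ?_ (hgm ▸ hM) (c := g m) ?_
    · exact (isOpen_lt continuous_const continuous_norm).inter
        (isOpen_lt continuous_norm continuous_const)
    · refine ⟨((a + b) / 2) • e', ?_⟩
      have : ‖((a + b) / 2) • e'‖ = (a + b) / 2 := by
        rw [norm_smul, he, mul_one, Real.norm_of_nonneg (by linarith)]
      rw [mem_setOf_eq, this]
      constructor <;> linarith
    · intro x hx
      rw [hvg]
      exact le_antisymm (hgle _) (hcon _ hx)
  obtain ⟨l, hl, hgl⟩ := hnc (max 0 (m - s / 2)) m (le_max_left _ _) (max_lt hm0 (by linarith))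
  obtain ⟨r, hr, hgr⟩ := hnc m (m + s / 2) hm0.le (by linarith)
  have hl0 : 0 < l := (le_max_left _ _).trans_lt hl.1
  have hls : m - s / 2 < l := (le_max_right _ _).trans_lt hl.1
  set K := max (g l) (g r) with hK
  have hKm : K < g m := max_lt hgl hgr
  have hK0 : 0 ≤ K := (h.nonneg _).trans (le_max_left _ _)
  set S : Set ℝ := Icc l m ∩ {t | g t ≤ K} with hS
  have hScpt : IsCompact S := isCompact_Icc.inter_right (isClosed_le hgc continuous_const)
  have hSne : S.Nonempty := ⟨l, ⟨le_rfl, hl.2.le⟩, show g l ≤ K from le_max_left _ _⟩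
  obtain ⟨hl', hgl'⟩ := hScpt.sSup_mem hSne
  set l' := sSup S
  have hl'm : l' < m := lt_of_le_of_ne hl'.2 (fun hh => by
    rw [mem_setOf_eq, hh] at hgl'; linarith)
  have hgt : ∀ t ∈ Ioc l' m, K < g t := by
    intro t ht
    by_contra hcon
    have : t ≤ l' := le_csSup hScpt.bddAbove ⟨⟨hl'.1.trans ht.1.le, ht.2⟩, not_lt.1 hcon⟩
    linarith [ht.1]
  obtain ⟨c, hc, hdc⟩ := exists_deriv_eq_slope g hl'm hgc.continuousOn (by
    intro t ht
    have h0 : 0 < v (t • e') := hK0.trans_lt (hgt t ⟨ht.1, ht.2.le⟩)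
    exact ((h.diffAt h0).comp (f := fun r : ℝ => r • e') t (by fun_prop)).differentiableWithinAt)
  have hgc' := hgt c ⟨hc.1, hc.2.le⟩
  obtain ⟨r2, hr2, hgr2⟩ := intermediate_value_Icc' hr.1.le hgc.continuousOn
    (show g c ∈ Icc (g r) (g m) from ⟨(le_max_right _ _).trans hgc'.le, hgle c⟩)
  refine ⟨c, r2, ?_, ?_, ?_, hgr2.symm, hK0.trans_lt hgc', ?_⟩
  · linarith [hc.1, hl'.1]
  · linarith [hc.2, hr2.1]
  · linarith [hc.1, hl'.1, hr2.2, hr.2]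
  · rw [hdc]
    refine div_pos ?_ (by linarith)
    have : g l' ≤ K := hgl'
    linarith

theorem Sol.exists_kink [Nontrivial E] {p α : ℝ} (hp : 1 < p) {v : E → ℝ} (h : Sol p α v)
    {e e' : E} (he : ‖e‖ = 1) (he' : ‖e'‖ = 1) (hee : ⟪e, e'⟫ = 0) {s : ℝ} (hs : 0 < s)
    (hvs : ∀ x, v x ≠ 0 → s < ‖x‖) :
    ∃ x0, 0 < v x0 ∧ v x0 = v (x0 - s • e) ∧ ‖x0‖ < ‖x0 - s • e‖ ∧
      gradient v x0 ≠ gradient v (x0 - s • e) := by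
  have hv0 : v 0 = 0 := by
    by_contra hc
    have := hvs 0 hc
    rw [norm_zero] at this; linarith
  obtain ⟨c, r, hc, hcr, hrs, hgcr, hgpos, hder⟩ := h.profile hp he' hs hv0
  have hsc : s < c := by
    have := hvs (c • e') hgpos.ne'
    rwa [norm_smul, he', mul_one, Real.norm_of_nonneg hc.le] at this
  set x1 := (c ^ 2 - r ^ 2 + s ^ 2) / (2 * s) with hx1
  have hx1s : 2 * s * x1 = c ^ 2 - r ^ 2 + s ^ 2 := by rw [hx1]; field_simp
  have h1 : x1 < c := by
    rw [hx1, div_lt_iff₀ (by linarith)]; nlinarith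
  have h2 : -c < x1 := by
    rw [hx1, lt_div_iff₀ (by linarith)]; nlinarith
  have hpos : 0 < c ^ 2 - x1 ^ 2 := by nlinarith
  set y := √(c ^ 2 - x1 ^ 2) with hy
  have hy0 : 0 < y := Real.sqrt_pos.2 hpos
  have hy2 : y ^ 2 = c ^ 2 - x1 ^ 2 := Real.sq_sqrt hpos.le
  have hee' : ⟪e', e⟫ = 0 := by rw [real_inner_comm]; exact hee
  have hnorm : ∀ a b : ℝ, ‖a • e + b • e'‖ ^ 2 = a ^ 2 + b ^ 2 := by
    intro a b
    rw [norm_add_sq_real, norm_smul, norm_smul, he, he', inner_smul_left, inner_smul_right, hee]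
    simp
  set x0 := x1 • e + y • e' with hx0
  have hx0s : x0 - s • e = (x1 - s) • e + y • e' := by rw [hx0, sub_smul]; abel
  have hn0 : ‖x0‖ = c := by
    rw [← sq_eq_sq₀ (norm_nonneg _) hc.le, hnorm, hy2]; ring
  have hn1 : ‖x0 - s • e‖ = r := by
    rw [← sq_eq_sq₀ (norm_nonneg _) (hc.trans hcr).le, hx0s, hnorm, hy2]; linarith
  have hv0' : v x0 = v (c • e') := h.rad _ _ (by rw [hn0, norm_smul, he', mul_one, Real.norm_of_nonneg hc.le])
  have hv1' : v (x0 - s • e) = v (r • e') :=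
    h.rad _ _ (by rw [hn1, norm_smul, he', mul_one, Real.norm_of_nonneg (hc.trans hcr).le])
  refine ⟨x0, hv0' ▸ hgpos, by rw [hv0', hv1', hgcr], by rw [hn0, hn1]; exact hcr, ?_⟩
  intro hcon
  have hx0ne : x0 ≠ 0 := by rw [← norm_pos_iff, hn0]; exact hc
  have hx1ne : x0 - s • e ≠ 0 := by rw [← norm_pos_iff, hn1]; exact hc.trans hcr
  rw [h.gradient_rad he' (hv0' ▸ hgpos) hx0ne,
    h.gradient_rad he' (by rw [hv1', ← hgcr]; exact hgpos) hx1ne, hn0, hn1] at hcon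
  set lam := deriv (fun r : ℝ => v (r • e')) c * c⁻¹ with hlam
  set mu := deriv (fun r : ℝ => v (r • e')) r * r⁻¹
  have hlam0 : 0 < lam := mul_pos hder (inv_pos.2 hc)
  have e1 : lam * y = mu * y := by
    have := congrArg (fun z => ⟪e', z⟫) hcon
    simp only [hx0s] at this
    simpa [hx0, inner_add_right, inner_smul_right, hee', real_inner_self_eq_norm_sq, he'] using this
  have e2 : lam = mu := mul_right_cancel₀ hy0.ne' e1
  have e3 : lam * x1 = mu * (x1 - s) := by
    have := congrArg (fun z => ⟪e, z⟫) hcon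
    simp only [hx0s] at this
    simpa [hx0, inner_add_right, inner_smul_right, hee, real_inner_self_eq_norm_sq, he] using this
  rw [← e2] at e3
  nlinarith

end PartSix


section PartSeven
open scoped NNReal
set_option linter.unusedSectionVars false
set_option linter.unusedVariables false

variable {E : Type*} [NormedAddCommGroup E] [InnerProductSpace ℝ E] [FiniteDimensional ℝ E]
  [MeasurableSpace E] [BorelSpace E]

/-- The gradient field of the maximum of `v` and its translate. -/
noncomputable def gfld (e : E) (s : ℝ) (v : E → ℝ) (x : E) : E :=
  open Classical in if v x < v (x - s • e) then gradient v (x - s • e) else gradient v x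

theorem measurable_gfld {e : E} {s : ℝ} {v : E → ℝ} (hv : Continuous v) :
    Measurable (gfld e s v) := by
  unfold gfld
  refine Measurable.ite ?_ ((measurable_gradient v).comp (by fun_prop)) (measurable_gradient v)
  exact (isOpen_lt hv (hv.comp (by fun_prop))).measurableSet

theorem kink_test [Nontrivial E] {p α : ℝ} (hp : 1 < p) {v : E → ℝ} (h : Sol p α v)
    {e : E} {s : ℝ} {x0 : E} (hv0 : 0 < v x0) (hv1 : v x0 = v (x0 - s • e))
    (hn : ‖x0‖ < ‖x0 - s • e‖) (hg : gradient v x0 ≠ gradient v (x0 - s • e)) :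
    ∃ (φ : E → ℝ) (C : ℝ≥0) (ρ δ B : ℝ), LipschitzWith C φ ∧ (∀ x, 0 ≤ φ x) ∧ 0 < ρ ∧ 0 < δ ∧
      tsupport φ ⊆ closedBall x0 ρ ∧
      (∀ x ∈ ball x0 (2 * ρ), 2 * δ < v x ∧ 2 * δ < v (x - s • e) ∧ ‖x‖ < ‖x - s • e‖ ∧
        ‖gradient v x‖ ≤ B ∧ ‖gradient v (x - s • e)‖ ≤ B) ∧
      ∫ x, ⟪Afld p (gfld e s v x), gradient φ x⟫ < α * ∫ x, Pol e s v x ^ (p - 1) * φ x := by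
  have hα := h.alpha_pos hp
  set δ := v x0 / 4 with hδd
  have hδ : 0 < δ := by positivity
  have hv0' : 2 * δ < v x0 := by rw [hδd]; linarith
  have hv1' : 2 * δ < v (x0 - s • e) := by rw [← hv1]; exact hv0'
  have hsub : Continuous fun x : E => x - s • e := by fun_prop
  have hca : ContinuousAt (gradient v) x0 := h.contGrad.continuousAt (h.isOpen.mem_nhds hv0)
  have hcb : ContinuousAt (fun x => gradient v (x - s • e)) x0 :=
    ContinuousAt.comp (f := fun x : E => x - s • e)
      (h.contGrad.continuousAt (h.isOpen.mem_nhds (show 0 < v (x0 - s • e) by linarith)))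
      hsub.continuousAt
  set Dv : E → E := fun x => Afld p (gradient v (x - s • e)) - Afld p (gradient v x) with hDv
  have hcD : ContinuousAt Dv x0 :=
    ((continuous_Afld hp).continuousAt.comp hcb).sub ((continuous_Afld hp).continuousAt.comp hca)
  set θ : E → ℝ := fun x => ⟪Dv x, gradient v (x - s • e) - gradient v x⟫ with hθ
  have hcθ : ContinuousAt θ x0 := hcD.inner (hcb.sub hca)
  have hθ0 : 0 < θ x0 := Afld_mono hp hg
  set c0 := θ x0 / 2 with hc0d
  have hc0 : 0 < c0 := by positivity
  set CD := ‖Dv x0‖ + 1 with hCD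
  have hCD0 : 0 < CD := by positivity
  set B := max (‖gradient v x0‖ + 1) (‖gradient v (x0 - s • e)‖ + 1) with hB
  have hev : ∀ᶠ x in 𝓝 x0, (2 * δ < v x ∧ 2 * δ < v (x - s • e) ∧ ‖x‖ < ‖x - s • e‖ ∧
        ‖gradient v x‖ ≤ B ∧ ‖gradient v (x - s • e)‖ ≤ B) ∧ c0 < θ x ∧ ‖Dv x‖ < CD := by
    have k1 : ∀ᶠ x in 𝓝 x0, 2 * δ < v x := continuousAt_const.eventually_lt h.cont.continuousAt hv0'
    have k2 : ∀ᶠ x in 𝓝 x0, 2 * δ < v (x - s • e) :=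
      continuousAt_const.eventually_lt (h.cont.comp hsub).continuousAt hv1'
    have k3 : ∀ᶠ x in 𝓝 x0, ‖x‖ < ‖x - s • e‖ :=
      ContinuousAt.eventually_lt (by fun_prop) (by fun_prop) hn
    have k4 : ∀ᶠ x in 𝓝 x0, ‖gradient v x‖ < ‖gradient v x0‖ + 1 :=
      hca.norm.eventually_lt continuousAt_const (by linarith)
    have k5 : ∀ᶠ x in 𝓝 x0, ‖gradient v (x - s • e)‖ < ‖gradient v (x0 - s • e)‖ + 1 :=
      hcb.norm.eventually_lt continuousAt_const (by linarith)
    have k6 : ∀ᶠ x in 𝓝 x0, c0 < θ x := continuousAt_const.eventually_lt hcθ (by linarith)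
    have k7 : ∀ᶠ x in 𝓝 x0, ‖Dv x‖ < CD := hcD.norm.eventually_lt continuousAt_const (by linarith)
    filter_upwards [k1, k2, k3, k4, k5, k6, k7] with x k1 k2 k3 k4 k5 k6 k7
    exact ⟨⟨k1, k2, k3, k4.le.trans (le_max_left _ _), k5.le.trans (le_max_right _ _)⟩, k6, k7⟩
  obtain ⟨ρ', hρ', hball⟩ := Metric.eventually_nhds_iff_ball.1 hev
  set ρ := ρ' / 2 with hρd
  have hρ : 0 < ρ := by positivity
  have h2ρ : 2 * ρ = ρ' := by rw [hρd]; ring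
  set L := (CD + 1) / c0 with hL
  have hL0 : 0 < L := by positivity
  have hLc : L * c0 = CD + 1 := by rw [hL]; field_simp
  -- difference of truncated functions
  set d : E → ℝ := fun x => vt δ v (x - s • e) - vt δ v x with hd
  have hvtd : Differentiable ℝ (vt δ v) := (h.vt_contDiff hδ).differentiable one_ne_zero
  have hdd : Differentiable ℝ d := (hvtd.comp (differentiable_id.sub_const _)).sub hvtd
  obtain ⟨C1, hC1⟩ := h.vt_lip hδ
  have hLd : ∃ C, LipschitzWith C d := by
    have := hC1.comp (LipschitzWith.id.sub (LipschitzWith.const (s • e)))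
    exact ⟨_, this.sub hC1⟩
  obtain ⟨C2, hC2⟩ := hLd
  have hd_eq : ∀ x ∈ ball x0 (2 * ρ), d x = v (x - s • e) - v x := by
    intro x hx
    obtain ⟨⟨k1, k2, -⟩, -⟩ := hball x (h2ρ ▸ hx)
    simp only [hd, vt]
    rw [tr_of_ge hδ k1.le, tr_of_ge hδ k2.le]; ring
  have hd_grad : ∀ x ∈ ball x0 (2 * ρ), gradient d x = gradient v (x - s • e) - gradient v x := by
    intro x hx
    obtain ⟨⟨k1, k2, -⟩, -⟩ := hball x (h2ρ ▸ hx)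
    have k3 : gradient d x = gradient (fun y => vt δ v (y - s • e)) x - gradient (vt δ v) x := by
      have k4 : DifferentiableAt ℝ (fun y => vt δ v (y - s • e)) x :=
        (hvtd.comp (differentiable_id.sub_const (s • e))) x
      have k5 : fderiv ℝ d x = fderiv ℝ (fun y => vt δ v (y - s • e)) x - fderiv ℝ (vt δ v) x :=
        fderiv_fun_sub k4 (hvtd x)
      unfold gradient
      rw [← map_sub, k5]
    rw [k3, gradient_comp_sub, h.gradient_vt hδ, h.gradient_vt hδ, trd_of_ge hδ k1.le,
      trd_of_ge hδ k2.le, one_smul, one_smul]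
  set φ : E → ℝ := fun x => max 0 (ρ - L * max (d x) 0 - dist x x0) with hφ
  have hφL : ∃ C, LipschitzWith C φ := by
    have k1 : LipschitzWith C2 fun x => max (d x) 0 := hC2.max_const 0
    have k2 : LipschitzWith (Real.nnabs L * C2) fun x => L * max (d x) 0 := by
      refine LipschitzWith.of_dist_le_mul fun x y => ?_
      rw [Real.dist_eq, ← mul_sub, abs_mul, NNReal.coe_mul, mul_assoc, Real.coe_nnabs]
      gcongr
      exact k1.dist_le_mul x y
    exact ⟨_, (((LipschitzWith.const ρ).sub k2).sub (LipschitzWith.dist_left x0)).const_max 0⟩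
  obtain ⟨C, hφC⟩ := hφL
  have hφ0 : ∀ x, 0 ≤ φ x := fun x => le_max_left _ _
  have hφball : ∀ x, 0 < φ x → dist x x0 < ρ := by
    intro x hx
    rcases lt_max_iff.1 hx with k | k
    · exact absurd k (lt_irrefl _)
    · have : 0 ≤ L * max (d x) 0 := mul_nonneg hL0.le (le_max_right _ _)
      linarith
  have hφs : tsupport φ ⊆ closedBall x0 ρ := by
    refine closure_minimal (fun x hx => ?_) isClosed_closedBall
    exact (hφball x (lt_of_le_of_ne (hφ0 x) (Ne.symm hx))).le
  have hφcpt : HasCompactSupport φ :=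
    HasCompactSupport.of_support_subset_isCompact (isCompact_closedBall x0 ρ)
      ((subset_tsupport _).trans hφs)
  have hcb2 : closedBall x0 ρ ⊆ ball x0 (2 * ρ) := closedBall_subset_ball (by linarith)
  set S : Set E := {x | 0 < d x} ∩ {x | 0 < φ x} with hS
  have hSo : IsOpen S := (isOpen_lt continuous_const hdd.continuous).inter
    (isOpen_lt continuous_const hφC.continuous)
  have hx0b : x0 ∈ ball x0 (2 * ρ) := mem_ball_self (by linarith)
  have hdx0 : d x0 = 0 := by rw [hd_eq x0 hx0b, hv1, sub_self]
  have hSne : S.Nonempty := by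
    by_contra hcon
    have hφx0 : 0 < φ x0 := by simp [hφ, hdx0, hρ]
    have : IsLocalMax d x0 := by
      filter_upwards [(isOpen_lt continuous_const hφC.continuous).mem_nhds hφx0] with y hy
      rw [hdx0]
      by_contra hc
      exact hcon ⟨y, not_le.1 hc, hy⟩
    have h0 := this.fderiv_eq_zero
    have h1 : gradient d x0 = 0 := by unfold gradient; rw [h0, map_zero]
    rw [hd_grad x0 hx0b, sub_eq_zero] at h1
    exact hg h1.symm
  have hSfin : volume S < ∞ := by
    refine (measure_mono (fun x hx => ?_)).trans_lt (isCompact_closedBall x0 ρ).measure_lt_top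
    exact (hφball x hx.2).le
  have hSpos : 0 < volume S := hSo.measure_pos _ hSne
  -- key pointwise inequality
  have hkey : ∀ᵐ x : E, ⟪Afld p (gfld e s v x), gradient φ x⟫ ≤
      ⟪Afld p (gradient v x), gradient φ x⟫ - S.indicator (fun _ => (1 : ℝ)) x := by
    filter_upwards [hφC.ae_differentiableAt] with x hx
    by_cases hxb : x ∈ closedBall x0 ρ
    · have hxb2 := hcb2 hxb
      obtain ⟨⟨k1, k2, k3, k4, k5⟩, k6, k7⟩ := hball x (h2ρ ▸ hxb2)
      by_cases hab : v x < v (x - s • e)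
      · have hdx : 0 < d x := by rw [hd_eq x hxb2]; linarith
        rw [gfld, if_pos hab]
        by_cases hφx : 0 < φ x
        · rw [indicator_of_mem (show x ∈ S from ⟨hdx, hφx⟩)]
          have hev : ∀ᶠ y in 𝓝 x, φ y = ρ - L * d y - dist y x0 := by
            filter_upwards [hSo.mem_nhds (show x ∈ S from ⟨hdx, hφx⟩)] with y hy
            have e1 : max (d y) 0 = d y := max_eq_left (le_of_lt hy.1)
            have e2 : φ y = max 0 (ρ - L * max (d y) 0 - dist y x0) := rfl
            have e3 : 0 < φ y := hy.2
            rw [e2] at e3 ⊢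
            rw [e1] at e3 ⊢
            rcases lt_max_iff.1 e3 with k | k
            · exact absurd k (lt_irrefl _)
            · rw [max_eq_right k.le]
          have hf : DifferentiableAt ℝ (fun y => ρ - L * d y - φ y) x :=
            (((hdd x).const_mul L).const_sub ρ).sub hx
          have hev2 : (fun y => dist y x0) =ᶠ[𝓝 x] fun y => ρ - L * d y - φ y := by
            filter_upwards [hev] with y hy
            rw [hy]; ring
          have hfd : fderiv ℝ (fun y => dist y x0) x = -(L • fderiv ℝ d x) - fderiv ℝ φ x := by
            rw [hev2.fderiv_eq, fderiv_fun_sub (((hdd x).const_mul L).const_sub ρ) hx,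
              fderiv_const_sub, fderiv_const_mul (hdd x)]
          have hgr : gradient φ x = -(L • gradient d x) - gradient (fun y => dist y x0) x := by
            have : fderiv ℝ φ x = -(L • fderiv ℝ d x) - fderiv ℝ (fun y => dist y x0) x := by
              rw [hfd]; abel
            unfold gradient
            rw [this, map_sub, map_neg, map_smul]
          have hq : ‖gradient (fun y => dist y x0) x‖ ≤ 1 := by
            simpa using norm_gradient_le_of_lip (LipschitzWith.dist_left x0) x
          have hDq : -⟪Dv x, gradient (fun y => dist y x0) x⟫ ≤ CD := by
            refine (neg_le_abs _).trans ((abs_real_inner_le_norm _ _).trans ?_)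
            nlinarith [norm_nonneg (Dv x), norm_nonneg (gradient (fun y => dist y x0) x)]
          have hfin : ⟪Dv x, gradient φ x⟫ ≤ -1 := by
            rw [hgr, inner_sub_right, inner_neg_right, inner_smul_right, hd_grad x hxb2]
            have : L * c0 ≤ L * θ x := by gcongr
            have e4 : ⟪Dv x, gradient v (x - s • e) - gradient v x⟫ = θ x := rfl
            rw [e4]
            linarith
          have e5 : Dv x = Afld p (gradient v (x - s • e)) - Afld p (gradient v x) := rfl
          rw [e5, inner_sub_left] at hfin
          linarith
        · have hφx0 : φ x = 0 := le_antisymm (not_lt.1 hφx) (hφ0 x)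
          have hmin : IsLocalMin φ x := Eventually.of_forall fun y => by rw [hφx0]; exact hφ0 y
          have h1 : gradient φ x = 0 := by unfold gradient; rw [hmin.fderiv_eq_zero, map_zero]
          rw [h1, indicator_of_notMem (fun hh : x ∈ S => hφx hh.2)]
          simp
      · rw [gfld, if_neg hab, indicator_of_notMem, sub_zero]
        intro hh
        have : 0 < d x := hh.1
        rw [hd_eq x hxb2] at this
        linarith
    · have h1 : gradient φ x = 0 := gradient_eq_zero_of_notMem fun hh => hxb (hφs hh)
      rw [h1, indicator_of_notMem (fun hh : x ∈ S => hxb (hφball x hh.2).le)]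
      simp
  have hB0 : 0 ≤ B := (by positivity : (0:ℝ) ≤ ‖gradient v x0‖ + 1).trans (le_max_left _ _)
  have hbd : ∀ (G : E → E), Measurable G → (∀ x ∈ closedBall x0 ρ, ‖G x‖ ≤ B) →
      Integrable fun x => ⟪Afld p (G x), gradient φ x⟫ := by
    intro G hGm hGB
    refine integrable_of_bdd (M := B ^ (p - 1) * C) (isCompact_closedBall x0 ρ) ?_ (fun x => ?_)
      (fun x hx => ?_)
    · exact (((continuous_Afld hp).measurable.comp hGm).inner
        (measurable_gradient _)).aestronglyMeasurable
    · by_cases hx : x ∈ closedBall x0 ρ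
      · refine (abs_real_inner_le_norm _ _).trans ?_
        rw [norm_Afld hp]
        exact mul_le_mul (Real.rpow_le_rpow (norm_nonneg _) (hGB x hx) (by linarith))
          (norm_gradient_le_of_lip hφC x) (norm_nonneg _) (by positivity)
      · rw [gradient_eq_zero_of_notMem (fun hh => hx (hφs hh)), inner_zero_right, abs_zero]
        positivity
    · rw [gradient_eq_zero_of_notMem (fun hh => hx (hφs hh)), inner_zero_right]
  have hB' : ∀ x ∈ ball x0 (2 * ρ), 2 * δ < v x ∧ 2 * δ < v (x - s • e) ∧ ‖x‖ < ‖x - s • e‖ ∧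
        ‖gradient v x‖ ≤ B ∧ ‖gradient v (x - s • e)‖ ≤ B := fun x hx => (hball x (h2ρ ▸ hx)).1
  refine ⟨φ, C, ρ, δ, B, hφC, hφ0, hρ, hδ, hφs, hB', ?_⟩
  have i1 := hbd (gfld e s v) (measurable_gfld h.cont) (fun x hx => by
    obtain ⟨-, -, -, k4, k5⟩ := hB' x (hcb2 hx)
    unfold gfld; split_ifs <;> assumption)
  have i2 := hbd (gradient v) (measurable_gradient v) (fun x hx => (hB' x (hcb2 hx)).2.2.2.1)
  have i3 : Integrable (S.indicator fun _ => (1 : ℝ)) (volume : Measure E) :=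
    (integrable_indicator_iff hSo.measurableSet).2 (integrableOn_const hSfin.ne)
  have h1 := integral_mono_ae i1 (i2.sub i3) hkey
  have h2 : ∫ x, (⟪Afld p (gradient v x), gradient φ x⟫ - S.indicator (fun _ => (1 : ℝ)) x) =
      (∫ x, ⟪Afld p (gradient v x), gradient φ x⟫) - volume.real S := by
    rw [integral_sub i2 i3, integral_indicator hSo.measurableSet]
    simp
  have h3 : 0 < volume.real S := by
    rw [Measure.real]; exact ENNReal.toReal_pos hSpos.ne' hSfin.ne
  have h4 : ∫ x, ⟪Afld p (gradient v x), gradient φ x⟫ = α * ∫ x, v x ^ (p - 1) * φ x :=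
    h.weakLip hp hφC hφcpt fun x hx => by
      have := (hB' x (hcb2 (hφs hx))).1
      show 0 < v x
      linarith
  have h5 : ∫ x, v x ^ (p - 1) * φ x ≤ ∫ x, Pol e s v x ^ (p - 1) * φ x := by
    have hcp : ∀ f : E → ℝ, Continuous f → Continuous fun x => f x ^ (p - 1) * φ x := fun f hf =>
      (hf.rpow_const (fun _ => Or.inr (by linarith))).mul hφC.continuous
    refine integral_mono ((hcp v h.cont).integrable_of_hasCompactSupport hφcpt.mul_left)
      ((hcp _ (Pol_cont h.rad h.cont)).integrable_of_hasCompactSupport hφcpt.mul_left) fun x => ?_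
    by_cases hx : x ∈ closedBall x0 ρ
    · have k3 := (hB' x (hcb2 hx)).2.2.1
      refine mul_le_mul_of_nonneg_right (Real.rpow_le_rpow (h.nonneg x) ?_ (by linarith)) (hφ0 x)
      rw [Pol, if_pos k3.le]; exact le_max_left _ _
    · have : φ x = 0 := image_eq_zero_of_notMem_tsupport fun hh => hx (hφs hh)
      simp [this]
  have h6 := mul_le_mul_of_nonneg_left h5 hα.le
  have h7 : ∫ x, ⟪Afld p (gfld e s v x), gradient φ x⟫ ≤
    ∫ x, (⟪Afld p (gradient v x), gradient φ x⟫ - S.indicator (fun _ => (1 : ℝ)) x) := h1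
  linarith

end PartSeven


section PartEight
open scoped NNReal
set_option linter.unusedSectionVars false
set_option linter.unusedVariables false

variable {E : Type*} [NormedAddCommGroup E] [InnerProductSpace ℝ E] [FiniteDimensional ℝ E]
  [MeasurableSpace E] [BorelSpace E]

theorem Sol.Pol_nonneg {p α : ℝ} {v : E → ℝ} (h : Sol p α v) (e : E) (s : ℝ) (x : E) :
    0 ≤ Pol e s v x := by
  rcases Pol_eq_or e s v x with k | k <;> rw [k] <;> exact h.nonneg _

theorem continuous_Afld_apply {p : ℝ} (hp : 1 < p) (g q : E) :
    Tendsto (fun n : ℕ => ⟪Afld p (g + (1 / ((n : ℝ) + 1)) • q), q⟫) atTop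
      (𝓝 ⟪Afld p g, q⟫) := by
  have h1 : Continuous fun t : ℝ => ⟪Afld p (g + t • q), q⟫ :=
    ((continuous_Afld hp).comp (by fun_prop)).inner continuous_const
  have h2 := (h1.tendsto 0).comp tendsto_one_div_add_atTop_nhds_zero_nat
  simpa [Function.comp_def] using h2

theorem Sol.kink [Nontrivial E] {p α : ℝ} (hp : 1 < p) {v : E → ℝ} (h : Sol p α v)
    {e e' : E} (he : ‖e‖ = 1) (he' : ‖e'‖ = 1) (hee : ⟪e, e'⟫ = 0) {s : ℝ} (hs : 0 < s)
    (hvs : ∀ x, v x ≠ 0 → s < ‖x‖) :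
    ∃ (ψ : E → ℝ) (C : ℝ≥0), LipschitzWith C ψ ∧ HasCompactSupport ψ ∧
      tsupport ψ ⊆ {x | 0 < Pol e s v x} ∧
      ∫ x, ‖gradient ψ x‖ ^ p < α * ∫ x, |ψ x| ^ p := by
  have hα := h.alpha_pos hp
  obtain ⟨x0, a1, a2, a3, a4⟩ := h.exists_kink hp he he' hee hs hvs
  obtain ⟨φ, C, ρ, δ, B, hφC, hφ0, hρ, hδ, hφs, hB, hΛ⟩ := kink_test hp h a1 a2 a3 a4
  have he0 : e ≠ 0 := by rintro rfl; simp at he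
  have hcb2 : closedBall x0 ρ ⊆ ball x0 (2 * ρ) := closedBall_subset_ball (by linarith)
  have hφcpt : HasCompactSupport φ :=
    HasCompactSupport.of_support_subset_isCompact (isCompact_closedBall x0 ρ)
      ((subset_tsupport _).trans hφs)
  have hgB : ∀ x ∈ closedBall x0 ρ, ‖gfld e s v x‖ ≤ B := fun x hx => by
    obtain ⟨-, -, -, k4, k5⟩ := hB x (hcb2 hx)
    unfold gfld; split_ifs <;> assumption
  have hB0 : 0 ≤ B := (norm_nonneg _).trans (hgB x0 (mem_closedBall_self hρ.le))
  set W := Pol e s v with hW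
  have hWc : Continuous W := Pol_cont h.rad h.cont
  have hW0 : ∀ x, 0 ≤ W x := h.Pol_nonneg e s
  -- integrands
  have hmeas : ∀ t : ℝ, AEStronglyMeasurable
      (fun x => ⟪Afld p (gfld e s v x + t • gradient φ x), gradient φ x⟫) volume := fun t =>
    (((continuous_Afld hp).measurable.comp ((measurable_gfld h.cont).add
      ((measurable_gradient φ).const_smul t))).inner (measurable_gradient φ)).aestronglyMeasurable
  have hbd : ∀ t : ℝ, 0 ≤ t → t ≤ 1 → ∀ x,
      |⟪Afld p (gfld e s v x + t • gradient φ x), gradient φ x⟫| ≤ (B + C) ^ (p - 1) * C := by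
    intro t ht0 ht1 x
    by_cases hx : x ∈ closedBall x0 ρ
    · refine (abs_real_inner_le_norm _ _).trans ?_
      rw [norm_Afld hp]
      have hC := norm_gradient_le_of_lip hφC x
      refine mul_le_mul (Real.rpow_le_rpow (norm_nonneg _) ?_ (by linarith)) hC (norm_nonneg _)
        (by positivity)
      refine (norm_add_le _ _).trans (add_le_add (hgB x hx) ?_)
      rw [norm_smul, Real.norm_of_nonneg ht0]
      nlinarith [norm_nonneg (gradient φ x)]
    · rw [gradient_eq_zero_of_notMem (fun hh => hx (hφs hh)), inner_zero_right, abs_zero]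
      positivity
  have hz : ∀ (t : ℝ) (x : E), x ∉ closedBall x0 ρ →
      ⟪Afld p (gfld e s v x + t • gradient φ x), gradient φ x⟫ = 0 := by
    intro t x hx
    rw [gradient_eq_zero_of_notMem (fun hh => hx (hφs hh)), inner_zero_right]
  have hn1 : ∀ n : ℕ, 0 < 1 / ((n : ℝ) + 1) ∧ 1 / ((n : ℝ) + 1) ≤ 1 := fun n => by
    refine ⟨by positivity, ?_⟩
    rw [div_le_one (by positivity)]
    linarith [n.cast_nonneg (α := ℝ)]
  have hlim := tendsto_integral_of_bdd (l := atTop) (isCompact_closedBall x0 ρ)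
    (F := fun (n : ℕ) x => ⟪Afld p (gfld e s v x + (1 / ((n : ℝ) + 1)) • gradient φ x), gradient φ x⟫)
    (G := fun x => ⟪Afld p (gfld e s v x), gradient φ x⟫) (fun n => hmeas _)
    (fun n => hbd _ (hn1 n).1.le (hn1 n).2) (fun n => hz _)
    (Eventually.of_forall fun x => continuous_Afld_apply hp _ _)
  obtain ⟨n, hn⟩ := (hlim.eventually_lt_const hΛ).exists
  obtain ⟨ht0, ht1⟩ := hn1 n
  set t : ℝ := 1 / ((n : ℝ) + 1) with ht
  set I := ∫ x, ⟪Afld p (gfld e s v x + t • gradient φ x), gradient φ x⟫ with hI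
  -- convergence in ε
  obtain ⟨M, hM, hvM⟩ := h.bdd
  have hWM : ∀ x, W x ≤ M := fun x => by
    rcases Pol_eq_or e s v x with k | k
    · rw [hW, k]; exact hvM _
    · rw [hW, k]; exact hvM _
  obtain ⟨Mφ, hMφ⟩ := hφcpt.exists_bound_of_continuous hφC.continuous
  have hεlim : Tendsto (fun ε => ∫ x, vt ε W x ^ (p - 1) * φ x) (𝓝[>] 0)
      (𝓝 (∫ x, W x ^ (p - 1) * φ x)) := by
    have key := tendsto_integral_of_bdd (l := 𝓝[>] (0:ℝ)) (isCompact_closedBall x0 ρ)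
      (F := fun ε x => if 0 < ε then vt ε W x ^ (p - 1) * φ x else 0)
      (G := fun x => W x ^ (p - 1) * φ x) (M := M ^ (p - 1) * |Mφ|) ?_ ?_ ?_ ?_
    · refine key.congr' ?_
      filter_upwards [self_mem_nhdsWithin] with ε hε
      simp only [if_pos (show (0:ℝ) < ε from hε)]
    · intro ε
      by_cases hε : 0 < ε
      · simp only [if_pos hε]
        have : Continuous (vt ε W) := (tr_contDiff hε).continuous.comp hWc
        exact ((this.rpow_const (fun _ => Or.inr (by linarith))).mul
          hφC.continuous).aestronglyMeasurable
      · simp only [if_neg hε]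
        exact aestronglyMeasurable_const
    · intro ε x
      by_cases hε : 0 < ε
      · simp only [if_pos hε]
        have h0 : 0 ≤ vt ε W x := tr_nonneg hε _
        rw [abs_mul, abs_of_nonneg (Real.rpow_nonneg h0 _)]
        refine mul_le_mul (Real.rpow_le_rpow h0 ((tr_le hε (hW0 x)).trans (hWM x)) (by linarith))
          ((hMφ x).trans (le_abs_self _)) (abs_nonneg _) (by positivity)
      · simp only [if_neg hε, abs_zero]; positivity
    · intro ε x hx
      rw [image_eq_zero_of_notMem_tsupport (fun hh => hx (hφs hh))]; simp
    · refine Eventually.of_forall fun x => ?_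
      have h3 := ((tr_tendsto (hW0 x)).rpow_const (p := p - 1) (Or.inr (by linarith))).mul_const (φ x)
      refine h3.congr' ?_
      filter_upwards [self_mem_nhdsWithin] with ε hε
      rw [if_pos (show (0:ℝ) < ε from hε)]; rfl
  set κ := (α * ∫ x, W x ^ (p - 1) * φ x) - I with hκ
  have hκ0 : 0 < κ := by rw [hκ]; linarith
  have hp0 : 0 < p := by linarith
  have hη : 0 < p * t * (κ / 2) := by positivity
  have e1 := h.J_small hp hη
  have e2 : ∀ᶠ ε in 𝓝[>] (0:ℝ), I + κ / 2 < α * ∫ x, vt ε W x ^ (p - 1) * φ x :=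
    (hεlim.const_mul α).eventually_const_lt (by linarith)
  have e3 : ∀ᶠ ε in 𝓝[>] (0:ℝ), ε < δ :=
    (eventually_lt_nhds hδ).filter_mono nhdsWithin_le_nhds
  obtain ⟨ε, hJ, hIε, hεδ, hε⟩ := (e1.and (e2.and (e3.and self_mem_nhdsWithin))).exists
  replace hε : 0 < ε := hε
  -- the truncated polarization
  have hwe : vt ε W = Pol e s (vt ε v) := funext fun x => (Pol_tr hε e s v x).symm
  have hrε : ∀ x y, ‖x‖ = ‖y‖ → vt ε v x = vt ε v y := fun x y hxy => by
    unfold vt; rw [h.rad x y hxy]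
  obtain ⟨C1, hC1⟩ := h.vt_lip hε
  have hwL : LipschitzWith C1 (vt ε W) := by rw [hwe]; exact Pol_lip hrε hC1
  have hwcpt : HasCompactSupport (vt ε W) := by rw [hwe]; exact Pol_cpt (h.vt_cpt hε)
  have hwE : ∫ x, ‖gradient (vt ε W) x‖ ^ p = ∫ x, ‖gradient (vt ε v) x‖ ^ p := by
    rw [hwe]; exact Pol_energy he0 hs.ne' hrε (h.vt_contDiff hε) (h.vt_cpt hε) hp
  have hw0 : ∀ x, 0 ≤ vt ε W x := fun x => tr_nonneg hε _
  have hwP : ∫ x, vt ε W x ^ p = ∫ x, vt ε v x ^ p := by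
    have := Pol_pow (e := e) (s := s) hrε (h.vt_contDiff hε).continuous (h.vt_cpt hε) hp
    rw [← hwe] at this
    have k1 : ∀ x, |vt ε W x| = vt ε W x := fun x => abs_of_nonneg (hw0 x)
    have k2 : ∀ x, |vt ε v x| = vt ε v x := fun x => abs_of_nonneg (tr_nonneg hε _)
    simpa only [k1, k2] using this
  have hwg : ∀ᵐ x : E, x ∈ closedBall x0 ρ → gradient (vt ε W) x = gfld e s v x := by
    filter_upwards [hwL.ae_differentiableAt] with x hx hxb
    obtain ⟨k1, k2, k3, -⟩ := hB x (hcb2 hxb)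
    have hd1 : Differentiable ℝ (vt ε v) := (h.vt_contDiff hε).differentiable one_ne_zero
    have hd2 : DifferentiableAt ℝ (fun y => vt ε v (y - s • e)) x :=
      (hd1.comp (differentiable_id.sub_const (s • e))) x
    have hev : ∀ᶠ y in 𝓝 x, ‖y‖ < ‖y - s • e‖ :=
      ContinuousAt.eventually_lt (by fun_prop) (by fun_prop) k3
    rw [gradient_max (hd1 x) hd2 hx (by
      filter_upwards [hev] with y hy
      rw [hwe, Pol, if_pos hy.le]), gradient_comp_sub, h.gradient_vt hε, h.gradient_vt hε,
      trd_of_ge hε (by linarith), trd_of_ge hε (by linarith), one_smul, one_smul]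
    unfold gfld vt
    rw [tr_of_ge hε (by linarith), tr_of_ge hε (by linarith)]
    simp only [sub_lt_sub_iff_right]
  set ψ : E → ℝ := fun x => vt ε W x + t * φ x with hψ
  have htφ : LipschitzWith (Real.nnabs t * C) fun x => t * φ x := by
    refine LipschitzWith.of_dist_le_mul fun x y => ?_
    rw [Real.dist_eq, ← mul_sub, abs_mul, NNReal.coe_mul, mul_assoc, Real.coe_nnabs]
    gcongr
    exact hφC.dist_le_mul x y
  have hψL : LipschitzWith (C1 + Real.nnabs t * C) ψ := hwL.add htφ
  have hψcpt : HasCompactSupport ψ := hwcpt.add hφcpt.mul_left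
  refine ⟨ψ, _, hψL, hψcpt, ?_, ?_⟩
  · have k1 : tsupport ψ ⊆ {x | ε ≤ W x} ∪ closedBall x0 ρ := by
      refine closure_minimal (fun x hx => ?_)
        ((isClosed_le continuous_const hWc).union isClosed_closedBall)
      by_contra hcon
      rw [mem_union, not_or] at hcon
      refine hx ?_
      have k2 : vt ε W x = 0 := tr_of_le hε (le_of_lt (not_le.1 hcon.1))
      have k3 : φ x = 0 := image_eq_zero_of_notMem_tsupport fun hh => hcon.2 (hφs hh)
      simp only [hψ, k2, k3]; ring
    intro x hx
    rcases k1 hx with k | k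
    · exact lt_of_lt_of_le hε k
    · obtain ⟨k1, k2, k3, -⟩ := hB x (hcb2 k)
      show 0 < W x
      rw [hW, Pol, if_pos k3.le]
      exact lt_max_of_lt_left (by linarith)
  · have j1 : Integrable fun x => ‖gradient (vt ε W) x‖ ^ p := by
      refine integrable_of_bdd (M := (C1 : ℝ) ^ p) hwcpt ?_ (fun x => ?_) (fun x hx => ?_)
      · exact ((measurable_gradient _).norm.pow_const p).aestronglyMeasurable
      · rw [abs_of_nonneg (by positivity)]
        exact Real.rpow_le_rpow (norm_nonneg _) (norm_gradient_le_of_lip hwL x) hp0.le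
      · rw [gradient_eq_zero_of_notMem hx, norm_zero, Real.zero_rpow (by linarith)]
    have j2 : Integrable fun x => ‖gradient ψ x‖ ^ p := by
      refine integrable_of_bdd (M := ((C1 + Real.nnabs t * C : ℝ≥0) : ℝ) ^ p) hψcpt ?_
        (fun x => ?_) (fun x hx => ?_)
      · exact ((measurable_gradient _).norm.pow_const p).aestronglyMeasurable
      · rw [abs_of_nonneg (by positivity)]
        exact Real.rpow_le_rpow (norm_nonneg _) (norm_gradient_le_of_lip hψL x) hp0.le
      · rw [gradient_eq_zero_of_notMem hx, norm_zero, Real.zero_rpow (by linarith)]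
    have j3 : Integrable fun x => ⟪Afld p (gfld e s v x + t • gradient φ x), gradient φ x⟫ :=
      integrable_of_bdd (isCompact_closedBall x0 ρ) (hmeas t) (hbd t ht0.le ht1) (hz t)
    have m1 : ∫ x, ‖gradient ψ x‖ ^ p ≤ (∫ x, ‖gradient (vt ε W) x‖ ^ p) + p * t * I := by
      rw [hI, ← integral_const_mul, ← integral_add j1 (j3.const_mul _)]
      refine integral_mono_ae j2 (j1.add (j3.const_mul _)) ?_
      filter_upwards [hwg, hwL.ae_differentiableAt, hφC.ae_differentiableAt] with x k1 k2 k3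
      have hgr : gradient ψ x = gradient (vt ε W) x + t • gradient φ x := by
        have : fderiv ℝ ψ x = fderiv ℝ (vt ε W) x + t • fderiv ℝ φ x := by
          rw [hψ, fderiv_fun_add k2 (k3.const_mul t), fderiv_const_mul k3]
        unfold gradient
        rw [this, map_add, map_smul]
      have k4 := norm_pow_convex hp (gradient (vt ε W) x) (gradient ψ x)
      rw [hgr, add_sub_cancel_left, inner_smul_right] at k4
      have k5 : ⟪Afld p (gradient (vt ε W) x + t • gradient φ x), gradient φ x⟫ =
          ⟪Afld p (gfld e s v x + t • gradient φ x), gradient φ x⟫ := by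
        by_cases hx : x ∈ closedBall x0 ρ
        · rw [k1 hx]
        · rw [gradient_eq_zero_of_notMem (fun hh => hx (hφs hh)), inner_zero_right,
            inner_zero_right]
      rw [k5] at k4
      rw [hgr]
      linarith
    have hψ0 : ∀ x, 0 ≤ ψ x := fun x => add_nonneg (hw0 x) (mul_nonneg ht0.le (hφ0 x))
    have l1 : Integrable fun x => vt ε W x ^ p := by
      refine (hwL.continuous.rpow_const (fun _ => Or.inr hp0.le)).integrable_of_hasCompactSupport ?_
      refine hwcpt.mono fun x hx hx' => hx ?_
      simp only [hx']
      exact Real.zero_rpow (by linarith)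
    have l2 : Integrable fun x => vt ε W x ^ (p - 1) * φ x :=
      ((hwL.continuous.rpow_const (fun _ => Or.inr (by linarith))).mul
        hφC.continuous).integrable_of_hasCompactSupport hφcpt.mul_left
    have l3 : Integrable fun x => |ψ x| ^ p := by
      refine (hψL.continuous.abs.rpow_const
        (fun _ => Or.inr hp0.le)).integrable_of_hasCompactSupport ?_
      refine hψcpt.mono fun x hx hx' => hx ?_
      simp only [hx', abs_zero]
      exact Real.zero_rpow (by linarith)
    have m2 : (∫ x, vt ε W x ^ p) + p * t * (∫ x, vt ε W x ^ (p - 1) * φ x) ≤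
        ∫ x, |ψ x| ^ p := by
      rw [← integral_const_mul, ← integral_add l1 (l2.const_mul _)]
      refine integral_mono (l1.add (l2.const_mul _)) l3 fun x => ?_
      have := pow_convex hp (hw0 x) (mul_nonneg ht0.le (hφ0 x))
      simp only [abs_of_nonneg (hψ0 x)]
      simp only [hψ]
      linarith
    have m3 := mul_le_mul_of_nonneg_left m2 hα.le
    rw [hwE] at m1
    rw [hwP] at m3
    have m4 := mul_lt_mul_of_pos_left hIε (mul_pos hp0 ht0)
    linarith

end PartEight


section PartI
open scoped NNReal
set_option linter.unusedSectionVars false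
set_option linter.unusedVariables false
variable {E : Type*} [NormedAddCommGroup E] [InnerProductSpace ℝ E] [FiniteDimensional ℝ E]
  [MeasurableSpace E] [BorelSpace E]

theorem norm_gradient_comp_smul_sub (f : E → ℝ) {c : ℝ} (hc : 0 < c) (z x : E) :
    ‖gradient (fun x => f (c • (x - z))) x‖ = c * ‖gradient f (c • (x - z))‖ := by
  rw [norm_gradient_eq, norm_gradient_eq]
  have h1 : fderiv ℝ (fun x => f (c • (x - z))) x
      = fderiv ℝ (fun y => f (c • y)) (x - z) :=
    fderiv_comp_sub (𝕜 := ℝ) (f := fun y => f (c • y)) z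
  rw [h1]
  have h2 := fderiv_comp_smul (𝕜 := ℝ) (f := f) (x := x - z) c
  rw [h2, norm_smul, Real.norm_eq_abs, abs_of_pos hc]

theorem integral_comp_smul_sub (f : E → ℝ) (c : ℝ) (z : E) :
    ∫ x, f (c • (x - z)) = |(c ^ Module.finrank ℝ E)⁻¹| * ∫ x, f x := by
  rw [integral_sub_right_eq_self (fun x => f (c • x)) z, Measure.integral_comp_smul]
  rfl

theorem Sol.scale [Nontrivial E] {p α : ℝ} (hp : 1 < p) {v : E → ℝ} (h : Sol p α v)
    {a : ℝ} (hva : ∀ x, v x ≠ 0 → ‖x‖ ≤ a) {κ : ℝ} (hκ : 1 < κ) (z : E) :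
    ∃ (ψ : E → ℝ) (C : ℝ≥0), LipschitzWith C ψ ∧ HasCompactSupport ψ ∧
      tsupport ψ ⊆ closedBall z (κ * a) ∧
      ∫ x, ‖gradient ψ x‖ ^ p < α * ∫ x, |ψ x| ^ p := by
  have hα := h.alpha_pos hp
  have hI := h.int_pos hp
  have hκ0 : 0 < κ := by linarith
  have hc0 : 0 < κ⁻¹ := by positivity
  have hq : 1 < κ ^ p := Real.one_lt_rpow hκ (by linarith)
  set q := κ ^ p with hqd
  set I := ∫ x, v x ^ p with hId
  set η := (q - 1) * (α * I) / 4 with hη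
  have hη0 : 0 < η := by
    have : 0 < q - 1 := by linarith
    positivity
  have e1' := h.J_small hp hη0
  have e2' := (h.tendsto_vt_pow hp).eventually_const_lt (show I / 2 < I by linarith)
  obtain ⟨ε, hJ, hI2, hε⟩ := (e1'.and (e2'.and self_mem_nhdsWithin)).exists
  have hε : 0 < ε := hε
  obtain ⟨C, hC⟩ := h.vt_lip hε
  have hsupp : tsupport (fun x => vt ε v (κ⁻¹ • (x - z))) ⊆ closedBall z (κ * a) := by
    apply closure_minimal _ isClosed_closedBall
    intro x hx
    have h1 : κ⁻¹ • (x - z) ∈ tsupport (vt ε v) := subset_tsupport _ hx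
    have h2 : ε ≤ v (κ⁻¹ • (x - z)) := h.tsupport_vt hε h1
    have h3 := hva _ (hε.trans_le h2).ne'
    rw [norm_smul, Real.norm_eq_abs, abs_of_pos hc0, inv_mul_le_iff₀ hκ0] at h3
    rwa [mem_closedBall, dist_eq_norm]
  refine ⟨fun x => vt ε v (κ⁻¹ • (x - z)), C * ‖κ⁻¹‖₊, ?_, ?_, hsupp, ?_⟩
  · have hl : LipschitzWith ‖κ⁻¹‖₊ (fun x : E => κ⁻¹ • (x - z)) := by
      apply LipschitzWith.of_dist_le_mul
      intro x y
      rw [dist_smul₀, dist_sub_right]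
      rfl
    exact hC.comp hl
  · exact HasCompactSupport.of_support_subset_isCompact (isCompact_closedBall z (κ * a))
      ((subset_tsupport _).trans hsupp)
  · simp only [norm_gradient_comp_smul_sub _ hc0]
    rw [integral_comp_smul_sub (fun y => (κ⁻¹ * ‖gradient (vt ε v) y‖) ^ p) κ⁻¹ z,
      integral_comp_smul_sub (fun y => |vt ε v y| ^ p) κ⁻¹ z]
    have hD : 0 < |((κ⁻¹) ^ Module.finrank ℝ E)⁻¹| := by positivity
    have h1 : ∀ y, (κ⁻¹ * ‖gradient (vt ε v) y‖) ^ p = q⁻¹ * ‖gradient (vt ε v) y‖ ^ p := by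
      intro y
      rw [Real.mul_rpow hc0.le (norm_nonneg _), Real.inv_rpow hκ0.le]
    have h2 : ∀ y, |vt ε v y| ^ p = vt ε v y ^ p := fun y => by
      rw [abs_of_nonneg (show 0 ≤ vt ε v y from tr_nonneg hε _)]
    simp only [h1, h2]
    rw [integral_const_mul]
    rw [mul_left_comm α]
    apply mul_lt_mul_of_pos_left _ hD
    rw [inv_mul_lt_iff₀ (by linarith)]
    refine hJ.trans_le ?_
    rw [hη]
    have : (q - 1) * (α * I) / 4 ≤ (q-1) * (α * ∫ x, vt ε v x ^ p) := by
      have : α * I / 4 ≤ α * ∫ x, vt ε v x ^ p := by nlinarith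
      nlinarith
    linarith
end PartI


section PartJ
open scoped NNReal
set_option linter.unusedSectionVars false
set_option linter.unusedVariables false
variable {E : Type*} [NormedAddCommGroup E] [InnerProductSpace ℝ E] [FiniteDimensional ℝ E]
  [MeasurableSpace E] [BorelSpace E]

/-- `V` carries a smooth test function with Rayleigh quotient below `α`. -/
def Good (p α : ℝ) (V : Set E) : Prop :=
  ∃ f : E → ℝ, ContDiff ℝ (⊤ : ℕ∞) f ∧ HasCompactSupport f ∧ tsupport f ⊆ V ∧
    ∫ x, ‖gradient f x‖ ^ p < α * ∫ x, |f x| ^ p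

theorem Pol_outer {e : E} {s a R : ℝ} {w : E → ℝ}
    (hw : ∀ x, w x ≠ 0 → a < ‖x‖ ∧ ‖x‖ < R) {x : E} (hx : 0 < Pol e s w x) :
    a < ‖x - s • e‖ ∧ ‖x‖ < R := by
  unfold Pol at hx
  split_ifs at hx with h
  · rcases lt_max_iff.1 hx with k | k
    · have := hw _ k.ne'
      exact ⟨by linarith, this.2⟩
    · have := hw _ k.ne'
      exact ⟨this.1, by linarith⟩
  · have := hw _ (lt_min_iff.1 hx).1.ne'
    have := hw _ (lt_min_iff.1 hx).2.ne'
    exact ⟨by linarith, by linarith⟩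

theorem Pol_inner {e : E} {s a R : ℝ} {v : E → ℝ} (hr : ∀ x y, ‖x‖ = ‖y‖ → v x = v y)
    (hv : ∀ x, v x ≠ 0 → R < ‖x‖ ∧ ‖x‖ ≤ a) {x : E} (hx : 0 < Pol e s v (sg e s x)) :
    R < ‖x‖ ∧ ‖x - s • e‖ ≤ a := by
  rw [Pol_sg hr] at hx
  split_ifs at hx with h
  · rcases lt_max_iff.1 hx with k | k
    · have := hv _ k.ne'
      exact ⟨by linarith, by linarith⟩
    · have := hv _ k.ne'
      exact ⟨by linarith, by linarith⟩
  · have := hv _ (lt_min_iff.1 hx).1.ne'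
    have := hv _ (lt_min_iff.1 hx).2.ne'
    exact ⟨by linarith, by linarith⟩

theorem norm_sub_smul_bounds {e : E} (he : ‖e‖ = 1) {s : ℝ} (hs : 0 < s) (x : E) :
    ‖x‖ ≤ ‖x - s • e‖ + s ∧ ‖x - s • e‖ ≤ ‖x‖ + s := by
  have h1 : ‖s • e‖ = s := by rw [norm_smul, he, mul_one, Real.norm_eq_abs, abs_of_pos hs]
  have h2 := norm_sub_norm_le x (s • e)
  have h3 := norm_sub_le x (s • e)
  constructor <;> linarith

theorem annulus_pair [Nontrivial E] {p α β : ℝ} (hp : 1 < p) {v w : E → ℝ} (hv : Sol p α v)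
    (hw : Sol p β w) {e e' : E} (he : ‖e‖ = 1) (he' : ‖e'‖ = 1) (hee : ⟪e, e'⟫ = 0)
    {R0 a R1 : ℝ} (h0 : 0 < R0) (h0a : R0 < a) (ha1 : a < R1)
    (hvs : ∀ x, v x ≠ 0 → R0 < ‖x‖ ∧ ‖x‖ ≤ a) (hws : ∀ x, w x ≠ 0 → a < ‖x‖ ∧ ‖x‖ < R1) :
    ∃ V W : Set E, IsOpen V ∧ IsOpen W ∧ Disjoint V W ∧ V ⊆ {x | R0 < ‖x‖ ∧ ‖x‖ < R1} ∧
      W ⊆ {x | R0 < ‖x‖ ∧ ‖x‖ < R1} ∧ Good p α V ∧ Good p β W := by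
  obtain ⟨s, hs, hsm⟩ := exists_between (show 0 < min R0 (min (a - R0) (R1 - a)) from
    lt_min h0 (lt_min (by linarith) (by linarith)))
  obtain ⟨hs0, hsm⟩ := lt_min_iff.1 hsm
  obtain ⟨hs1, hs2⟩ := lt_min_iff.1 hsm
  have hopen : ∀ {u : E → ℝ}, Continuous u → IsOpen {x | 0 < u x} :=
    fun hu => isOpen_lt continuous_const hu
  have hcv : Continuous fun x => Pol e s v (sg e s x) :=
    (Pol_cont hv.rad hv.cont).comp (isometry_sg e s).continuous
  have hcw := Pol_cont (e := e) (s := s) hw.rad hw.cont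
  obtain ⟨ψ2, C2, l2, c2, t2, j2⟩ := hw.kink hp he he' hee hs
    (fun x hx => by have := hws x hx; linarith)
  obtain ⟨ψ1, C1, l1, c1, t1, j1⟩ := hv.kink hp he he' hee hs
    (fun x hx => by have := hvs x hx; linarith)
  refine ⟨{x | 0 < Pol e s v (sg e s x)}, {x | 0 < Pol e s w x}, hopen hcv, hopen hcw,
    ?_, ?_, ?_, ?_, ?_⟩
  · rw [Set.disjoint_left]
    intro x hx hx'
    have h1 := Pol_inner hv.rad hvs hx
    have h2 := Pol_outer hws hx'
    linarith
  · intro x hx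
    have h1 := Pol_inner hv.rad hvs hx
    have h2 := norm_sub_smul_bounds he hs x
    exact ⟨h1.1, by linarith⟩
  · intro x hx
    have h1 := Pol_outer hws hx
    have h2 := norm_sub_smul_bounds he hs x
    exact ⟨by linarith, h1.2⟩
  · have hsup : tsupport (fun x => ψ1 (sg e s x)) ⊆ (sg e s) ⁻¹' tsupport ψ1 :=
      closure_minimal (fun x hx => subset_tsupport ψ1 hx)
        ((isClosed_tsupport ψ1).preimage (isometry_sg e s).continuous)
    refine smooth_of_lip hp (C := C1) (ψ := fun x => ψ1 (sg e s x)) ?_ ?_ (hopen hcv) ?_ ?_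
    · have := l1.comp (isometry_sg e s).lipschitz
      rwa [mul_one] at this
    · refine HasCompactSupport.of_support_subset_isCompact
        (K := sg e s '' tsupport ψ1) (c1.isCompact.image (isometry_sg e s).continuous) ?_
      intro x hx
      exact ⟨sg e s x, subset_tsupport _ hx, sg_sg e s x⟩
    · exact fun x hx => t1 (hsup hx)
    · simp only [norm_gradient_sg]
      rw [integral_sg e s (fun x => ‖gradient ψ1 x‖ ^ p), integral_sg e s (fun x => |ψ1 x| ^ p)]
      exact j1
  · exact smooth_of_lip hp l2 c2 (hopen hcw) t2 j2

theorem ball_pair [Nontrivial E] {p α β : ℝ} (hp : 1 < p) {v w : E → ℝ} (hv : Sol p α v)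
    (hw : Sol p β w) {e e' : E} (he : ‖e‖ = 1) (he' : ‖e'‖ = 1) (hee : ⟪e, e'⟫ = 0)
    {a R1 : ℝ} (h0a : 0 < a) (ha1 : a < R1)
    (hvs : ∀ x, v x ≠ 0 → ‖x‖ ≤ a) (hws : ∀ x, w x ≠ 0 → a < ‖x‖ ∧ ‖x‖ < R1) :
    ∃ V W : Set E, IsOpen V ∧ IsOpen W ∧ Disjoint V W ∧ V ⊆ {x | ‖x‖ < R1} ∧
      W ⊆ {x | ‖x‖ < R1} ∧ Good p α V ∧ Good p β W := by
  obtain ⟨s, hs, hsm⟩ := exists_between (show 0 < min a (R1 - a) from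
    lt_min h0a (by linarith))
  obtain ⟨hs0, hs1⟩ := lt_min_iff.1 hsm
  have hcw := Pol_cont (e := e) (s := s) hw.rad hw.cont
  have hWo : IsOpen {x | 0 < Pol e s w x} := isOpen_lt continuous_const hcw
  obtain ⟨ψ2, C2, l2, c2, t2, j2⟩ := hw.kink hp he he' hee hs
    (fun x hx => by have := hws x hx; linarith)
  have hcn : Continuous fun x : E => ‖x - s • e‖ := by fun_prop
  obtain ⟨b, hab, hb⟩ : ∃ b, a < b ∧ ∀ x ∈ tsupport ψ2, b ≤ ‖x - s • e‖ := by
    rcases (tsupport ψ2).eq_empty_or_nonempty with k | k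
    · exact ⟨a + 1, by linarith, by simp [k]⟩
    · obtain ⟨y, hy, hmin⟩ := c2.isCompact.exists_isMinOn k hcn.continuousOn
      exact ⟨‖y - s • e‖, (Pol_outer hws (t2 hy)).1, fun x hx => hmin hx⟩
  obtain ⟨b', hb1, hb2⟩ := exists_between (show a < min b (R1 - s) from
    lt_min hab (by linarith))
  obtain ⟨hb2, hb3⟩ := lt_min_iff.1 hb2
  obtain ⟨κ, hκ1, hκ2⟩ := exists_between (show 1 < b' / a from (one_lt_div h0a).2 hb1)
  obtain ⟨ψ1, C1, l1, c1, t1, j1⟩ := hv.scale hp hvs hκ1 (s • e)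
  rw [lt_div_iff₀ h0a] at hκ2
  refine ⟨ball (s • e) b', {x | 0 < Pol e s w x} \ closedBall (s • e) b', isOpen_ball,
    hWo.sdiff isClosed_closedBall, ?_, ?_, ?_, ?_, ?_⟩
  · rw [Set.disjoint_left]
    intro x hx hx'
    exact hx'.2 (ball_subset_closedBall hx)
  · intro x hx
    rw [mem_ball, dist_eq_norm] at hx
    have h2 := norm_sub_smul_bounds he hs x
    show ‖x‖ < R1
    linarith
  · intro x hx
    exact (Pol_outer hws hx.1).2
  · exact smooth_of_lip hp l1 c1 isOpen_ball
      (t1.trans (closedBall_subset_ball hκ2)) j1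
  · refine smooth_of_lip hp l2 c2 (hWo.sdiff isClosed_closedBall) ?_ j2
    intro x hx
    refine ⟨t2 hx, fun hx' => ?_⟩
    rw [mem_closedBall, dist_eq_norm] at hx'
    have := hb x hx
    linarith

theorem exists_split [Nontrivial E] {P M : Set E} (hP : IsConnected P) (hM : IsConnected M)
    (hPo : IsOpen P) (hMo : IsOpen M) (hd : ∀ x ∈ P, ∀ y ∈ M, ‖x‖ ≠ ‖y‖)
    {x0 y0 : E} (hx0 : x0 ∈ P) (hy0 : y0 ∈ M) (h00 : ‖x0‖ < ‖y0‖) :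
    ∃ a, (∃ x ∈ P, x ≠ 0 ∧ ‖x‖ ≤ a) ∧ (∀ x ∈ P, ‖x‖ ≤ a) ∧ (∀ y ∈ M, a < ‖y‖) := by
  have oP : OrdConnected (norm '' P) :=
    (hP.isPreconnected.image _ continuous_norm.continuousOn).ordConnected
  have oM : OrdConnected (norm '' M) :=
    (hM.isPreconnected.image _ continuous_norm.continuousOn).ordConnected
  have h1 : ∀ x ∈ P, ‖x‖ < ‖y0‖ := by
    intro x hx
    by_contra hc
    push Not at hc
    obtain ⟨z, hz, hz'⟩ := oP.out (mem_image_of_mem _ hx0) (mem_image_of_mem _ hx)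
      (⟨h00.le, hc⟩ : ‖y0‖ ∈ Icc ‖x0‖ ‖x‖)
    exact hd z hz y0 hy0 hz'
  have h2 : ∀ x ∈ P, ∀ y ∈ M, ‖x‖ < ‖y‖ := by
    intro x hx y hy
    by_contra hc
    push Not at hc
    obtain ⟨z, hz, hz'⟩ := oM.out (mem_image_of_mem _ hy) (mem_image_of_mem _ hy0)
      (⟨hc, (h1 x hx).le⟩ : ‖x‖ ∈ Icc ‖y‖ ‖y0‖)
    exact hd x hx z hz hz'.symm
  have hbdd : BddAbove (norm '' P) := ⟨‖y0‖, by rintro _ ⟨x, hx, rfl⟩; exact (h1 x hx).le⟩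
  have hle : ∀ x ∈ P, ‖x‖ ≤ sSup (norm '' P) :=
    fun x hx => le_csSup hbdd (mem_image_of_mem _ hx)
  obtain ⟨x1, hx1, hx1'⟩ := (dense_compl_singleton (0 : E)).inter_open_nonempty P hPo ⟨x0, hx0⟩
  refine ⟨sSup (norm '' P), ⟨x1, hx1, hx1', hle x1 hx1⟩, hle, ?_⟩
  intro y hy
  have hy' : 0 < ‖y‖ := (norm_nonneg _).trans_lt (h2 x0 hx0 y hy)
  have hc : Tendsto (fun t : ℝ => (1 - t) • y) (𝓝[>] 0) (𝓝 y) := by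
    have : Continuous fun t : ℝ => (1 - t) • y := by fun_prop
    have := this.tendsto 0
    simp only [sub_zero, one_smul] at this
    exact this.mono_left nhdsWithin_le_nhds
  obtain ⟨t, ht, ht0, ht1⟩ := ((hc.eventually (hMo.mem_nhds hy)).and
    (Ioo_mem_nhdsGT (zero_lt_one (α := ℝ)))).exists
  have h3 : ‖(1 - t) • y‖ < ‖y‖ := by
    rw [norm_smul, Real.norm_eq_abs, abs_of_pos (by linarith)]
    nlinarith
  refine lt_of_le_of_lt (csSup_le ⟨_, mem_image_of_mem _ hx0⟩ ?_) h3
  rintro _ ⟨x, hx, rfl⟩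
  exact (h2 x hx _ ht).le

theorem mkSol {p α β : ℝ} (hp : 1 < p) {Ω : Set E} (hΩo : IsOpen Ω)
    (hΩb : Bornology.IsBounded Ω) (hΩr : ∀ x y : E, ‖x‖ = ‖y‖ → x ∈ Ω → y ∈ Ω) {u : E → ℝ}
    (hcont : ContinuousOn u (closure Ω)) (hC1 : ContDiffOn ℝ 1 u Ω)
    (hrad : ∀ x y : E, ‖x‖ = ‖y‖ → u x = u y) (hbd : ∀ x ∈ frontier Ω, u x = 0)
    (hne : ∃ x ∈ Ω, 0 < u x)
    (hweak : ∀ φ : E → ℝ, ContDiff ℝ (⊤ : ℕ∞) φ → HasCompactSupport φ →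
      tsupport φ ⊆ Ω →
      ∫ x in Ω, ‖gradient u x‖ ^ (p - 2) * ⟪gradient u x, gradient φ x⟫ =
        ∫ x in Ω, (α * max (u x) 0 ^ (p - 1) - β * max (-u x) 0 ^ (p - 1)) * φ x) :
    Sol p α (Ω.indicator fun x => max (u x) 0) := by
  have hset : {x | 0 < Ω.indicator (fun x => max (u x) 0) x} = {x ∈ Ω | 0 < u x} := by
    ext x
    by_cases hx : x ∈ Ω <;> simp [hx]
  have hopen : IsOpen {x ∈ Ω | 0 < u x} :=
    (hcont.mono subset_closure).isOpen_inter_preimage hΩo isOpen_Ioi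
  have hev : ∀ x ∈ {x ∈ Ω | 0 < u x}, Ω.indicator (fun x => max (u x) 0) =ᶠ[𝓝 x] u := by
    intro x hx
    filter_upwards [hopen.mem_nhds hx] with y hy
    rw [indicator_of_mem hy.1, max_eq_left hy.2.le]
  refine ⟨?_, ?_, ?_, ?_, ?_, ?_, ?_⟩
  · exact continuous_indicator (fun x hx => by rw [hbd x hx, max_self])
      (hcont.sup continuousOn_const)
  · exact fun x => indicator_nonneg (fun _ _ => le_max_right _ _) x
  · intro x y hxy
    by_cases hx : x ∈ Ω
    · rw [indicator_of_mem hx, indicator_of_mem (hΩr x y hxy hx), hrad x y hxy]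
    · rw [indicator_of_notMem hx, indicator_of_notMem (fun hy => hx (hΩr y x hxy.symm hy))]
  · exact HasCompactSupport.of_support_subset_isCompact hΩb.isCompact_closure
      (fun x hx => subset_closure (by
        by_contra hc
        exact hx (indicator_of_notMem hc _)))
  · rw [hset]
    exact (hC1.mono (fun x hx => hx.1)).congr fun x hx => (hev x hx).eq_of_nhds
  · rw [hset]
    intro φ hφ hφc hφs
    have hφΩ : tsupport φ ⊆ Ω := hφs.trans fun x hx => hx.1
    have h0 : ∀ x, x ∉ {x ∈ Ω | 0 < u x} → φ x = 0 ∧ gradient φ x = 0 := fun x hx =>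
      ⟨image_eq_zero_of_notMem_tsupport fun h => hx (hφs h),
        gradient_eq_zero_of_notMem fun h => hx (hφs h)⟩
    have hw := hweak φ hφ hφc hφΩ
    rw [setIntegral_eq_integral_of_forall_compl_eq_zero,
      setIntegral_eq_integral_of_forall_compl_eq_zero] at hw
    · rw [← integral_const_mul]
      refine (integral_congr_ae (ae_of_all _ fun x => ?_)).trans
        (hw.trans (integral_congr_ae (ae_of_all _ fun x => ?_)))
      · beta_reduce
        by_cases hx : x ∈ {x ∈ Ω | 0 < u x}
        · have : gradient (Ω.indicator fun x => max (u x) 0) x = gradient u x := by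
            unfold gradient
            rw [(hev x hx).fderiv_eq]
          rw [this, Afld, real_inner_smul_left]
        · rw [(h0 x hx).2]; simp
      · beta_reduce
        by_cases hx : x ∈ {x ∈ Ω | 0 < u x}
        · rw [(hev x hx).eq_of_nhds, max_eq_left hx.2.le,
            max_eq_right (show -u x ≤ 0 by linarith [hx.2]),
            Real.zero_rpow (by linarith)]
          ring
        · rw [(h0 x hx).1]; simp
    · intro x hx
      rw [(h0 x fun h => hx h.1).1, mul_zero]
    · intro x hx
      rw [(h0 x fun h => hx h.1).2, inner_zero_right, mul_zero]
  · obtain ⟨x, hx, hx'⟩ := hne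
    exact ⟨x, by rw [indicator_of_mem hx]; exact lt_max_of_lt_left hx'⟩

theorem weak_neg {p α β : ℝ} {Ω : Set E} {u φ : E → ℝ}
    (h : ∫ x in Ω, ‖gradient u x‖ ^ (p - 2) * ⟪gradient u x, gradient φ x⟫ =
        ∫ x in Ω, (α * max (u x) 0 ^ (p - 1) - β * max (-u x) 0 ^ (p - 1)) * φ x) :
    ∫ x in Ω, ‖gradient (fun x => -u x) x‖ ^ (p - 2) *
        ⟪gradient (fun x => -u x) x, gradient φ x⟫ =
        ∫ x in Ω, (β * max (-u x) 0 ^ (p - 1) - α * max (- -u x) 0 ^ (p - 1)) * φ x := by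
  have hg : ∀ x, gradient (fun x => -u x) x = - gradient u x := fun x => by
    unfold gradient
    rw [fderiv_fun_neg, map_neg]
  simp only [hg, norm_neg, inner_neg_left, mul_neg, neg_neg]
  rw [integral_neg, h, ← integral_neg]
  congr 1
  ext x
  ring

/-- All conclusions, under the assumption that the positive part sits inside. -/
theorem pair_main [Nontrivial E] {e e' : E} (he : ‖e‖ = 1) (he' : ‖e'‖ = 1)
    (hee : ⟪e, e'⟫ = 0) {p α β : ℝ} (hp : 1 < p) {Ω : Set E}
    (hΩ : (∃ R₁ : ℝ, 0 < R₁ ∧ Ω = ball 0 R₁) ∨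
          (∃ R₀ R₁ : ℝ, 0 < R₀ ∧ R₀ < R₁ ∧ Ω = ball 0 R₁ \ closure (ball 0 R₀))) {u : E → ℝ}
    (hcont : ContinuousOn u (closure Ω)) (hC1 : ContDiffOn ℝ 1 u Ω)
    (hrad : ∀ x y : E, ‖x‖ = ‖y‖ → u x = u y) (hbd : ∀ x ∈ frontier Ω, u x = 0)
    (hpos : IsConnected {x ∈ Ω | 0 < u x})
    (hneg : IsConnected {x ∈ Ω | u x < 0})
    (hweak : ∀ φ : E → ℝ, ContDiff ℝ (⊤ : ℕ∞) φ → HasCompactSupport φ →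
      tsupport φ ⊆ Ω →
      ∫ x in Ω, ‖gradient u x‖ ^ (p - 2) * ⟪gradient u x, gradient φ x⟫ =
        ∫ x in Ω, (α * max (u x) 0 ^ (p - 1) - β * max (-u x) 0 ^ (p - 1)) * φ x)
    {x0 y0 : E} (hx0 : x0 ∈ {x ∈ Ω | 0 < u x}) (hy0 : y0 ∈ {x ∈ Ω | u x < 0})
    (h00 : ‖x0‖ < ‖y0‖) :
    ∃ V W : Set E, IsOpen V ∧ IsOpen W ∧ Disjoint V W ∧ V ⊆ Ω ∧ W ⊆ Ω ∧
      Good p α V ∧ Good p β W := by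
  have hΩo : IsOpen Ω := by
    rcases hΩ with ⟨R1, h1, rfl⟩ | ⟨R0, R1, h0, h1, rfl⟩
    · exact isOpen_ball
    · exact isOpen_ball.sdiff isClosed_closure
  have hΩb : Bornology.IsBounded Ω := by
    rcases hΩ with ⟨R1, h1, rfl⟩ | ⟨R0, R1, h0, h1, rfl⟩
    · exact isBounded_ball
    · exact isBounded_ball.subset sdiff_subset
  have hann : ∀ {R0 R1 : ℝ}, 0 < R0 →
      (ball 0 R1 \ closure (ball 0 R0) : Set E) = {x | R0 < ‖x‖ ∧ ‖x‖ < R1} := by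
    intro R0 R1 h
    ext x
    rw [closure_ball _ h.ne']
    simp [and_comm]
  have hΩr : ∀ x y : E, ‖x‖ = ‖y‖ → x ∈ Ω → y ∈ Ω := by
    intro x y hxy
    rcases hΩ with ⟨R1, h1, rfl⟩ | ⟨R0, R1, h0, h1, rfl⟩
    · simp [hxy]
    · rw [hann h0]; simp [hxy]
  have hv := mkSol hp hΩo hΩb hΩr hcont hC1 hrad hbd ⟨x0, hx0⟩ hweak
  have hw := mkSol (u := fun x => -u x) (α := β) (β := α) hp hΩo hΩb hΩr hcont.neg hC1.neg
    (fun x y hxy => by rw [hrad x y hxy]) (fun x hx => by rw [hbd x hx, neg_zero])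
    ⟨y0, hy0.1, neg_pos.2 hy0.2⟩ (fun φ h1 h2 h3 => weak_neg (hweak φ h1 h2 h3))
  obtain ⟨a, ⟨x1, hx1, hx1', hx1a⟩, hPa, hMa⟩ := exists_split hpos hneg
    ((hcont.mono subset_closure).isOpen_inter_preimage hΩo isOpen_Ioi)
    ((hcont.mono subset_closure).isOpen_inter_preimage hΩo isOpen_Iio)
    (fun x hx y hy hxy => by
      have := hrad x y hxy
      have h1 := hx.2
      have h2 := hy.2
      linarith) hx0 hy0 h00
  have ha : 0 < a := (norm_pos_iff.2 hx1').trans_le hx1a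
  have hvs : ∀ x, Ω.indicator (fun x => max (u x) 0) x ≠ 0 → x ∈ {x ∈ Ω | 0 < u x} := by
    intro x hx
    by_cases hxΩ : x ∈ Ω
    · refine ⟨hxΩ, ?_⟩
      rw [indicator_of_mem hxΩ] at hx
      by_contra hc
      exact hx (max_eq_right (not_lt.1 hc))
    · exact absurd (indicator_of_notMem hxΩ _) hx
  have hws : ∀ x, Ω.indicator (fun x => max (-u x) 0) x ≠ 0 → x ∈ {x ∈ Ω | u x < 0} := by
    intro x hx
    by_cases hxΩ : x ∈ Ω
    · refine ⟨hxΩ, ?_⟩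
      rw [indicator_of_mem hxΩ] at hx
      by_contra hc
      exact hx (max_eq_right (by linarith [not_lt.1 hc]))
    · exact absurd (indicator_of_notMem hxΩ _) hx
  rcases hΩ with ⟨R1, h1, hΩ⟩ | ⟨R0, R1, h0, h1, hΩ⟩
  · have hΩ' : Ω = {x : E | ‖x‖ < R1} := by rw [hΩ]; ext x; simp
    have hm : ∀ x ∈ Ω, ‖x‖ < R1 := fun x hx => by rw [hΩ'] at hx; exact hx
    have := ball_pair hp hv hw he he' hee ha ((hMa y0 hy0).trans (hm y0 hy0.1))
      (fun x hx => hPa x (hvs x hx))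
      (fun x hx => ⟨hMa x (hws x hx), hm x (hws x hx).1⟩)
    rwa [← hΩ'] at this
  · have hΩ' : Ω = {x : E | R0 < ‖x‖ ∧ ‖x‖ < R1} := by rw [hΩ, hann h0]
    have hm : ∀ x ∈ Ω, R0 < ‖x‖ ∧ ‖x‖ < R1 := fun x hx => by rw [hΩ'] at hx; exact hx
    have := annulus_pair hp hv hw he he' hee h0 ((hm x1 hx1.1).1.trans_le hx1a)
      ((hMa y0 hy0).trans (hm y0 hy0.1).2)
      (fun x hx => ⟨(hm x (hvs x hx).1).1, hPa x (hvs x hx)⟩)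
      (fun x hx => ⟨hMa x (hws x hx), (hm x (hws x hx).1).2⟩)
    rwa [← hΩ'] at this
end PartJ


theorem lam1_lt {N : ℕ} {p α : ℝ} (hp : 1 < p) {V : Set (EuclideanSpace ℝ (Fin N))}
    (h : Good p α V) : V.Nonempty ∧ lam1 p V < α := by
  obtain ⟨f, hf, hfc, hfs, hJ⟩ := h
  have hp0 : p ≠ 0 := by linarith
  have hne : ∃ x, f x ≠ 0 := by
    by_contra hc
    push Not at hc
    have h0 : f = fun _ => 0 := funext hc
    have hg : ∀ x, gradient f x = 0 := fun x => by
      rw [h0]; simp [gradient]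
    simp [hg, hc, Real.zero_rpow hp0] at hJ
  obtain ⟨x, hx⟩ := hne
  refine ⟨⟨x, hfs (subset_tsupport _ hx)⟩, ?_⟩
  have hpos : 0 < ∫ x, |f x| ^ p := by
    refine Continuous.integral_pos_of_hasCompactSupport_nonneg_nonzero (x := x) ?_ ?_ ?_ ?_
    · exact hf.continuous.abs.rpow_const fun x => Or.inr (by linarith)
    · exact hfc.comp_left (g := fun t : ℝ => |t| ^ p) (by simp [Real.zero_rpow hp0])
    · exact fun x => by positivity
    · exact (Real.rpow_pos_of_pos (abs_pos.2 hx) p).ne'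
  have h1 : ∫ x in V, ‖gradient f x‖ ^ p = ∫ x, ‖gradient f x‖ ^ p :=
    setIntegral_eq_integral_of_forall_compl_eq_zero fun x hx => by
      rw [gradient_eq_zero_of_notMem fun h => hx (hfs h), norm_zero, Real.zero_rpow hp0]
  have h2 : ∫ x in V, |f x| ^ p = ∫ x, |f x| ^ p :=
    setIntegral_eq_integral_of_forall_compl_eq_zero fun x hx => by
      rw [image_eq_zero_of_notMem_tsupport fun h => hx (hfs h), abs_zero, Real.zero_rpow hp0]
  unfold lam1
  refine lt_of_le_of_lt (csInf_le ⟨0, ?_⟩ ⟨f, hf, ?_, hfc, hfs, rfl⟩) ?_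
  · rintro r ⟨g, -, -, -, -, rfl⟩
    exact div_nonneg (integral_nonneg fun x => by positivity)
      (integral_nonneg fun x => by positivity)
  · rintro rfl
    exact hx rfl
  · rw [h1, h2, div_lt_iff₀ hpos]
    exact hJ

theorem stmt9 (N : ℕ) (hN : 2 ≤ N) (p : ℝ) (hp : 1 < p)
    (Ω : Set (EuclideanSpace ℝ (Fin N)))
    (hΩ : (∃ R₁ : ℝ, 0 < R₁ ∧ Ω = ball 0 R₁) ∨
          (∃ R₀ R₁ : ℝ, 0 < R₀ ∧ R₀ < R₁ ∧ Ω = ball 0 R₁ \ closure (ball 0 R₀)))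
    (α β : ℝ) (u : EuclideanSpace ℝ (Fin N) → ℝ)
    (hcont : ContinuousOn u (closure Ω))
    (hC1 : ContDiffOn ℝ 1 u Ω)
    (hrad : ∀ x y : EuclideanSpace ℝ (Fin N), ‖x‖ = ‖y‖ → u x = u y)
    (hbd : ∀ x ∈ frontier Ω, u x = 0)
    (hpos : IsConnected {x ∈ Ω | 0 < u x})
    (hneg : IsConnected {x ∈ Ω | u x < 0})
    (hweak : ∀ φ : EuclideanSpace ℝ (Fin N) → ℝ, ContDiff ℝ (⊤ : ℕ∞) φ → HasCompactSupport φ →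
      tsupport φ ⊆ Ω →
      ∫ x in Ω, ‖gradient u x‖ ^ (p - 2) * ⟪gradient u x, gradient φ x⟫ =
        ∫ x in Ω, (α * max (u x) 0 ^ (p - 1) - β * max (-u x) 0 ^ (p - 1)) * φ x) :
    ∃ Ω₁ Ω₂ : Set (EuclideanSpace ℝ (Fin N)),
      IsOpen Ω₁ ∧ IsOpen Ω₂ ∧ Ω₁.Nonempty ∧ Ω₂.Nonempty ∧ Disjoint Ω₁ Ω₂ ∧
      Ω₁ ⊆ Ω ∧ Ω₂ ⊆ Ω ∧ lam1 p Ω₁ < α ∧ lam1 p Ω₂ < β := by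
  have : Nontrivial (Fin N) := Fin.nontrivial_iff_two_le.2 hN
  have i0 : (⟨0, by omega⟩ : Fin N) ≠ ⟨1, by omega⟩ := by simp
  set e : EuclideanSpace ℝ (Fin N) := EuclideanSpace.single ⟨0, by omega⟩ (1 : ℝ) with hedef
  set e' : EuclideanSpace ℝ (Fin N) := EuclideanSpace.single ⟨1, by omega⟩ (1 : ℝ) with hedef'
  have he : ‖e‖ = 1 := by simp [hedef]
  have he' : ‖e'‖ = 1 := by simp [hedef']
  have hee : ⟪e, e'⟫ = 0 := by
    rw [hedef, hedef', EuclideanSpace.inner_single_left]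
    simp
  have : Nontrivial (EuclideanSpace ℝ (Fin N)) := ⟨e, 0, fun h => by simp [h] at he⟩
  obtain ⟨x0, hx0⟩ := hpos.nonempty
  obtain ⟨y0, hy0⟩ := hneg.nonempty
  have hxy : ‖x0‖ ≠ ‖y0‖ := fun h => by
    have h1 := hrad x0 y0 h
    have h2 := hx0.2
    have h3 := hy0.2
    linarith
  rcases lt_or_gt_of_ne hxy with h | h
  · obtain ⟨V, W, hV, hW, hd, hVs, hWs, gV, gW⟩ := pair_main he he' hee hp hΩ hcont hC1 hrad hbd
      hpos hneg hweak hx0 hy0 h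
    exact ⟨V, W, hV, hW, (lam1_lt hp gV).1, (lam1_lt hp gW).1, hd, hVs, hWs,
      (lam1_lt hp gV).2, (lam1_lt hp gW).2⟩
  · have k1 : {x ∈ Ω | 0 < -u x} = {x ∈ Ω | u x < 0} := by ext x; simp
    have k2 : {x ∈ Ω | -u x < 0} = {x ∈ Ω | 0 < u x} := by ext x; simp
    obtain ⟨V, W, hV, hW, hd, hVs, hWs, gV, gW⟩ := pair_main (u := fun x => -u x) (α := β)
      (β := α) he he' hee hp hΩ hcont.neg hC1.neg
      (fun x y hxy => by rw [hrad x y hxy]) (fun x hx => by rw [hbd x hx, neg_zero])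
      (by rw [k1]; exact hneg) (by rw [k2]; exact hpos)
      (fun φ h1 h2 h3 => weak_neg (hweak φ h1 h2 h3)) (x0 := y0) (y0 := x0)
      (by rw [k1]; exact hy0) (by rw [k2]; exact hx0) h
    exact ⟨W, V, hW, hV, (lam1_lt hp gW).1, (lam1_lt hp gV).1, hd.symm, hWs, hVs,
      (lam1_lt hp gW).2, (lam1_lt hp gV).2⟩
end

section
/- Let N ≥ 2, 0 < R₀ < R₁, p ∈ (1,∞) and s ∈ (0, R₁ − R₀). Let u be a first eigenfunction of the p-Laplacian on Ω_s. Then for every a ∈ ℝ^N \ {0} with ⟨a, e₁⟩ = 0 and every x ∈ Ω_s, u(x) = u(σ_a(x)), where σ_a(x) := x − 2(⟨a,x⟩/‖a‖²) a is the reflection in the hyperplane through the origin perpendicular to a. In particular, u(x₁, …, x_{i−1}, −x_i, x_{i+1}, …, x_N) = u(x) for every x ∈ Ω_s and every i = 2, …, N. -/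
open MeasureTheory Metric Set Filter
open scoped RealInnerProductSpace ENNReal Topology

/-- Picone-type pointwise inequality. -/
lemma picone_nonneg {E : Type*} [NormedAddCommGroup E] [InnerProductSpace ℝ E]
    {p : ℝ} (hp : 1 < p) {r : ℝ} (hr : 0 ≤ r) (X Y : E) :
    0 ≤ ‖X‖ ^ p - (p * r ^ (p - 1) * (‖Y‖ ^ (p - 2) * ⟪Y, X⟫) - (p - 1) * r ^ p * ‖Y‖ ^ p) ∧
    (‖X‖ ^ p - (p * r ^ (p - 1) * (‖Y‖ ^ (p - 2) * ⟪Y, X⟫) - (p - 1) * r ^ p * ‖Y‖ ^ p) = 0 →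
      X = r • Y) := by
  have hp0 : 0 < p := by linarith
  rcases eq_or_ne (r • Y) 0 with h0 | h0
  · have hz : ‖X‖ ^ p - (p * r ^ (p - 1) * (‖Y‖ ^ (p - 2) * ⟪Y, X⟫)
        - (p - 1) * r ^ p * ‖Y‖ ^ p) = ‖X‖ ^ p := by
      rcases smul_eq_zero.1 h0 with h | h
      · rw [h, Real.zero_rpow (by linarith), Real.zero_rpow (by linarith)]; ring
      · rw [h]; simp [Real.zero_rpow hp0.ne']
    rw [hz]
    refine ⟨by positivity, fun h => ?_⟩
    rw [h0]
    exact norm_eq_zero.1 ((Real.rpow_eq_zero (norm_nonneg _) hp0.ne').1 h)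
  · have hr0 : r ≠ 0 := fun h => h0 (by simp [h])
    have hY0 : Y ≠ 0 := fun h => h0 (by simp [h])
    have hrp : 0 < r := lt_of_le_of_ne hr hr0.symm
    have hYp : 0 < ‖Y‖ := norm_pos_iff.2 hY0
    set y := r * ‖Y‖ with hy
    have hyp : 0 < y := by positivity
    set t := ‖X‖ / y with ht
    have ht0 : 0 ≤ t := by positivity
    have hX : ‖X‖ = t * y := by rw [ht]; field_simp
    have e1 : ‖X‖ ^ p = t ^ p * y ^ p := by rw [hX, Real.mul_rpow ht0 hyp.le]
    have e2 : r ^ p * ‖Y‖ ^ p = y ^ p := by rw [hy, Real.mul_rpow hr hYp.le]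
    have e3 : r ^ (p - 1) * ‖Y‖ ^ (p - 2) * (‖Y‖ * ‖X‖) = y ^ p * t := by
      have a1 : r ^ p = r ^ (p - 1) * r := by
        rw [← Real.rpow_add_one hr0]; ring_nf
      have a2 : ‖Y‖ ^ p = ‖Y‖ ^ (p - 2) * ‖Y‖ * ‖Y‖ := by
        rw [← Real.rpow_add_one hYp.ne', ← Real.rpow_add_one hYp.ne']; ring_nf
      rw [← e2, a1, a2, hX, hy]; ring
    have key : ‖X‖ ^ p - (p * r ^ (p - 1) * (‖Y‖ ^ (p - 2) * ⟪Y, X⟫)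
        - (p - 1) * r ^ p * ‖Y‖ ^ p) = y ^ p * (t ^ p - (1 + p * (t - 1)))
        + p * r ^ (p - 1) * ‖Y‖ ^ (p - 2) * (‖Y‖ * ‖X‖ - ⟪Y, X⟫) := by
      have : (p - 1) * r ^ p * ‖Y‖ ^ p = (p - 1) * y ^ p := by rw [← e2]; ring
      rw [e1, this]
      linear_combination (-p) * e3
    have n1 : 0 ≤ t ^ p - (1 + p * (t - 1)) := by
      have := one_add_mul_self_le_rpow_one_add (s := t - 1) (by linarith) hp.le
      rw [add_sub_cancel] at this
      linarith
    have n2 : 0 ≤ ‖Y‖ * ‖X‖ - ⟪Y, X⟫ := by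
      linarith [real_inner_le_norm Y X]
    have m1 : 0 < y ^ p := by positivity
    have m2 : 0 < p * r ^ (p - 1) * ‖Y‖ ^ (p - 2) := by positivity
    rw [key]
    refine ⟨by positivity, fun h => ?_⟩
    have z1 : t ^ p - (1 + p * (t - 1)) = 0 := by
      nlinarith [mul_nonneg m1.le n1, mul_nonneg m2.le n2]
    have z2 : ‖Y‖ * ‖X‖ - ⟪Y, X⟫ = 0 := by
      rw [z1, mul_zero, zero_add] at h
      exact (mul_eq_zero.1 h).resolve_left m2.ne'
    have ht1 : t = 1 := by
      by_contra hne
      have := one_add_mul_self_lt_rpow_one_add (s := t - 1) (by linarith)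
        (sub_ne_zero.2 hne) hp
      rw [add_sub_cancel] at this
      linarith
    rw [ht1, one_mul, hy] at hX
    rw [← sub_eq_zero, ← norm_eq_zero, ← sq_eq_zero_iff, norm_sub_sq_real, norm_smul,
      Real.norm_of_nonneg hr, inner_smul_right, real_inner_comm, hX]
    rw [hX] at z2
    linear_combination (2 * r) * z2

/-- The truncated power is differentiable. -/
lemma hasDerivAt_posPow {p : ℝ} (hp : 1 < p) (t : ℝ) :
    HasDerivAt (fun t : ℝ => (max t 0) ^ p) (p * (max t 0) ^ (p - 1)) t := by
  rcases lt_trichotomy t 0 with h | h | h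
  · rw [max_eq_right h.le, Real.zero_rpow (by linarith), mul_zero]
    refine (hasDerivAt_const t (0 : ℝ)).congr_of_eventuallyEq ?_
    filter_upwards [Iio_mem_nhds h] with x hx
    rw [max_eq_right (le_of_lt hx), Real.zero_rpow (by linarith)]
  · subst h
    rw [← hasDerivWithinAt_univ, ← Iic_union_Ici (a := (0 : ℝ))]
    refine HasDerivWithinAt.union ?_ ?_
    · rw [max_self, Real.zero_rpow (by linarith), mul_zero]
      refine (hasDerivWithinAt_const (0 : ℝ) _ (0 : ℝ)).congr_of_mem (fun x hx => ?_)
        (by simp)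
      rw [max_eq_right hx, Real.zero_rpow (by linarith)]
    · rw [max_self]
      refine ((Real.hasDerivAt_rpow_const (x := 0) (p := p) (Or.inr hp.le)).hasDerivWithinAt).congr_of_mem
        (fun x hx => ?_) (by simp)
      rw [max_eq_left hx]
  · rw [max_eq_left h.le]
    refine (Real.hasDerivAt_rpow_const (p := p) (Or.inr hp.le)).congr_of_eventuallyEq ?_
    filter_upwards [Ioi_mem_nhds h] with x hx
    rw [max_eq_left (le_of_lt hx)]

lemma contDiff_posPow {p : ℝ} (hp : 1 < p) : ContDiff ℝ 1 (fun t : ℝ => (max t 0) ^ p) := by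
  rw [contDiff_one_iff_deriv]
  refine ⟨fun t => (hasDerivAt_posPow hp t).differentiableAt, ?_⟩
  have : deriv (fun t : ℝ => (max t 0) ^ p) = fun t => p * (max t 0) ^ (p - 1) :=
    funext fun t => (hasDerivAt_posPow hp t).deriv
  rw [this]
  refine continuous_const.mul (Continuous.rpow_const (by fun_prop) fun x => Or.inr (by linarith))

/-- C¹ approximation by smooth functions. -/
lemma exists_smooth_approx {N : ℕ} {Ω : Set (EuclideanSpace ℝ (Fin N))} (hΩ : IsOpen Ω)
    {φ : EuclideanSpace ℝ (Fin N) → ℝ} (hφ : ContDiff ℝ 1 φ) (hc : HasCompactSupport φ)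
    (hs : tsupport φ ⊆ Ω) {ε : ℝ} (hε : 0 < ε) :
    ∃ ψ : EuclideanSpace ℝ (Fin N) → ℝ, ContDiff ℝ (⊤ : ℕ∞) ψ ∧ HasCompactSupport ψ ∧
      tsupport ψ ⊆ Ω ∧ (∀ x, ‖ψ x - φ x‖ ≤ ε) ∧ ∀ x, ‖gradient ψ x - gradient φ x‖ ≤ ε := by
  have hdc : Continuous (fderiv ℝ φ) := hφ.continuous_fderiv (by norm_num)
  have u1 := hc.uniformContinuous_of_continuous hφ.continuous
  have u2 := (hc.fderiv (𝕜 := ℝ)).uniformContinuous_of_continuous hdc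
  obtain ⟨d1, d1p, hd1⟩ := Metric.uniformContinuous_iff.1 u1 ε hε
  obtain ⟨d2, d2p, hd2⟩ := Metric.uniformContinuous_iff.1 u2 ε hε
  obtain ⟨d3, d3p, hd3⟩ := hc.isCompact.exists_cthickening_subset_open hΩ hs
  set d := min d1 (min d2 d3) with hd
  have dp : 0 < d := by positivity
  let ρ : ContDiffBump (0 : EuclideanSpace ℝ (Fin N)) := ⟨d / 2, d, by positivity, by linarith⟩
  have hρ : ρ.rOut = d := rfl
  have hli : LocallyIntegrable φ volume := hφ.continuous.locallyIntegrable
  set ψ : EuclideanSpace ℝ (Fin N) → ℝ :=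
    convolution (ρ.normed volume) φ (ContinuousLinearMap.lsmul ℝ ℝ) volume with hψ
  have hsm : ContDiff ℝ (⊤ : ℕ∞) ψ :=
    ρ.hasCompactSupport_normed.contDiff_convolution_left _ ρ.contDiff_normed hli
  have hfd : ∀ x, fderiv ℝ ψ x = convolution (ρ.normed volume) (fderiv ℝ φ)
      (ContinuousLinearMap.lsmul ℝ ℝ) volume x := by
    intro x
    have h := hc.hasFDerivAt_convolution_right (μ := volume) (ContinuousLinearMap.lsmul ℝ ℝ)
      (f := ρ.normed volume) (ρ.continuous_normed.locallyIntegrable) hφ x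
    rw [hψ, h.fderiv]
    rfl
  refine ⟨ψ, hsm, ?_, ?_, ?_, ?_⟩
  · exact HasCompactSupport.convolution _ ρ.hasCompactSupport_normed hc
  · refine Subset.trans ?_ hd3
    refine closure_minimal ?_ isClosed_cthickening
    refine (support_convolution_subset _).trans ?_
    rintro _ ⟨a, ha, b, hb, rfl⟩
    rw [ρ.support_normed_eq, hρ, mem_ball_zero_iff] at ha
    refine mem_cthickening_of_dist_le (a + b) b d3 _ (subset_tsupport _ hb) ?_
    simp only [dist_eq_norm, add_sub_cancel_right]
    exact ha.le.trans ((min_le_right _ _).trans (min_le_right _ _))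
  · intro x
    rw [← dist_eq_norm]
    refine ρ.dist_normed_convolution_le hφ.continuous.aestronglyMeasurable fun y hy => ?_
    exact (hd1 (lt_of_lt_of_le (mem_ball.1 hy) (min_le_left _ _))).le
  · intro x
    unfold gradient
    rw [← map_sub, LinearIsometryEquiv.norm_map, hfd, ← dist_eq_norm]
    refine ρ.dist_normed_convolution_le hdc.aestronglyMeasurable fun y hy => ?_
    exact (hd2 (lt_of_lt_of_le (mem_ball.1 hy) ((min_le_right _ _).trans (min_le_left _ _)))).le

/-- Extension of the weak formulation to C¹ test functions. -/
lemma weak_C1 {N : ℕ} {Ω : Set (EuclideanSpace ℝ (Fin N))} (hΩ : IsOpen Ω)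
    (hfin : volume Ω ≠ ∞)
    {G : EuclideanSpace ℝ (Fin N) → EuclideanSpace ℝ (Fin N)}
    {f : EuclideanSpace ℝ (Fin N) → ℝ} {lam C D : ℝ}
    (hGm : AEStronglyMeasurable G (volume.restrict Ω))
    (hfm : AEStronglyMeasurable f (volume.restrict Ω))
    (hG : ∀ x ∈ Ω, ‖G x‖ ≤ C) (hf : ∀ x ∈ Ω, ‖f x‖ ≤ D)
    (hw : ∀ φ : EuclideanSpace ℝ (Fin N) → ℝ, ContDiff ℝ (⊤ : ℕ∞) φ → HasCompactSupport φ →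
      tsupport φ ⊆ Ω → ∫ x in Ω, ⟪G x, gradient φ x⟫ = lam * ∫ x in Ω, f x * φ x)
    {φ : EuclideanSpace ℝ (Fin N) → ℝ} (hφ : ContDiff ℝ 1 φ) (hc : HasCompactSupport φ)
    (hs : tsupport φ ⊆ Ω) :
    ∫ x in Ω, ⟪G x, gradient φ x⟫ = lam * ∫ x in Ω, f x * φ x := by
  have hdc : Continuous (fderiv ℝ φ) := hφ.continuous_fderiv (by norm_num)
  have gradc : Continuous (gradient φ) :=
    (InnerProductSpace.toDual ℝ (EuclideanSpace ℝ (Fin N))).symm.continuous.comp hdc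
  have hfin' : IsFiniteMeasure (volume.restrict Ω) := ⟨by simpa using hfin.lt_top⟩
  obtain ⟨A, hA⟩ := hφ.continuous.bounded_above_of_compact_support hc
  obtain ⟨B, hB⟩ := hdc.bounded_above_of_compact_support (hc.fderiv (𝕜 := ℝ))
  have hB' : ∀ x, ‖gradient φ x‖ ≤ B := fun x => by
    unfold gradient; rw [LinearIsometryEquiv.norm_map]; exact hB x
  choose ψ h1 h2 h3 h4 h5 using fun n : ℕ =>
    exists_smooth_approx hΩ hφ hc hs (ε := 1 / ((n : ℝ) + 1)) (by positivity)
  have hle1 : ∀ n : ℕ, 1 / ((n : ℝ) + 1) ≤ 1 := fun n => by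
    rw [div_le_one (by positivity)]; linarith [n.cast_nonneg (α := ℝ)]
  have hto := tendsto_one_div_add_atTop_nhds_zero_nat (𝕜 := ℝ)
  have t1 : ∀ x, Tendsto (fun n => ψ n x) atTop (𝓝 (φ x)) := fun x => by
    rw [tendsto_iff_norm_sub_tendsto_zero]
    exact squeeze_zero (fun _ => norm_nonneg _) (fun n => h4 n x) hto
  have t2 : ∀ x, Tendsto (fun n => gradient (ψ n) x) atTop (𝓝 (gradient φ x)) := fun x => by
    rw [tendsto_iff_norm_sub_tendsto_zero]
    exact squeeze_zero (fun _ => norm_nonneg _) (fun n => h5 n x) hto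
  have gc : ∀ n, Continuous (gradient (ψ n)) := fun n =>
    (InnerProductSpace.toDual ℝ (EuclideanSpace ℝ (Fin N))).symm.continuous.comp
      ((h1 n).continuous_fderiv (by norm_num))
  have L1 : Tendsto (fun n => ∫ x in Ω, ⟪G x, gradient (ψ n) x⟫) atTop
      (𝓝 (∫ x in Ω, ⟪G x, gradient φ x⟫)) := by
    refine tendsto_integral_of_dominated_convergence (fun _ => C * (B + 1)) (fun n => ?_)
      (integrable_const _) (fun n => ?_) ?_
    · exact hGm.inner (gc n).aestronglyMeasurable
    · filter_upwards [ae_restrict_mem hΩ.measurableSet] with x hx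
      refine (norm_inner_le_norm _ _).trans ?_
      have : ‖gradient (ψ n) x‖ ≤ B + 1 := by
        have := norm_le_norm_add_norm_sub' (gradient (ψ n) x) (gradient φ x)
        linarith [h5 n x, hle1 n, hB' x]
      exact mul_le_mul (hG x hx) this (norm_nonneg _) ((norm_nonneg _).trans (hG x hx))
    · exact Eventually.of_forall fun x => tendsto_const_nhds.inner (t2 x)
  have L2 : Tendsto (fun n => ∫ x in Ω, f x * ψ n x) atTop (𝓝 (∫ x in Ω, f x * φ x)) := by
    refine tendsto_integral_of_dominated_convergence (fun _ => D * (A + 1)) (fun n => ?_)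
      (integrable_const _) (fun n => ?_) ?_
    · exact hfm.mul (h1 n).continuous.aestronglyMeasurable
    · filter_upwards [ae_restrict_mem hΩ.measurableSet] with x hx
      rw [norm_mul]
      have : ‖ψ n x‖ ≤ A + 1 := by
        have := norm_le_norm_add_norm_sub' (ψ n x) (φ x)
        linarith [h4 n x, hle1 n, hA x]
      exact mul_le_mul (hf x hx) this (norm_nonneg _) ((norm_nonneg _).trans (hf x hx))
    · exact Eventually.of_forall fun x => tendsto_const_nhds.mul (t1 x)
  refine tendsto_nhds_unique L1 ?_
  simp_rw [fun n => hw (ψ n) (h1 n) (h2 n) (h3 n)]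
  exact L2.const_mul lam

/-- The truncated test function `((v - δ)₊)^p / u^(p-1)` inside the weak formulation. -/
lemma test_identity {N : ℕ} {Ω V : Set (EuclideanSpace ℝ (Fin N))} (hΩ : IsOpen Ω)
    (hb : IsCompact (closure Ω)) (hV : IsOpen V) (hΩV : closure Ω ⊆ V)
    {u v : EuclideanSpace ℝ (Fin N) → ℝ} {p lam : ℝ} (hp : 1 < p)
    (hu : ContDiffOn ℝ 1 u V) (hv : ContDiffOn ℝ 1 v V) (hpos : ∀ x ∈ Ω, 0 < u x)
    (hv0 : ∀ x ∈ frontier Ω, v x = 0)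
    (hw : ∀ φ : EuclideanSpace ℝ (Fin N) → ℝ, ContDiff ℝ (⊤ : ℕ∞) φ → HasCompactSupport φ →
      tsupport φ ⊆ Ω →
      ∫ x in Ω, ‖gradient u x‖ ^ (p - 2) * ⟪gradient u x, gradient φ x⟫ =
      lam * ∫ x in Ω, (u x) ^ (p - 1) * φ x) {δ : ℝ} (hδ : 0 < δ) :
    ∫ x in Ω, (p * (max (v x - δ) 0 / u x) ^ (p - 1) *
        (‖gradient u x‖ ^ (p - 2) * ⟪gradient u x, gradient v x⟫)
        - (p - 1) * (max (v x - δ) 0 / u x) ^ p * ‖gradient u x‖ ^ p) =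
      lam * ∫ x in Ω, (max (v x - δ) 0) ^ p := by
  classical
  have hsub : Ω ⊆ V := subset_closure.trans hΩV
  have hgc : ContinuousOn (gradient u) V :=
    (InnerProductSpace.toDual ℝ (EuclideanSpace ℝ (Fin N))).symm.continuous.comp_continuousOn
      (hu.continuousOn_fderiv_of_isOpen hV le_rfl)
  have hgm : AEStronglyMeasurable (gradient u) (volume.restrict Ω) :=
    (hgc.mono hsub).aestronglyMeasurable hΩ.measurableSet
  have hum : AEStronglyMeasurable u (volume.restrict Ω) :=
    (hu.continuousOn.mono hsub).aestronglyMeasurable hΩ.measurableSet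
  obtain ⟨M, hM⟩ := hb.exists_bound_of_continuousOn (hgc.mono hΩV)
  obtain ⟨D, hD⟩ := hb.exists_bound_of_continuousOn (hu.continuousOn.mono hΩV)
  have hGm : AEStronglyMeasurable (fun x => ‖gradient u x‖ ^ (p - 2) • gradient u x)
      (volume.restrict Ω) :=
    (hgm.norm.aemeasurable.pow_const _).aestronglyMeasurable.smul hgm
  have hfm : AEStronglyMeasurable (fun x => (u x) ^ (p - 1)) (volume.restrict Ω) :=
    (hum.aemeasurable.pow_const _).aestronglyMeasurable
  have hG : ∀ x ∈ Ω, ‖‖gradient u x‖ ^ (p - 2) • gradient u x‖ ≤ M ^ (p - 1) := by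
    intro x hx
    have hMx := hM x (subset_closure hx)
    rcases eq_or_ne (gradient u x) 0 with h | h
    · rw [h]; simp only [smul_zero, norm_zero]
      exact Real.rpow_nonneg ((norm_nonneg _).trans hMx) _
    · have h' := norm_pos_iff.2 h
      rw [norm_smul, Real.norm_of_nonneg (by positivity), ← Real.rpow_add_one h'.ne']
      have : p - 2 + 1 = p - 1 := by ring
      rw [this]
      exact Real.rpow_le_rpow h'.le hMx (by linarith)
  have hf : ∀ x ∈ Ω, ‖(u x) ^ (p - 1)‖ ≤ D ^ (p - 1) := by
    intro x hx
    have h0 := hpos x hx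
    rw [Real.norm_of_nonneg (by positivity)]
    exact Real.rpow_le_rpow h0.le ((le_abs_self _).trans (hD x (subset_closure hx)))
      (by linarith)
  set K := closure Ω ∩ v ⁻¹' Ici δ with hK
  have hKcl : IsClosed K :=
    (hv.continuousOn.mono hΩV).preimage_isClosed_of_isClosed isClosed_closure isClosed_Ici
  have hKΩ : K ⊆ Ω := by
    rintro x ⟨hx, hx'⟩
    by_contra hn
    have : x ∈ frontier Ω := ⟨hx, by rwa [hΩ.interior_eq]⟩
    have h0 := hv0 x this
    simp only [mem_preimage, mem_Ici, h0] at hx'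
    linarith
  set φ : EuclideanSpace ℝ (Fin N) → ℝ :=
    fun x => if x ∈ Ω then (max (v x - δ) 0) ^ p * (u x) ^ (1 - p) else 0 with hφ
  have hφK : ∀ x, x ∉ K → φ x = 0 := by
    intro x hx
    by_cases hxΩ : x ∈ Ω
    · have : v x < δ := by
        by_contra hn
        exact hx ⟨subset_closure hxΩ, not_lt.1 hn⟩
      simp only [hφ, if_pos hxΩ]
      rw [max_eq_right (by linarith), Real.zero_rpow (by linarith), zero_mul]
    · simp [hφ, hxΩ]
  have hts : tsupport φ ⊆ K := by
    refine closure_minimal (fun x hx => ?_) hKcl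
    by_contra hn
    exact hx (hφK x hn)
  have hcs : HasCompactSupport φ :=
    HasCompactSupport.of_support_subset_isCompact (hb.of_isClosed_subset hKcl inter_subset_left)
      ((subset_tsupport _).trans hts)
  have heq : ∀ x ∈ Ω, φ =ᶠ[𝓝 x] fun x => (max (v x - δ) 0) ^ p * (u x) ^ (1 - p) := by
    intro x hx
    filter_upwards [hΩ.mem_nhds hx] with y hy
    simp [hφ, hy]
  have hsm : ContDiff ℝ 1 φ := by
    rw [contDiff_iff_contDiffAt]
    intro x
    by_cases hx : x ∈ Ω
    · refine ContDiffAt.congr_of_eventuallyEq ?_ (heq x hx)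
      have hux := hu.contDiffAt (hV.mem_nhds (hsub hx))
      have hvx := hv.contDiffAt (hV.mem_nhds (hsub hx))
      refine ContDiffAt.mul ?_ (hux.rpow_const_of_ne (hpos x hx).ne')
      exact (contDiff_posPow hp).contDiffAt.comp x (hvx.sub contDiffAt_const)
    · refine (contDiffAt_const (c := (0 : ℝ))).congr_of_eventuallyEq ?_
      filter_upwards [hKcl.isOpen_compl.mem_nhds (fun h => hx (hKΩ h))] with y hy
      exact hφK y hy
  have hgrad : ∀ x ∈ Ω, gradient φ x = (p * (max (v x - δ) 0 / u x) ^ (p - 1)) • gradient v x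
      - ((p - 1) * (max (v x - δ) 0 / u x) ^ p) • gradient u x := by
    intro x hx
    have hux := (hu.contDiffAt (hV.mem_nhds (hsub hx))).differentiableAt one_ne_zero |>.hasFDerivAt
    have hvx := (hv.contDiffAt (hV.mem_nhds (hsub hx))).differentiableAt one_ne_zero |>.hasFDerivAt
    have h0 := hpos x hx
    have hd := ((hasDerivAt_posPow hp (v x - δ)).comp_hasFDerivAt x (hvx.sub_const δ)).mul
      (hux.rpow_const (p := 1 - p) (Or.inl h0.ne'))
    have hd' := hd.congr_of_eventuallyEq (heq x hx)
    have hfd := hd'.fderiv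
    set m := max (v x - δ) 0 with hm
    have hm0 : 0 ≤ m := le_max_right _ _
    have e1 : (u x) ^ (1 - p) * (p * m ^ (p - 1)) = p * (m / u x) ^ (p - 1) := by
      rw [Real.div_rpow hm0 h0.le, show 1 - p = -(p - 1) by ring, Real.rpow_neg h0.le]
      field_simp
    have e2 : m ^ p * ((1 - p) * (u x) ^ (1 - p - 1)) = - ((p - 1) * (m / u x) ^ p) := by
      rw [Real.div_rpow hm0 h0.le, show 1 - p - 1 = -p by ring, Real.rpow_neg h0.le]
      field_simp
      ring
    unfold gradient
    rw [hfd]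
    simp only [Function.comp, map_add, map_smul, smul_smul]
    rw [← hm, e1, e2, neg_smul]
    abel
  have main := weak_C1 hΩ (lt_of_le_of_lt (measure_mono subset_closure) hb.measure_lt_top).ne
    hGm hfm hG hf (lam := lam)
    (fun φ a b c => by simp_rw [real_inner_smul_left]; exact hw φ a b c) hsm hcs
    (hts.trans hKΩ)
  rw [setIntegral_congr_fun (g := fun x => ⟪‖gradient u x‖ ^ (p - 2) • gradient u x,
    gradient φ x⟫) hΩ.measurableSet, main]
  · congr 1
    refine setIntegral_congr_fun hΩ.measurableSet fun x hx => ?_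
    have h0 := hpos x hx
    simp only [hφ, if_pos hx]
    rw [show 1 - p = -(p - 1) by ring, Real.rpow_neg h0.le]
    field_simp
  · intro x hx
    simp only
    rw [hgrad x hx, real_inner_smul_left, inner_sub_right, inner_smul_right, inner_smul_right,
      real_inner_self_eq_norm_sq]
    have : ‖gradient u x‖ ^ p = ‖gradient u x‖ ^ (p - 2) * ‖gradient u x‖ ^ 2 := by
      rcases eq_or_ne ‖gradient u x‖ 0 with h | h
      · rw [h, Real.zero_rpow (by linarith)]; simp
      · rw [← Real.rpow_add_natCast h]; congr 1; push_cast; ring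
    rw [this]
    ring

lemma trunc_tendsto (a : ℝ) (ha : 0 < a) :
    Tendsto (fun n : ℕ => max (a - 1 / ((n : ℝ) + 1)) 0) atTop (𝓝 a) := by
  have h := (tendsto_const_nhds (x := a)).sub (tendsto_one_div_add_atTop_nhds_zero_nat (𝕜 := ℝ))
  have h2 := h.max (tendsto_const_nhds (x := (0 : ℝ)))
  simpa [max_eq_left ha.le] using h2

lemma trunc_le {a δ : ℝ} (ha : 0 < a) (hδ : 0 < δ) : max (a - δ) 0 ≤ a :=
  max_le (by linarith) ha.le

lemma trunc_int_tendsto {N : ℕ} {Ω : Set (EuclideanSpace ℝ (Fin N))} (hΩ : IsOpen Ω)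
    (hb : IsCompact (closure Ω)) {v : EuclideanSpace ℝ (Fin N) → ℝ} {p : ℝ} (hp : 1 < p)
    (hv : ContinuousOn v (closure Ω)) (hpos : ∀ x ∈ Ω, 0 < v x) :
    Tendsto (fun n : ℕ => ∫ x in Ω, (max (v x - 1 / ((n : ℝ) + 1)) 0) ^ p) atTop
      (𝓝 (∫ x in Ω, (v x) ^ p)) := by
  have hfin' : IsFiniteMeasure (volume.restrict Ω) :=
    ⟨by simpa using lt_of_le_of_lt (measure_mono subset_closure) hb.measure_lt_top⟩
  obtain ⟨D, hD⟩ := hb.exists_bound_of_continuousOn hv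
  have hvm : AEMeasurable v (volume.restrict Ω) :=
    (hv.mono subset_closure).aemeasurable hΩ.measurableSet
  refine tendsto_integral_of_dominated_convergence (fun _ => D ^ p) (fun n => ?_)
    (integrable_const _) (fun n => ?_) ?_
  · exact (((hvm.sub_const _).max aemeasurable_const).pow_const _).aestronglyMeasurable
  · filter_upwards [ae_restrict_mem hΩ.measurableSet] with x hx
    rw [Real.norm_of_nonneg (by positivity)]
    refine Real.rpow_le_rpow (le_max_right _ _) ?_ (by linarith)
    exact (trunc_le (hpos x hx) (by positivity)).trans
      ((le_abs_self _).trans (hD x (subset_closure hx)))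
  · filter_upwards [ae_restrict_mem hΩ.measurableSet] with x hx
    exact (trunc_tendsto _ (hpos x hx)).rpow_const (Or.inr (by linarith))

lemma energy_identity {N : ℕ} {Ω V : Set (EuclideanSpace ℝ (Fin N))} (hΩ : IsOpen Ω)
    (hb : IsCompact (closure Ω)) (hV : IsOpen V) (hΩV : closure Ω ⊆ V)
    {u : EuclideanSpace ℝ (Fin N) → ℝ} {p lam : ℝ} (hp : 1 < p)
    (hu : ContDiffOn ℝ 1 u V) (hpos : ∀ x ∈ Ω, 0 < u x)
    (hu0 : ∀ x ∈ frontier Ω, u x = 0)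
    (hw : ∀ φ : EuclideanSpace ℝ (Fin N) → ℝ, ContDiff ℝ (⊤ : ℕ∞) φ → HasCompactSupport φ →
      tsupport φ ⊆ Ω →
      ∫ x in Ω, ‖gradient u x‖ ^ (p - 2) * ⟪gradient u x, gradient φ x⟫ =
      lam * ∫ x in Ω, (u x) ^ (p - 1) * φ x) :
    ∫ x in Ω, ‖gradient u x‖ ^ p = lam * ∫ x in Ω, (u x) ^ p := by
  have hsub : Ω ⊆ V := subset_closure.trans hΩV
  have hfin' : IsFiniteMeasure (volume.restrict Ω) :=
    ⟨by simpa using lt_of_le_of_lt (measure_mono subset_closure) hb.measure_lt_top⟩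
  have hgc : ContinuousOn (gradient u) V :=
    (InnerProductSpace.toDual ℝ (EuclideanSpace ℝ (Fin N))).symm.continuous.comp_continuousOn
      (hu.continuousOn_fderiv_of_isOpen hV le_rfl)
  have hgm : AEMeasurable (fun x => ‖gradient u x‖) (volume.restrict Ω) :=
    (hgc.mono hsub).norm.aemeasurable hΩ.measurableSet
  have hum : AEMeasurable u (volume.restrict Ω) :=
    (hu.continuousOn.mono hsub).aemeasurable hΩ.measurableSet
  obtain ⟨M, hM⟩ := hb.exists_bound_of_continuousOn (hgc.mono hΩV)
  have T := (trunc_int_tendsto hΩ hb hp (hu.continuousOn.mono hΩV) hpos).const_mul lam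
  refine tendsto_nhds_unique ?_ T
  simp_rw [← fun n : ℕ => test_identity hΩ hb hV hΩV hp hu hu hpos hu0 hw
    (δ := 1 / ((n : ℝ) + 1)) (by positivity)]
  have hpow : ∀ x, ‖gradient u x‖ ^ (p - 2) * ⟪gradient u x, gradient u x⟫
      = ‖gradient u x‖ ^ p := by
    intro x
    rw [real_inner_self_eq_norm_sq]
    rcases eq_or_ne ‖gradient u x‖ 0 with h | h
    · rw [h, Real.zero_rpow (x := p) (by linarith)]; simp
    · rw [← Real.rpow_add_natCast h]; congr 1; push_cast; ring
  simp_rw [hpow]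
  refine tendsto_integral_of_dominated_convergence (fun _ => p * M ^ p + (p - 1) * M ^ p)
    (fun n => ?_) (integrable_const _) (fun n => ?_) ?_
  · have hr : AEMeasurable (fun x => max (u x - 1 / ((n : ℝ) + 1)) 0 / u x)
      (volume.restrict Ω) := ((hum.sub_const _).max aemeasurable_const).div hum
    exact ((((hr.pow_const _).const_mul _).mul (hgm.pow_const _)).sub
      (((hr.pow_const _).const_mul _).mul (hgm.pow_const _))).aestronglyMeasurable
  · filter_upwards [ae_restrict_mem hΩ.measurableSet] with x hx
    have h0 := hpos x hx
    set r := max (u x - 1 / ((n : ℝ) + 1)) 0 / u x with hr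
    have hr0 : 0 ≤ r := div_nonneg (le_max_right _ _) h0.le
    have hr1 : r ≤ 1 := (div_le_one h0).2 (trunc_le h0 (by positivity))
    have a1 : r ^ (p - 1) ≤ 1 := Real.rpow_le_one hr0 hr1 (by linarith)
    have a2 : r ^ p ≤ 1 := Real.rpow_le_one hr0 hr1 (by linarith)
    have a3 : ‖gradient u x‖ ^ p ≤ M ^ p :=
      Real.rpow_le_rpow (norm_nonneg _) (hM x (subset_closure hx)) (by linarith)
    have a4 : 0 ≤ ‖gradient u x‖ ^ p := by positivity
    have a5 : 0 ≤ r ^ (p - 1) := by positivity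
    have a6 : 0 ≤ r ^ p := by positivity
    have hp1 : 0 ≤ p - 1 := by linarith
    have hp0 : 0 ≤ p := by linarith
    refine (norm_sub_le _ _).trans (add_le_add ?_ ?_)
    · rw [Real.norm_of_nonneg (by positivity), mul_assoc]
      exact mul_le_mul_of_nonneg_left
        ((mul_le_mul a1 a3 a4 zero_le_one).trans_eq (one_mul _)) hp0
    · rw [Real.norm_of_nonneg (by positivity), mul_assoc]
      exact mul_le_mul_of_nonneg_left
        ((mul_le_mul a2 a3 a4 zero_le_one).trans_eq (one_mul _)) hp1
  · filter_upwards [ae_restrict_mem hΩ.measurableSet] with x hx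
    have h0 := hpos x hx
    have hr : Tendsto (fun n : ℕ => max (u x - 1 / ((n : ℝ) + 1)) 0 / u x) atTop (𝓝 1) := by
      have := (trunc_tendsto _ h0).div_const (u x)
      rwa [div_self h0.ne'] at this
    have b1 := hr.rpow_const (p := p - 1) (Or.inl one_ne_zero)
    have b2 := hr.rpow_const (p := p) (Or.inl one_ne_zero)
    have b3 := ((b1.const_mul p).mul_const (‖gradient u x‖ ^ p)).sub
      ((b2.const_mul (p - 1)).mul_const (‖gradient u x‖ ^ p))
    rw [Real.one_rpow, Real.one_rpow] at b3
    convert b3 using 2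
    ring

lemma proportional {N : ℕ} {Ω V : Set (EuclideanSpace ℝ (Fin N))} (hΩ : IsOpen Ω)
    (hb : IsCompact (closure Ω)) (hV : IsOpen V) (hΩV : closure Ω ⊆ V)
    {u v : EuclideanSpace ℝ (Fin N) → ℝ} {p lam : ℝ} (hp : 1 < p)
    (hu : ContDiffOn ℝ 1 u V) (hv : ContDiffOn ℝ 1 v V) (hpos : ∀ x ∈ Ω, 0 < u x)
    (hvpos : ∀ x ∈ Ω, 0 < v x)
    (hv0 : ∀ x ∈ frontier Ω, v x = 0)
    (hw : ∀ φ : EuclideanSpace ℝ (Fin N) → ℝ, ContDiff ℝ (⊤ : ℕ∞) φ → HasCompactSupport φ →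
      tsupport φ ⊆ Ω →
      ∫ x in Ω, ‖gradient u x‖ ^ (p - 2) * ⟪gradient u x, gradient φ x⟫ =
      lam * ∫ x in Ω, (u x) ^ (p - 1) * φ x)
    (hev : ∫ x in Ω, ‖gradient v x‖ ^ p = lam * ∫ x in Ω, (v x) ^ p) :
    ∀ x ∈ Ω, gradient v x = (v x / u x) • gradient u x := by
  have hsub : Ω ⊆ V := subset_closure.trans hΩV
  have hfin' : IsFiniteMeasure (volume.restrict Ω) :=
    ⟨by simpa using lt_of_le_of_lt (measure_mono subset_closure) hb.measure_lt_top⟩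
  have hgc : ContinuousOn (gradient u) V :=
    (InnerProductSpace.toDual ℝ (EuclideanSpace ℝ (Fin N))).symm.continuous.comp_continuousOn
      (hu.continuousOn_fderiv_of_isOpen hV le_rfl)
  have hgcv : ContinuousOn (gradient v) V :=
    (InnerProductSpace.toDual ℝ (EuclideanSpace ℝ (Fin N))).symm.continuous.comp_continuousOn
      (hv.continuousOn_fderiv_of_isOpen hV le_rfl)
  have hgm : AEStronglyMeasurable (gradient u) (volume.restrict Ω) :=
    (hgc.mono hsub).aestronglyMeasurable hΩ.measurableSet
  have hgmv : AEStronglyMeasurable (gradient v) (volume.restrict Ω) :=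
    (hgcv.mono hsub).aestronglyMeasurable hΩ.measurableSet
  have hum : AEMeasurable u (volume.restrict Ω) :=
    (hu.continuousOn.mono hsub).aemeasurable hΩ.measurableSet
  have hvm : AEMeasurable v (volume.restrict Ω) :=
    (hv.continuousOn.mono hsub).aemeasurable hΩ.measurableSet
  obtain ⟨M, hM⟩ := hb.exists_bound_of_continuousOn (hgc.mono hΩV)
  obtain ⟨M', hM'⟩ := hb.exists_bound_of_continuousOn (hgcv.mono hΩV)
  have hcu : ContinuousOn u Ω := hu.continuousOn.mono hsub
  have hcv : ContinuousOn v Ω := hv.continuousOn.mono hsub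
  -- the deficit with generic ratio
  let Q : ℝ → EuclideanSpace ℝ (Fin N) → ℝ := fun r x =>
    p * r ^ (p - 1) * (‖gradient u x‖ ^ (p - 2) * ⟪gradient u x, gradient v x⟫)
        - (p - 1) * r ^ p * ‖gradient u x‖ ^ p
  let r : ℕ → EuclideanSpace ℝ (Fin N) → ℝ := fun n x =>
    max (v x - 1 / ((n : ℝ) + 1)) 0 / u x
  have hQm : ∀ ρ : EuclideanSpace ℝ (Fin N) → ℝ, AEMeasurable ρ (volume.restrict Ω) →
      AEMeasurable (fun x => Q (ρ x) x) (volume.restrict Ω) := by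
    intro ρ hρ
    exact (((hρ.pow_const _).const_mul _).mul ((hgm.norm.aemeasurable.pow_const _).mul
      (hgm.inner hgmv).aemeasurable)).sub
      (((hρ.pow_const _).const_mul _).mul (hgm.norm.aemeasurable.pow_const _))
  have hrm : ∀ n, AEMeasurable (r n) (volume.restrict Ω) := fun n =>
    ((hvm.sub_const _).max aemeasurable_const).div hum
  have hgvi : Integrable (fun x => ‖gradient v x‖ ^ p) (volume.restrict Ω) := by
    refine Integrable.of_bound (hgmv.norm.aemeasurable.pow_const _).aestronglyMeasurable
      (M' ^ p) ?_
    filter_upwards [ae_restrict_mem hΩ.measurableSet] with x hx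
    rw [Real.norm_of_nonneg (by positivity)]
    exact Real.rpow_le_rpow (norm_nonneg _) (hM' x (subset_closure hx)) (by linarith)
  have hQi : ∀ n, Integrable (fun x => Q (r n x) x) (volume.restrict Ω) := by
    intro n
    have hδ : 0 < 1 / ((n : ℝ) + 1) := by positivity
    set δ := 1 / ((n : ℝ) + 1) with hδd
    set K := closure Ω ∩ v ⁻¹' Ici δ with hK
    have hKcl : IsClosed K :=
      (hv.continuousOn.mono hΩV).preimage_isClosed_of_isClosed isClosed_closure isClosed_Ici
    have hKΩ : K ⊆ Ω := by
      rintro x ⟨hx, hx'⟩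
      by_contra hn
      have : x ∈ frontier Ω := ⟨hx, by rwa [hΩ.interior_eq]⟩
      have h0 := hv0 x this
      simp only [mem_preimage, mem_Ici, h0] at hx'
      linarith
    have hKc : IsCompact K := hb.of_isClosed_subset hKcl inter_subset_left
    have hrc : ContinuousOn (r n) K :=
      (((hcv.sub continuousOn_const).sup continuousOn_const).div hcu
        fun x hx => (hpos x hx).ne').mono hKΩ
    obtain ⟨S, hS⟩ := hKc.exists_bound_of_continuousOn hrc
    have hrb : ∀ x ∈ Ω, r n x ≤ max S 0 := by
      intro x hx
      by_cases hxK : x ∈ K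
      · exact ((le_abs_self _).trans (hS x hxK)).trans (le_max_left _ _)
      · have : v x < δ := by
          by_contra hn
          exact hxK ⟨subset_closure hx, not_lt.1 hn⟩
        have h1 : r n x = max (v x - δ) 0 / u x := rfl
        rw [h1, max_eq_right (by linarith), zero_div]
        exact le_max_right _ _
    refine Integrable.of_bound (hQm _ (hrm n)).aestronglyMeasurable
      (p * (max S 0) ^ (p - 1) * (M ^ (p - 1) * M') + (p - 1) * (max S 0) ^ p * M ^ p) ?_
    filter_upwards [ae_restrict_mem hΩ.measurableSet] with x hx
    have hr0 : 0 ≤ r n x := div_nonneg (le_max_right _ _) (hpos x hx).le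
    have hMx := hM x (subset_closure hx)
    have hMx' := hM' x (subset_closure hx)
    have hM0 := (norm_nonneg _).trans hMx
    have a1 : r n x ^ (p - 1) ≤ (max S 0) ^ (p - 1) :=
      Real.rpow_le_rpow hr0 (hrb x hx) (by linarith)
    have a2 : r n x ^ p ≤ (max S 0) ^ p :=
      Real.rpow_le_rpow hr0 (hrb x hx) (by linarith)
    have a3 : ‖gradient u x‖ ^ p ≤ M ^ p :=
      Real.rpow_le_rpow (norm_nonneg _) hMx (by linarith)
    have a4 : ‖gradient u x‖ ^ (p - 2) * ‖gradient u x‖ ≤ M ^ (p - 1) := by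
      rcases eq_or_ne ‖gradient u x‖ 0 with h | h
      · rw [h, mul_zero]; positivity
      · rw [← Real.rpow_add_one h, show p - 2 + 1 = p - 1 by ring]
        exact Real.rpow_le_rpow (norm_nonneg _) hMx (by linarith)
    have a5 : ‖‖gradient u x‖ ^ (p - 2) * ⟪gradient u x, gradient v x⟫‖ ≤ M ^ (p - 1) * M' := by
      rw [norm_mul, Real.norm_of_nonneg (by positivity)]
      calc _ ≤ ‖gradient u x‖ ^ (p - 2) * (‖gradient u x‖ * ‖gradient v x‖) := by
            gcongr; exact norm_inner_le_norm _ _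
        _ = (‖gradient u x‖ ^ (p - 2) * ‖gradient u x‖) * ‖gradient v x‖ := by ring
        _ ≤ _ := by gcongr
    have hp1 : 0 ≤ p - 1 := by linarith
    have hp0 : 0 ≤ p := by linarith
    refine (norm_sub_le _ _).trans (add_le_add ?_ ?_)
    · rw [norm_mul, Real.norm_of_nonneg (r := p * r n x ^ (p - 1)) (by positivity)]
      gcongr
    · rw [Real.norm_of_nonneg (by positivity)]
      gcongr
  have hint : ∀ n : ℕ, ∫ x in Ω, (‖gradient v x‖ ^ p - Q (r n x) x) =
      (∫ x in Ω, ‖gradient v x‖ ^ p)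
        - lam * ∫ x in Ω, (max (v x - 1 / ((n : ℝ) + 1)) 0) ^ p := by
    intro n
    rw [integral_sub hgvi (hQi n)]
    congr 1
    exact test_identity hΩ hb hV hΩV hp hu hv hpos hv0 hw (by positivity)
  have hlim : Tendsto (fun n => ∫ x in Ω, (‖gradient v x‖ ^ p - Q (r n x) x)) atTop (𝓝 0) := by
    simp_rw [hint]
    have T := (trunc_int_tendsto hΩ hb hp (hv.continuousOn.mono hΩV) hvpos).const_mul lam
    have T2 := (tendsto_const_nhds (x := ∫ x in Ω, ‖gradient v x‖ ^ p)).sub T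
    rwa [sub_eq_zero.2 hev] at T2
  have hnn : ∀ n, ∀ᵐ x ∂(volume.restrict Ω), 0 ≤ ‖gradient v x‖ ^ p - Q (r n x) x := by
    intro n
    filter_upwards [ae_restrict_mem hΩ.measurableSet] with x hx
    exact (picone_nonneg hp (div_nonneg (le_max_right _ _) (hpos x hx).le) _ _).1
  have hlim' : Tendsto (fun n => ∫⁻ x in Ω, ENNReal.ofReal (‖gradient v x‖ ^ p - Q (r n x) x))
      atTop (𝓝 0) := by
    have := ENNReal.tendsto_ofReal hlim
    rw [ENNReal.ofReal_zero] at this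
    refine this.congr fun n => ?_
    exact ofReal_integral_eq_lintegral_ofReal (hgvi.sub (hQi n)) (hnn n)
  have hfatou := lintegral_liminf_le' (μ := volume.restrict Ω) (u := atTop)
    (f := fun n x => ENNReal.ofReal (‖gradient v x‖ ^ p - Q (r n x) x))
    (fun n => ((hgmv.norm.aemeasurable.pow_const _).sub (hQm _ (hrm n))).ennreal_ofReal)
  rw [hlim'.liminf_eq] at hfatou
  have hptw : ∀ᵐ x ∂(volume.restrict Ω),
      liminf (fun n => ENNReal.ofReal (‖gradient v x‖ ^ p - Q (r n x) x)) atTop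
      = ENNReal.ofReal (‖gradient v x‖ ^ p - Q (v x / u x) x) := by
    filter_upwards [ae_restrict_mem hΩ.measurableSet] with x hx
    have hr : Tendsto (fun n => r n x) atTop (𝓝 (v x / u x)) :=
      (trunc_tendsto _ (hvpos x hx)).div_const (u x)
    have hne : v x / u x ≠ 0 := (div_pos (hvpos x hx) (hpos x hx)).ne'
    have b1 := hr.rpow_const (p := p - 1) (Or.inl hne)
    have b2 := hr.rpow_const (p := p) (Or.inl hne)
    have b3 := ((b1.const_mul p).mul_const
      (‖gradient u x‖ ^ (p - 2) * ⟪gradient u x, gradient v x⟫)).sub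
      ((b2.const_mul (p - 1)).mul_const (‖gradient u x‖ ^ p))
    exact (ENNReal.tendsto_ofReal ((tendsto_const_nhds (x := ‖gradient v x‖ ^ p)).sub b3)).liminf_eq
  have hmm : AEMeasurable (fun x => ENNReal.ofReal (‖gradient v x‖ ^ p - Q (v x / u x) x))
      (volume.restrict Ω) :=
    ((hgmv.norm.aemeasurable.pow_const _).sub (hQm _ (hvm.div hum))).ennreal_ofReal
  rw [lintegral_congr_ae hptw, nonpos_iff_eq_zero, lintegral_eq_zero_iff' hmm] at hfatou
  refine Measure.eqOn_open_of_ae_eq (μ := volume) ?_ hΩ (hgcv.mono hsub)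
    ((hcv.div hcu fun x hx => (hpos x hx).ne').smul (hgc.mono hsub))
  filter_upwards [hfatou, ae_restrict_mem hΩ.measurableSet] with x hx hxΩ
  have hp' := picone_nonneg hp (div_pos (hvpos x hxΩ) (hpos x hxΩ)).le (gradient v x) (gradient u x)
  refine hp'.2 (le_antisymm ?_ hp'.1)
  exact ENNReal.ofReal_eq_zero.1 hx

lemma norm_e1 {N : ℕ} (hN : 2 ≤ N) : ‖e1 N‖ = 1 := by
  have h : e1 N = EuclideanSpace.single (⟨0, by omega⟩ : Fin N) (1 : ℝ) := by
    ext i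
    simp [e1, Pi.single_apply, Fin.ext_iff]
  rw [h]; simp

lemma Om_mem {N : ℕ} {R₀ R₁ s : ℝ} (hR₀ : 0 < R₀) (x : EuclideanSpace ℝ (Fin N)) :
    x ∈ Om N R₀ R₁ s ↔ ‖x‖ < R₁ ∧ R₀ < ‖x - s • e1 N‖ := by
  rw [Om, closure_ball _ hR₀.ne']
  simp [dist_eq_norm]

/-- Moving along the sphere towards `-e₁` stays in the annulus. -/
lemma Om_path {N : ℕ} (hN : 2 ≤ N) {R₀ R₁ s : ℝ} (hR₀ : 0 < R₀) (hs : 0 < s)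
    {x : EuclideanSpace ℝ (Fin N)} (hx : x ∈ Om N R₀ R₁ s) (hne : x ≠ ‖x‖ • e1 N) :
    ∃ γ : ℝ → EuclideanSpace ℝ (Fin N), ContinuousOn γ (Icc 0 1) ∧
      (∀ t ∈ Icc (0 : ℝ) 1, γ t ∈ Om N R₀ R₁ s) ∧ γ 0 = x ∧ γ 1 = -(‖x‖ • e1 N) := by
  have he := norm_e1 hN
  set e := e1 N with hedef
  set ρ := ‖x‖ with hρ
  have hx0 : x ≠ 0 := by
    rintro h
    apply hne
    rw [hρ, h]; simp
  have hρ0 : 0 < ρ := norm_pos_iff.2 hx0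
  set w : ℝ → EuclideanSpace ℝ (Fin N) := fun t => (1 - t) • x - (t * ρ) • e with hw
  have hwc : Continuous w := by fun_prop
  set c := ⟪x, e⟫ with hc
  have hcle : c ≤ ρ := by
    have := real_inner_le_norm x e
    rwa [he, mul_one] at this
  have hcge : -ρ ≤ c := by
    have := (abs_le.1 (abs_real_inner_le_norm x e)).1
    rwa [he, mul_one] at this
  have hw0 : ∀ t ∈ Icc (0 : ℝ) 1, w t ≠ 0 := by
    intro t ht h0
    have h1 : (1 - t) • x = (t * ρ) • e := sub_eq_zero.1 h0
    have h2 := congrArg norm h1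
    rw [norm_smul, norm_smul, he, Real.norm_of_nonneg (by linarith [ht.2]),
      Real.norm_of_nonneg (mul_nonneg ht.1 hρ0.le), ← hρ, mul_one] at h2
    have h3 : 1 - t = t := mul_right_cancel₀ hρ0.ne' h2
    have h4 : t = 1 / 2 := by linarith
    rw [h4] at h1
    apply hne
    have h5 := congrArg (fun z => (2 : ℝ) • z) h1
    simp only [smul_smul] at h5
    norm_num at h5
    rw [h5]
    congr 1
    ring
  refine ⟨fun t => (ρ / ‖w t‖) • w t, ?_, ?_, ?_, ?_⟩
  · refine ContinuousOn.smul (continuousOn_const.div hwc.norm.continuousOn fun t ht => ?_)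
      hwc.continuousOn
    exact norm_ne_zero_iff.2 (hw0 t ht)
  · intro t ht
    have hwt : 0 < ‖w t‖ := norm_pos_iff.2 (hw0 t ht)
    have hn : ‖(ρ / ‖w t‖) • w t‖ = ρ := by
      rw [norm_smul, Real.norm_of_nonneg (by positivity)]; field_simp
    rw [Om_mem hR₀] at hx ⊢
    refine ⟨by rw [hn]; exact hx.1, lt_of_lt_of_le hx.2 ?_⟩
    have hle : ‖w t‖ ≤ ρ := by
      refine (norm_sub_le _ _).trans ?_
      rw [norm_smul, norm_smul, he, Real.norm_of_nonneg (by linarith [ht.2]),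
        Real.norm_of_nonneg (mul_nonneg ht.1 hρ0.le), ← hρ]
      linarith
    have hge : (1 - t) * ρ - t * ρ ≤ ‖w t‖ := by
      have := norm_sub_norm_le ((1 - t) • x) ((t * ρ) • e)
      rwa [norm_smul, norm_smul, he, Real.norm_of_nonneg (by linarith [ht.2]),
        Real.norm_of_nonneg (mul_nonneg ht.1 hρ0.le), ← hρ, mul_one] at this
    have hwe : ⟪w t, e⟫ = (1 - t) * c - t * ρ := by
      simp only [hw]
      rw [inner_sub_left, real_inner_smul_left, real_inner_smul_left, real_inner_self_eq_norm_sq,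
        he]
      ring
    have hkey : ρ * ((1 - t) * c - t * ρ) ≤ c * ‖w t‖ := by
      rcases le_total 0 c with h | h
      · have h1 := mul_le_mul_of_nonneg_left hge h
        have h2 := mul_nonneg (mul_nonneg ht.1 hρ0.le) (sub_nonneg.2 hcle)
        nlinarith
      · have h1 := mul_le_mul_of_nonpos_left hle h
        have h2 : 0 ≤ (t * ρ) * (c + ρ) := mul_nonneg (mul_nonneg ht.1 hρ0.le) (by linarith)
        nlinarith
    have hin : ⟪(ρ / ‖w t‖) • w t, e⟫ ≤ c := by
      rw [real_inner_smul_left, hwe, div_mul_eq_mul_div, div_le_iff₀ hwt]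
      exact hkey
    refine le_of_sq_le_sq ?_ (norm_nonneg _)
    rw [norm_sub_sq_real, norm_sub_sq_real, hn, inner_smul_right, inner_smul_right, ← hc, ← hρ]
    nlinarith
  · simp only [hw]
    simp [← hρ, hρ0.ne']
  · simp only [hw]
    simp [norm_smul, he, abs_of_pos hρ0, hρ0.ne']

lemma main_refl (N : ℕ) (hN : 2 ≤ N) (R₀ R₁ : ℝ) (hR₀ : 0 < R₀)
    (p : ℝ) (hp : 1 < p) (s : ℝ) (hs : 0 < s)
    (u : EuclideanSpace ℝ (Fin N) → ℝ)
    (hu : IsFirstEigenfunction p (Om N R₀ R₁ s) (lam1 p (Om N R₀ R₁ s)) u)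
    (σ : EuclideanSpace ℝ (Fin N) ≃ₗᵢ[ℝ] EuclideanSpace ℝ (Fin N)) (hσ : σ (e1 N) = e1 N)
    (x : EuclideanSpace ℝ (Fin N)) (hx : x ∈ Om N R₀ R₁ s) : u x = u (σ x) := by
  obtain ⟨⟨V, hV, hΩV, huV⟩, hpos, hu0, hw⟩ := hu
  set Ω := Om N R₀ R₁ s with hΩdef
  have hΩ : IsOpen Ω := isOpen_ball.sdiff isClosed_closure
  have hb : IsCompact (closure Ω) :=
    (isBounded_ball.subset sdiff_subset).isCompact_closure
  have hpre : σ ⁻¹' Ω = Ω := by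
    ext y
    rw [mem_preimage, hΩdef, Om_mem hR₀, Om_mem hR₀]
    have : σ y - s • e1 N = σ (y - s • e1 N) := by rw [map_sub, map_smul, hσ]
    rw [this, σ.norm_map, σ.norm_map]
  have hmem : ∀ y, σ y ∈ Ω ↔ y ∈ Ω := fun y => by
    conv_rhs => rw [← hpre]
    rfl
  have hcl : σ ⁻¹' closure Ω = closure Ω := by
    have := σ.toHomeomorph.preimage_closure Ω
    change σ ⁻¹' closure Ω = closure (σ ⁻¹' Ω) at this
    rw [this, hpre]
  have hfr : σ ⁻¹' frontier Ω = frontier Ω := by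
    have := σ.toHomeomorph.preimage_frontier Ω
    change σ ⁻¹' frontier Ω = frontier (σ ⁻¹' Ω) at this
    rw [this, hpre]
  set v : EuclideanSpace ℝ (Fin N) → ℝ := fun y => u (σ y) with hv
  set W := V ∩ σ ⁻¹' V with hW
  have hWo : IsOpen W := hV.inter (hV.preimage σ.continuous)
  have hΩW : closure Ω ⊆ W := fun y hy => ⟨hΩV hy, hΩV (by
    rw [← hcl] at hy; exact hy)⟩
  have huW : ContDiffOn ℝ 1 u W := huV.mono inter_subset_left
  have hvW : ContDiffOn ℝ 1 v W := by
    refine ContDiffOn.comp huV (σ.toContinuousLinearEquiv.contDiff.contDiffOn) ?_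
    exact fun y hy => hy.2
  have hvpos : ∀ y ∈ Ω, 0 < v y := fun y hy => hpos _ ((hmem y).2 hy)
  have hv0 : ∀ y ∈ frontier Ω, v y = 0 := fun y hy => hu0 _ (by
    rw [← hfr] at hy; exact hy)
  have hgrad : ∀ y, ‖gradient v y‖ = ‖gradient u (σ y)‖ := by
    intro y
    unfold gradient
    rw [LinearIsometryEquiv.norm_map, LinearIsometryEquiv.norm_map]
    have := σ.toContinuousLinearEquiv.comp_right_fderiv (f := u) (x := y)
    change fderiv ℝ v y = _ at this
    rw [this]
    exact ContinuousLinearMap.opNorm_comp_linearIsometryEquiv _ σ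
  have hcv : ∀ g : EuclideanSpace ℝ (Fin N) → ℝ, ∫ y in Ω, g (σ y) = ∫ y in Ω, g y := by
    intro g
    have := σ.measurePreserving.setIntegral_preimage_emb
      σ.toHomeomorph.measurableEmbedding g Ω
    rwa [hpre] at this
  have hen := energy_identity hΩ hb hV hΩV hp huV hpos hu0 hw
  have hev : ∫ y in Ω, ‖gradient v y‖ ^ p = lam1 p Ω * ∫ y in Ω, (v y) ^ p := by
    simp_rw [hgrad]
    rw [hcv (fun y => ‖gradient u y‖ ^ p), hcv (fun y => (u y) ^ p), hen]
  have hprop := proportional hΩ hb hWo hΩW hp huW hvW hpos hvpos hv0 hw hev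
  set q : EuclideanSpace ℝ (Fin N) → ℝ := fun y => v y / u y with hq
  have hqd : ∀ y ∈ Ω, HasFDerivAt q (0 : EuclideanSpace ℝ (Fin N) →L[ℝ] ℝ) y := by
    intro y hy
    have hyW := hWo.mem_nhds (hΩW (subset_closure hy))
    have h1 := ((huW.contDiffAt hyW).differentiableAt one_ne_zero).hasFDerivAt
    have h2 := ((hvW.contDiffAt hyW).differentiableAt one_ne_zero).hasFDerivAt
    have h0 := (hpos y hy).ne'
    have h3 : fderiv ℝ v y = (v y / u y) • fderiv ℝ u y := by
      have := congrArg (InnerProductSpace.toDual ℝ (EuclideanSpace ℝ (Fin N))) (hprop y hy)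
      simpa only [map_smul, toDual_gradient] using this
    have h4 := h2.mul ((hasDerivAt_inv h0).comp_hasFDerivAt y h1)
    rw [h3, smul_smul, smul_smul, ← add_smul] at h4
    have h5 : v y * -(u y ^ 2)⁻¹ + ((fun y : ℝ => y⁻¹) ∘ u) y * (v y / u y) = 0 := by
      simp only [Function.comp]
      field_simp
      ring
    rw [h5, zero_smul] at h4
    exact h4
  have hloc : ∀ y ∈ Ω, ∀ᶠ z in 𝓝 y, q z = q y := by
    intro y hy
    obtain ⟨ε, hε, hεs⟩ := Metric.isOpen_iff.1 hΩ y hy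
    filter_upwards [ball_mem_nhds y hε] with z hz
    exact isOpen_ball.is_const_of_fderiv_eq_zero (𝕜 := ℝ) (convex_ball y ε).isPreconnected
      (fun t ht => (hqd t (hεs ht)).differentiableAt.differentiableWithinAt)
      (fun t ht => (hqd t (hεs ht)).fderiv) hz (mem_ball_self hε)
  by_cases hxe : x = ‖x‖ • e1 N
  · rw [hxe, map_smul, hσ]
  obtain ⟨γ, hγc, hγΩ, hγ0, hγ1⟩ := Om_path hN hR₀ hs hx hxe
  have hqconst : q (γ 0) = q (γ 1) := by
    have hc : Continuous (fun t : Icc (0 : ℝ) 1 => γ t) := hγc.domRestrict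
    have hlc : IsLocallyConstant (fun t : Icc (0 : ℝ) 1 => q (γ t)) := by
      rw [IsLocallyConstant.iff_eventually_eq]
      intro t
      exact hc.continuousAt.eventually (hloc _ (hγΩ t t.2))
    exact hlc.apply_eq_of_preconnectedSpace (⟨0, by simp⟩ : Icc (0 : ℝ) 1) ⟨1, by simp⟩
  have h1 : q (γ 1) = 1 := by
    have hm := hγΩ 1 (by simp)
    have : σ (γ 1) = γ 1 := by rw [hγ1, map_neg, map_smul, hσ]
    simp only [hq, hv, this]
    exact div_self (hpos _ hm).ne'
  rw [h1, hγ0] at hqconst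
  exact ((div_eq_one_iff_eq (hpos x hx).ne').1 hqconst).symm

theorem stmt10 (N : ℕ) (hN : 2 ≤ N) (R₀ R₁ : ℝ) (hR₀ : 0 < R₀) (hR : R₀ < R₁)
    (p : ℝ) (hp : 1 < p) (s : ℝ) (hs : 0 < s) (hs' : s < R₁ - R₀)
    (u : EuclideanSpace ℝ (Fin N) → ℝ)
    (hu : IsFirstEigenfunction p (Om N R₀ R₁ s) (lam1 p (Om N R₀ R₁ s)) u) :
    (∀ a : EuclideanSpace ℝ (Fin N), a ≠ 0 → ⟪a, e1 N⟫ = 0 →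
      ∀ x ∈ Om N R₀ R₁ s, u x = u (x - (2 * ⟪a, x⟫ / ‖a‖ ^ 2) • a)) ∧
    (∀ i : Fin N, (i : ℕ) ≠ 0 → ∀ x ∈ Om N R₀ R₁ s,
      u x = u (x - (2 * x i) • EuclideanSpace.single i 1)) := by

  have hfirst : ∀ a : EuclideanSpace ℝ (Fin N), a ≠ 0 → ⟪a, e1 N⟫ = 0 →
      ∀ x ∈ Om N R₀ R₁ s, u x = u (x - (2 * ⟪a, x⟫ / ‖a‖ ^ 2) • a) := by
    intro a _ hae x hx
    have hform : ∀ y, (ℝ ∙ a)ᗮ.reflection y = y - (2 * ⟪a, y⟫ / ‖a‖ ^ 2) • a := by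
      intro y
      rw [Submodule.reflection_orthogonal_apply, Submodule.reflection_singleton_apply, neg_sub,
        two_smul, ← add_smul]
      congr 2
      simp only [RCLike.ofReal_real_eq_id, id]
      ring
    rw [← hform]
    refine main_refl N hN R₀ R₁ hR₀ p hp s hs u hu _ ?_ x hx
    rw [hform, hae]; simp
  refine ⟨hfirst, fun i hi x hx => ?_⟩
  have h := hfirst (EuclideanSpace.single i 1) (by simp) ?_ x hx
  · simpa [EuclideanSpace.inner_single_left] using h
  · simp [EuclideanSpace.inner_single_left, e1, hi]
end
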